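/- arXiv:2011.09401 — 4 statements merged into one kernel-verified Lean document; each statement's English description precedes it below -/
import Mathlib

section
/- Let d < 0 be a fundamental discriminant with |d| ≥ 9.8·10^18 and ω(|d|) ≤ log|d| / log log|d|. Then there exist two distinct odd primes q₁, q₂, neither dividing d, with q₁·q₂ ≡ 1 (mod 4), such that each qᵢ ≤ 1.27·log|d| and hence k := q₁·q₂ ≤ 1.62·(log|d|)². (In particular, k is the discriminant of the real quadratic field ℚ(√k).) -/
open Real

/-!
At most `ω(|d|) + 1` primes are even or divide `d`. So if `ω(|d|) + 4 ≤ π(1.27 log |d|)`, then at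
least three odd primes up to `1.27 log |d|` do not divide `d`. Two of them agree modulo `4`, and
their product is `1` modulo `4`.

With `L = log |d|` it remains to show `L / log L + 3 < π(1.27 L)` for `L ≥ 42`. The tangent to `log`
at `e ^ 4` gives `L / log L ≤ L / 5 + 3`, and for `L < 500` this is compared with the values of `π`
at multiples of `6`. For larger `L`, the bound `ψ(x) ≥ x log 2 - O(log x)` coming from central
binomial coefficients is too weak, because `1.27 log 2 < 1`. Chebyshev's quotient
`⌊x⌋! ⌊x/30⌋! / (⌊x/2⌋! ⌊x/3⌋! ⌊x/5⌋!)` and Stirling's formula give `ψ(x) ≥ 0.92 x - O(log x)`,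
which suffices since `1.27 · 0.92 > 1`.
-/

open scoped ArithmeticFunction.vonMangoldt ArithmeticFunction.zeta

theorem log_factorial_eq_sum_log (n : ℕ) :
    log (n.factorial : ℝ) = ∑ k ∈ Finset.Ioc 0 n, log (k : ℝ) := by
  induction n with
  | zero => simp
  | succ n ih =>
    rw [Nat.factorial_succ, Nat.cast_mul, log_mul (by positivity) (by positivity), ih,
      Finset.sum_Ioc_succ_top n.zero_le, add_comm]

theorem log_factorial_eq_sum_vonMangoldt {n N : ℕ} (h : n ≤ N) :
    log (n.factorial : ℝ) = ∑ k ∈ Finset.Ioc 0 N, Λ k * ((n / k : ℕ) : ℝ) := by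
  calc log (n.factorial : ℝ)
    _ = ∑ k ∈ Finset.Ioc 0 n, (Λ * (ζ : ArithmeticFunction ℝ)) k := by
      simp only [log_factorial_eq_sum_log, ArithmeticFunction.vonMangoldt_mul_zeta,
        ArithmeticFunction.log_apply]
    _ = ∑ k ∈ Finset.Ioc 0 n, Λ k * ((n / k : ℕ) : ℝ) :=
      ArithmeticFunction.sum_Ioc_mul_zeta_eq_sum Λ n
    _ = ∑ k ∈ Finset.Ioc 0 N, Λ k * ((n / k : ℕ) : ℝ) := by
      refine Finset.sum_subset (Finset.Ioc_subset_Ioc_right h) fun k hkN hkn ↦ ?_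
      have hlt : n < k := by
        simp only [Finset.mem_Ioc] at hkN hkn
        omega
      rw [Nat.div_eq_of_lt hlt, Nat.cast_zero, mul_zero]

theorem log_factorial_combination_le_psi (N : ℕ) :
    log (N.factorial : ℝ) - log ((N / 2).factorial : ℝ) - log ((N / 3).factorial : ℝ)
      - log ((N / 5).factorial : ℝ) + log ((N / 30).factorial : ℝ) ≤ Chebyshev.psi N := by
  have hle (m : ℕ) : N / m ≤ N := Nat.div_le_self N m
  rw [log_factorial_eq_sum_vonMangoldt le_rfl, log_factorial_eq_sum_vonMangoldt (hle 2),
    log_factorial_eq_sum_vonMangoldt (hle 3), log_factorial_eq_sum_vonMangoldt (hle 5),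
    log_factorial_eq_sum_vonMangoldt (hle 30), Chebyshev.psi, Nat.floor_natCast]
  simp only [← Finset.sum_sub_distrib, ← Finset.sum_add_distrib, ← mul_sub, ← mul_add]
  refine Finset.sum_le_sum fun k _ ↦
    mul_le_of_le_one_right ArithmeticFunction.vonMangoldt_nonneg ?_
  have hfloor (q : ℕ) : q + q / 30 ≤ 1 + q / 2 + q / 3 + q / 5 := by omega
  have hcast : ((N / k : ℕ) : ℝ) + (N / 30 / k : ℕ) ≤
      1 + (N / 2 / k : ℕ) + (N / 3 / k : ℕ) + (N / 5 / k : ℕ) := by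
    simp only [Nat.div_right_comm N _ k]
    exact_mod_cast hfloor (N / k)
  linarith

theorem log_factorial_le_stirling {n : ℕ} (hn : n ≠ 0) :
    log (n.factorial : ℝ) ≤ n * log n - n + log n / 2 + 1 := by
  obtain ⟨m, rfl⟩ := Nat.exists_eq_succ_of_ne_zero hn
  have hanti : log (Stirling.stirlingSeq m.succ) ≤ log (Stirling.stirlingSeq 1) :=
    Stirling.log_stirlingSeq'_antitone m.zero_le
  have hm : (m.succ : ℝ) ≠ 0 := by positivity
  simp only [Stirling.log_stirlingSeq_formula, log_div hm (exp_ne_zero 1),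
    log_mul two_ne_zero hm, log_exp, Nat.factorial_one, Nat.cast_one, log_one, mul_one, one_mul,
    log_div one_ne_zero (exp_ne_zero 1)] at hanti
  linarith

theorem le_psi_thirty_mul {M : ℕ} (hM : M ≠ 0) :
    27.6 * M - log M / 2 - 4 ≤ Chebyshev.psi ((30 * M : ℕ) : ℝ) := by
  have hpsi := log_factorial_combination_le_psi (30 * M)
  rw [show 30 * M / 2 = 15 * M by omega, show 30 * M / 3 = 10 * M by omega,
    show 30 * M / 5 = 6 * M by omega, show 30 * M / 30 = M by omega] at hpsi
  have h30 := Stirling.le_log_factorial_stirling (n := 30 * M) (by omega)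
  have h1 := Stirling.le_log_factorial_stirling hM
  have h15 := log_factorial_le_stirling (n := 15 * M) (by omega)
  have h10 := log_factorial_le_stirling (n := 10 * M) (by omega)
  have h6 := log_factorial_le_stirling (n := 6 * M) (by omega)
  push_cast at h30 h15 h10 h6
  have hlog30 : log (30 * M) = log 2 + log 3 + log 5 + log M := by
    rw [show (30 : ℝ) = 2 * 3 * 5 by norm_num, log_mul, log_mul, log_mul] <;> positivity
  have hlog15 : log (15 * M) = log 3 + log 5 + log M := by
    rw [show (15 : ℝ) = 3 * 5 by norm_num, log_mul, log_mul] <;> positivity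
  have hlog10 : log (10 * M) = log 2 + log 5 + log M := by
    rw [show (10 : ℝ) = 2 * 5 by norm_num, log_mul, log_mul] <;> positivity
  have hlog6 : log (6 * M) = log 2 + log 3 + log M := by
    rw [show (6 : ℝ) = 2 * 3 by norm_num, log_mul, log_mul] <;> positivity
  rw [hlog30] at h30
  rw [hlog15] at h15
  rw [hlog10] at h10
  rw [hlog6] at h6
  -- The coefficient of `M` on the right is `30 log 30 - 15 log 15 - 10 log 10 - 6 log 6`.
  have hmain : 27.6 * (M : ℝ) ≤ (14 * log 2 + 9 * log 3 + 5 * log 5) * M := by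
    gcongr
    linarith [log_two_gt_d9, log_three_gt_d9, log_five_gt_d9]
  have htwopi : 1 ≤ log (2 * π) :=
    (le_log_iff_exp_le (by positivity)).2 (by linarith [exp_one_lt_three, pi_gt_three])
  linarith [log_two_lt_d9, log_three_lt_d9, log_five_lt_d9]

theorem le_psi_of_one_le {x : ℝ} (hx : 1 ≤ x) :
    0.92 * x - log x / 2 - 32 ≤ Chebyshev.psi x := by
  have hlog : 0 ≤ log x := log_nonneg hx
  rcases lt_or_ge x 30 with hx30 | hx30
  · linarith [Chebyshev.psi_nonneg x]
  have hM : 1 ≤ ⌊x / 30⌋₊ := Nat.le_floor (by push_cast; linarith)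
  have hfloor_le : (⌊x / 30⌋₊ : ℝ) ≤ x / 30 := Nat.floor_le (by linarith)
  have hlt_floor : x / 30 < ⌊x / 30⌋₊ + 1 := Nat.lt_floor_add_one _
  have hpsi : Chebyshev.psi ((30 * ⌊x / 30⌋₊ : ℕ) : ℝ) ≤ Chebyshev.psi x :=
    Chebyshev.psi_mono (by push_cast; linarith)
  have hlogM : log ⌊x / 30⌋₊ ≤ log x := log_le_log (by positivity) (by linarith)
  linarith [le_psi_thirty_mul (Nat.one_le_iff_ne_zero.1 hM)]

theorem div_log_le_div_five_add_three {x : ℝ} (hx : 42 ≤ x) : x / log x ≤ x / 5 + 3 := by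
  have hexp : exp 4 ≤ 55 := by
    calc exp 4 = exp 1 ^ 4 := mod_cast (exp_one_pow 4).symm
      _ ≤ 2.7182818286 ^ 4 := pow_le_pow_left₀ (exp_nonneg 1) exp_one_lt_d9.le 4
      _ ≤ 55 := by norm_num
  have htangent : 5 - 55 / x ≤ log x := by
    have h := add_one_le_exp (4 - log x)
    rw [exp_sub, exp_log (by linarith)] at h
    have : exp 4 / x ≤ 55 / x := by gcongr
    linarith
  rw [div_le_iff₀ (log_pos (by linarith))]
  calc x ≤ (x / 5 + 3) * (5 - 55 / x) := by
        field_simp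
        linarith
    _ ≤ (x / 5 + 3) * log x := by gcongr

theorem add_seven_le_primeCounting_six_mul :
    ∀ m ∈ Finset.Icc 8 105, m + 7 ≤ Nat.primeCounting (6 * m) := by
  decide +kernel

theorem div_six_add_six_lt_primeCounting {x : ℝ} (hx : 48 ≤ x) (hx' : x < 636) :
    x / 6 + 6 < Nat.primeCounting ⌊x⌋₊ := by
  have hm : ⌊x / 6⌋₊ ∈ Finset.Icc 8 105 := by
    have hlt : ⌊x / 6⌋₊ < 106 := (Nat.floor_lt (by linarith)).2 (by push_cast; linarith)
    exact Finset.mem_Icc.2 ⟨Nat.le_floor (by push_cast; linarith), Nat.le_of_lt_succ hlt⟩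
  have hfloor : 6 * ⌊x / 6⌋₊ ≤ ⌊x⌋₊ := by
    refine Nat.le_floor ?_
    push_cast
    linarith [Nat.floor_le (show 0 ≤ x / 6 by linarith)]
  have hcount : ((⌊x / 6⌋₊ + 7 : ℕ) : ℝ) ≤ Nat.primeCounting ⌊x⌋₊ :=
    Nat.cast_le.2 ((add_seven_le_primeCounting_six_mul _ hm).trans
      (Nat.monotone_primeCounting hfloor))
  push_cast at hcount
  linarith [Nat.lt_floor_add_one (x / 6)]

theorem div_log_add_three_lt_primeCounting_of_large {L : ℝ} (hL : 500 ≤ L) :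
    L / log L + 3 < Nat.primeCounting ⌊1.27 * L⌋₊ := by
  have hlogL : 0 < log L := log_pos (by linarith)
  have hlogX : log (1.27 * L) ≤ log L + 0.27 := by
    rw [log_mul (by norm_num) (by linarith)]
    linarith [log_le_sub_one_of_pos (show (0 : ℝ) < 1.27 by norm_num)]
  have htangent : log L ≤ 5 + L / 400 := by
    have hexp : 400 ≤ exp 6 := by
      calc (400 : ℝ) ≤ 2.7182818283 ^ 6 := by norm_num
        _ ≤ exp 1 ^ 6 := pow_le_pow_left₀ (by norm_num) exp_one_gt_d9.le 6
        _ = exp 6 := mod_cast exp_one_pow 6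
    have h := add_one_le_exp (log L - 6)
    rw [exp_sub, exp_log (by linarith)] at h
    have : L / exp 6 ≤ L / 400 := by gcongr
    linarith
  have hpsi : 0.92 * (1.27 * L) - log (1.27 * L) / 2 - 32 ≤
      Nat.primeCounting ⌊1.27 * L⌋₊ * log (1.27 * L) :=
    (le_psi_of_one_le (by linarith)).trans (Chebyshev.psi_le_primeCounting_mul_log' _)
  by_contra! hcount
  have hupper : Nat.primeCounting ⌊1.27 * L⌋₊ * log (1.27 * L) ≤
      L + 0.27 * (L / log L) + 3 * log L + 0.81 :=
    calc Nat.primeCounting ⌊1.27 * L⌋₊ * log (1.27 * L)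
      _ ≤ (L / log L + 3) * (log L + 0.27) :=
        mul_le_mul hcount hlogX (log_nonneg (by linarith)) (by positivity)
      _ = L + 0.27 * (L / log L) + 3 * log L + 0.81 := by
        field_simp
        ring
  linarith [div_log_le_div_five_add_three (show 42 ≤ L by linarith)]

theorem div_log_add_three_lt_primeCounting {L : ℝ} (hL : 42 ≤ L) :
    L / log L + 3 < Nat.primeCounting ⌊1.27 * L⌋₊ := by
  rcases lt_or_ge L 500 with hlt | hge
  · linarith [div_log_le_div_five_add_three hL,
      div_six_add_six_lt_primeCounting (x := 1.27 * L) (by linarith) (by linarith)]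
  · exact div_log_add_three_lt_primeCounting_of_large hge

theorem exists_ne_mul_mod_four_eq_one {S : Finset ℕ} (hodd : ∀ q ∈ S, Odd q)
    (hcard : 2 < S.card) : ∃ q₁ ∈ S, ∃ q₂ ∈ S, q₁ ≠ q₂ ∧ (q₁ * q₂) % 4 = 1 := by
  have hmod {q : ℕ} (hq : q ∈ S) : q % 4 = 1 ∨ q % 4 = 3 :=
    Nat.odd_mod_four_iff.1 (Nat.odd_iff.1 (hodd q hq))
  obtain ⟨q₁, h₁, q₂, h₂, hne, heq⟩ :=
    Finset.exists_ne_map_eq_of_card_lt_of_maps_to (t := {1, 3}) (f := (· % 4))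
      ((Finset.card_pair (by norm_num)).trans_lt hcard) fun q hq ↦ by simpa using hmod hq
  refine ⟨q₁, h₁, q₂, h₂, hne, ?_⟩
  rcases hmod h₁ with h | h <;> rw [Nat.mul_mod, ← heq, h]

theorem primeCounting_le_card_odd_primes_not_dvd_add {D : ℕ} (hD : D ≠ 0) (N : ℕ) :
    Nat.primeCounting N ≤
      {q ∈ Nat.primesLE N | Odd q ∧ ¬ q ∣ D}.card + (D.primeFactors.card + 1) := by
  have hsub : Nat.primesLE N \ insert 2 D.primeFactors ⊆
      {q ∈ Nat.primesLE N | Odd q ∧ ¬ q ∣ D} := by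
    intro q hq
    simp only [Finset.mem_sdiff, Finset.mem_insert, not_or, Nat.mem_primeFactors] at hq
    obtain ⟨hqN, hq2, hqD⟩ := hq
    have hprime : q.Prime := (Nat.mem_primesLE.1 hqN).2
    exact Finset.mem_filter.2 ⟨hqN, hprime.odd_of_ne_two hq2, fun h ↦ hqD ⟨hprime, h, hD⟩⟩
  have hsdiff := Finset.le_card_sdiff (insert 2 D.primeFactors) (Nat.primesLE N)
  have hinsert := Finset.card_insert_le 2 D.primeFactors
  have hle := Finset.card_le_card hsub
  rw [Nat.primesLE_card_eq_primeCounting] at hsdiff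
  omega

theorem exists_odd_primes_mul_mod_four_eq_one {D N : ℕ} (hD : D ≠ 0)
    (hcard : D.primeFactors.card + 4 ≤ Nat.primeCounting N) :
    ∃ q₁ q₂ : ℕ, q₁.Prime ∧ q₂.Prime ∧ Odd q₁ ∧ Odd q₂ ∧ q₁ ≠ q₂ ∧
      ¬ q₁ ∣ D ∧ ¬ q₂ ∣ D ∧ (q₁ * q₂) % 4 = 1 ∧ q₁ ≤ N ∧ q₂ ≤ N := by
  have hthree : 2 < {q ∈ Nat.primesLE N | Odd q ∧ ¬ q ∣ D}.card := by
    linarith [primeCounting_le_card_odd_primes_not_dvd_add hD N]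
  obtain ⟨q₁, h₁, q₂, h₂, hne, hmod⟩ :=
    exists_ne_mul_mod_four_eq_one (fun q hq ↦ (Finset.mem_filter.1 hq).2.1) hthree
  simp only [Finset.mem_filter, Nat.mem_primesLE] at h₁ h₂
  obtain ⟨⟨hN₁, hp₁⟩, ho₁, hd₁⟩ := h₁
  obtain ⟨⟨hN₂, hp₂⟩, ho₂, hd₂⟩ := h₂
  exact ⟨q₁, q₂, hp₁, hp₂, ho₁, ho₂, hne, hd₁, hd₂, hmod, hN₁, hN₂⟩

theorem exp_forty_two_le : exp 42 ≤ 1.8e18 :=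
  calc exp 42 = exp 1 ^ 42 := mod_cast (exp_one_pow 42).symm
    _ ≤ 2.7182818286 ^ 42 := pow_le_pow_left₀ (exp_nonneg 1) exp_one_lt_d9.le 42
    _ ≤ 1.8e18 := by norm_num

theorem exists_auxiliary_primes_general (d : ℤ) (hsize : 9.8e18 ≤ |(d : ℝ)|)
    (homega : (d.natAbs.primeFactors.card : ℝ) ≤ log |(d : ℝ)| / log (log |(d : ℝ)|)) :
    ∃ q₁ q₂ : ℕ, q₁.Prime ∧ q₂.Prime ∧ Odd q₁ ∧ Odd q₂ ∧ q₁ ≠ q₂ ∧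
      ¬ ((q₁ : ℤ) ∣ d) ∧ ¬ ((q₂ : ℤ) ∣ d) ∧ (q₁ * q₂) % 4 = 1 ∧
      (q₁ : ℝ) ≤ 1.27 * log |(d : ℝ)| ∧ (q₂ : ℝ) ≤ 1.27 * log |(d : ℝ)| ∧
      ((q₁ * q₂ : ℕ) : ℝ) ≤ 1.62 * log |(d : ℝ)| ^ 2 := by
  set L : ℝ := log |(d : ℝ)|
  have hL : 42 ≤ L := by
    rw [le_log_iff_exp_le (by linarith)]
    linarith [exp_forty_two_le]
  have hd : d ≠ 0 := by
    rintro rfl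
    norm_num at hsize
  have hcard : d.natAbs.primeFactors.card + 4 ≤ Nat.primeCounting ⌊1.27 * L⌋₊ := by
    have h : (d.natAbs.primeFactors.card : ℝ) + 3 < Nat.primeCounting ⌊1.27 * L⌋₊ := by
      linarith [div_log_add_three_lt_primeCounting hL]
    exact_mod_cast h
  obtain ⟨q₁, q₂, hp₁, hp₂, ho₁, ho₂, hne, hd₁, hd₂, hmod, hN₁, hN₂⟩ :=
    exists_odd_primes_mul_mod_four_eq_one (Int.natAbs_ne_zero.2 hd) hcard
  have hle {q : ℕ} (hq : q ≤ ⌊1.27 * L⌋₊) : (q : ℝ) ≤ 1.27 * L :=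
    (Nat.le_floor_iff (by linarith)).1 hq
  refine ⟨q₁, q₂, hp₁, hp₂, ho₁, ho₂, hne, mt Int.natCast_dvd.1 hd₁, mt Int.natCast_dvd.1 hd₂,
    hmod, hle hN₁, hle hN₂, ?_⟩
  calc ((q₁ * q₂ : ℕ) : ℝ) = q₁ * q₂ := Nat.cast_mul q₁ q₂
    _ ≤ (1.27 * L) * (1.27 * L) := mul_le_mul (hle hN₁) (hle hN₂) q₂.cast_nonneg (by linarith)
    _ ≤ 1.62 * L ^ 2 := by linarith [sq_nonneg L]

/-- **Lemma (auxiliary primes).** Let `d < 0` be a fundamental discriminant with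
`|d| ≥ 9.8·10^18` and `ω(|d|) ≤ log |d| / log log |d|`. Then there exist two distinct
odd primes `q₁, q₂`, neither dividing `d`, with `q₁·q₂ ≡ 1 (mod 4)`, such that
`qᵢ ≤ 1.27·log |d|` and `k = q₁·q₂ ≤ 1.62·(log |d|)²`. -/
theorem exists_auxiliary_primes
    (d : ℤ) (hd : d < 0)
    (K : Type*) [Field K] [NumberField K]
    (hdeg : Module.finrank ℚ K = 2)
    (hdisc : NumberField.discr K = d)
    (hsize : (|d| : ℝ) ≥ 9.8e18)
    (homega : (d.natAbs.primeFactors.card : ℝ) ≤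
      Real.log |(d : ℝ)| / Real.log (Real.log |(d : ℝ)|)) :
    ∃ q₁ q₂ : ℕ, q₁.Prime ∧ q₂.Prime ∧ Odd q₁ ∧ Odd q₂ ∧ q₁ ≠ q₂ ∧
      ¬ ((q₁ : ℤ) ∣ d) ∧ ¬ ((q₂ : ℤ) ∣ d) ∧ (q₁ * q₂) % 4 = 1 ∧
      (q₁ : ℝ) ≤ 1.27 * Real.log |(d : ℝ)| ∧
      (q₂ : ℝ) ≤ 1.27 * Real.log |(d : ℝ)| ∧
      ((q₁ * q₂ : ℕ) : ℝ) ≤ 1.62 * (Real.log |(d : ℝ)|) ^ 2 :=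
  exists_auxiliary_primes_general d hsize homega
end

section
/- Let d < 0 be an integer with |d| ≥ 9.8·10^18, and let q₁, q₂ be distinct odd primes with k = q₁·q₂ ≡ 1 (mod 4) and k ≤ 1.62·(log|d|)². Then the class number of the real quadratic field ℚ(√k) is at most 0.64·log|d|. -/
/-!
Let `D` be the discriminant, `R` the regulator, `h` the class number, `χ` the Jacobi symbol modulo
`D` and `ρ` the residue of the Dedekind zeta function at `1`, so that `2 h R = √D ρ`. It is enough
to have `ρ ≤ R`, since then `h ≤ √D / 2`; this holds once `√D ≥ 11`, and smaller `D` are harmless.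

The number of ideals of norm `n` is at most `∑ d ∣ n, χ d`, hence `ρ ≤ L(1, χ)`. As a matrix,
`(χ (i - j))` has operator norm `√D`, which bounds the double partial sums of `χ` by `√D n / 2`
(Hua). Since `n⁻ˢ` is decreasing and convex, double Abel summation bounds `L(1, χ)` by the
corresponding sum for any sequence with larger double partial sums; taking `1` up to about `√D`
gives `L(1, χ) ≤ log (√D + 1) + 1 / 4`.

If `a + b ω` is a fundamental unit, then `R ≥ log (|b| √D - 1)`. When `D ≡ 1 (mod 8)`, looking
modulo `2` shows that `b` is even, so `R ≥ log (2 √D - 1)`. When `D ≡ 5 (mod 8)`, `χ 2 = -1`, which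
halves the trivial bound for the partial sums of `χ`, and with it the main term of the bound
for `L(1, χ)`.
-/

open Real

theorem sum_divisors_mul_of_coprime {A : Type*} [CommSemiring A] (f : ℕ →*₀ A) {m n : ℕ}
    (hmn : m.Coprime n) :
    ∑ d ∈ (m * n).divisors, f d = (∑ d ∈ m.divisors, f d) * ∑ d ∈ n.divisors, f d := by
  let F : ArithmeticFunction A := ⟨f, map_zero f⟩
  have hF : F.IsMultiplicative := ⟨map_one f, fun _ ↦ map_mul f _ _⟩
  have h := (ArithmeticFunction.isMultiplicative_zeta.natCast.mul hF).map_mul_of_coprime hmn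
  simp only [ArithmeticFunction.coe_zeta_mul_apply] at h
  exact h

section IdealCount

open Ideal

variable (R : Type*) [CommRing R] [IsDedekindDomain R] [Module.Free ℤ R]

/-- The number of ideals of norm `n`, that is, the `n`-th coefficient of the Dedekind zeta function
when `R` is a ring of integers and `n ≠ 0`. -/
noncomputable def idealCount (n : ℕ) : ℕ := Nat.card {I : Ideal R // absNorm I = n}

variable {R}

theorem idealCount_one : idealCount R 1 = 1 := by
  simp [idealCount, absNorm_eq_one_iff]

theorem eq_of_le_of_absNorm_eq {I J : Ideal R} (hle : J ≤ I) (h : absNorm J = absNorm I)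
    (h0 : absNorm I ≠ 0) : J = I := by
  obtain ⟨C, rfl⟩ := dvd_iff_le.mpr hle
  rw [map_mul, Nat.mul_eq_left h0, absNorm_eq_one_iff] at h
  rw [h, mul_top]

theorem natCast_mem_of_absNorm_eq {I : Ideal R} {n : ℕ} (hI : absNorm I = n) : (n : R) ∈ I :=
  hI ▸ absNorm_mem I

theorem sup_span_mul_sup_span_of_coprime {I : Ideal R} {a b : ℕ} (hab : a.Coprime b)
    (hI : absNorm I = a * b) : (I ⊔ span {(a : R)}) * (I ⊔ span {(b : R)}) = I := by
  have hcop : IsCoprime (a : R) (b : R) := by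
    simpa using (Nat.isCoprime_iff_coprime.mpr hab).map (Int.castRingHom R)
  have hcop' : IsCoprime (I ⊔ span {(a : R)}) (I ⊔ span {(b : R)}) := by
    have := (isCoprime_span_singleton_iff _ _).mpr hcop
    rw [isCoprime_iff_sup_eq, eq_top_iff] at this ⊢
    exact this.trans (sup_le_sup le_sup_right le_sup_right)
  apply le_antisymm
  · rw [Ideal.sup_mul, Ideal.mul_sup, Ideal.mul_sup, span_singleton_mul_span_singleton]
    refine sup_le (sup_le mul_le_right mul_le_left) (sup_le mul_le_right ?_)
    rw [span_singleton_le_iff_mem]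
    exact_mod_cast natCast_mem_of_absNorm_eq hI
  · rw [mul_eq_inf_of_isCoprime hcop']
    exact le_inf le_sup_left le_sup_left

theorem exists_ringHom_zmod_ker_eq {P : Ideal R} {p : ℕ} (hp : p.Prime) (hP : absNorm P = p) :
    ∃ f : R →+* ZMod p, RingHom.ker f = P := by
  have hcard : Nat.card (R ⧸ P) = p := hP
  have : Finite (R ⧸ P) := Nat.finite_of_card_ne_zero (hcard ▸ hp.ne_zero)
  have := Fintype.ofFinite (R ⧸ P)
  let e := ZMod.ringEquivOfPrime (R ⧸ P) hp (by rw [← hcard, Nat.card_eq_fintype_card])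
  refine ⟨(e.symm : R ⧸ P →+* ZMod p).comp (Ideal.Quotient.mk P), ?_⟩
  rw [RingHom.ker_comp_of_injective _ e.symm.injective, mk_ker]

variable [Module.Finite ℤ R]

theorem absNorm_sup_span_dvd {I : Ideal R} {a b : ℕ} (hab : a.Coprime b)
    (hI : absNorm I = a * b) : absNorm (I ⊔ span {(a : R)}) ∣ a := by
  have hpow : absNorm (I ⊔ span {(a : R)}) ∣ a ^ Module.finrank ℤ R :=
    absNorm_span_natCast (S := R) a ▸ absNorm_dvd_absNorm_of_le le_sup_right
  exact (hab.pow_left _ |>.coprime_dvd_left hpow).dvd_of_dvd_mul_right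
    (hI ▸ absNorm_dvd_absNorm_of_le le_sup_left)

theorem absNorm_sup_span {I : Ideal R} {a b : ℕ} (hab : a.Coprime b) (hb : b ≠ 0)
    (hI : absNorm I = a * b) : absNorm (I ⊔ span {(a : R)}) = a := by
  have hdvd := absNorm_sup_span_dvd hab.symm (hI.trans (mul_comm a b))
  have hmul := hI
  rw [← sup_span_mul_sup_span_of_coprime hab hI, map_mul] at hmul
  refine Nat.dvd_antisymm (absNorm_sup_span_dvd hab hI) ?_
  exact Nat.dvd_of_mul_dvd_mul_right (Nat.pos_of_ne_zero hb)
    (hmul ▸ Nat.mul_dvd_mul_left _ hdvd)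

instance [CharZero R] (n : ℕ) : Finite {I : Ideal R // absNorm I = n} :=
  (finite_setOfPred_absNorm_eq n).to_subtype

theorem idealCount_mul_le [CharZero R] {a b : ℕ} (hab : a.Coprime b) (ha : a ≠ 0) (hb : b ≠ 0) :
    idealCount R (a * b) ≤ idealCount R a * idealCount R b := by
  rw [idealCount, idealCount, idealCount, ← Nat.card_prod]
  let f (I : {I : Ideal R // absNorm I = a * b}) :
      {I : Ideal R // absNorm I = a} × {I : Ideal R // absNorm I = b} :=
    (⟨_, absNorm_sup_span hab hb I.2⟩,
      ⟨_, absNorm_sup_span hab.symm ha (I.2.trans (mul_comm a b))⟩)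
  refine Nat.card_le_card_of_injective f fun I J hIJ ↦ Subtype.ext ?_
  simp only [f, Prod.mk.injEq, Subtype.mk.injEq] at hIJ
  rw [← sup_span_mul_sup_span_of_coprime hab I.2, ← sup_span_mul_sup_span_of_coprime hab J.2,
    hIJ.1, hIJ.2]

variable {p : ℕ} (hrank : Module.finrank ℤ R = 2) (hp : p.Prime)

include hrank hp

theorem absNorm_eq_or_eq_span_of_isMaximal {M : Ideal R} (hM : M.IsMaximal) (hpM : (p : R) ∈ M) :
    absNorm M = p ∨ M = span {(p : R)} := by
  have hspan : span {(p : R)} ≤ M := (span_singleton_le_iff_mem _).mpr hpM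
  have hnorm : absNorm (span {(p : R)}) = p ^ 2 := by rw [absNorm_span_natCast, hrank]
  obtain ⟨i, hi, hMi⟩ :=
    (Nat.dvd_prime_pow hp).mp (hnorm ▸ absNorm_dvd_absNorm_of_le hspan)
  interval_cases i
  · exact absurd (absNorm_eq_one_iff.mp (by simpa using hMi)) hM.ne_top
  · exact .inl (by simpa using hMi)
  · exact .inr (eq_of_le_of_absNorm_eq hspan (hnorm.trans hMi.symm)
      (hMi ▸ pow_ne_zero 2 hp.ne_zero)).symm

theorem exists_mul_eq_of_absNorm_eq_pow_succ {e : ℕ} {I : Ideal R}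
    (hI : absNorm I = p ^ (e + 1)) :
    ∃ M J : Ideal R, M * J = I ∧ M.IsMaximal ∧ (absNorm M = p ∨ M = span {(p : R)}) := by
  have hne : I ≠ ⊤ := by
    rw [ne_eq, ← absNorm_eq_one_iff, hI]
    exact (Nat.one_lt_pow e.succ_ne_zero hp.one_lt).ne'
  obtain ⟨M, hM, hle⟩ := exists_le_maximal I hne
  obtain ⟨J, hJ⟩ := dvd_iff_le.mpr hle
  refine ⟨M, J, hJ.symm, hM, absNorm_eq_or_eq_span_of_isMaximal hrank hp hM ?_⟩
  exact hM.isPrime.mem_of_pow_mem (e + 1) (by exact_mod_cast hle (natCast_mem_of_absNorm_eq hI))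

theorem idealCount_prime_pow_le_of_inert [CharZero R] (hno : ∀ P : Ideal R, absNorm P ≠ p)
    (e : ℕ) : (idealCount R (p ^ e) : ℤ) ≤ ∑ j ∈ Finset.range (e + 1), (-1) ^ j := by
  induction e using Nat.twoStepInduction with
  | zero => simp [idealCount_one]
  | one =>
    have : IsEmpty {I : Ideal R // absNorm I = p} := ⟨fun I ↦ hno I.1 I.2⟩
    simp [idealCount, Finset.sum_range_succ]
  | more e ih _ =>
    have hnorm : absNorm (span {(p : R)}) = p ^ 2 := by rw [absNorm_span_natCast, hrank]
    let f (J : {I : Ideal R // absNorm I = p ^ e}) : {I : Ideal R // absNorm I = p ^ (e + 2)} :=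
      ⟨span {(p : R)} * J.1, by rw [map_mul, hnorm, J.2]; ring⟩
    have hf : Function.Surjective f := by
      rintro ⟨I, hI⟩
      obtain ⟨M, J, rfl, -, hM⟩ := exists_mul_eq_of_absNorm_eq_pow_succ hrank hp hI
      obtain rfl := hM.resolve_left (hno M)
      rw [map_mul, hnorm] at hI
      exact ⟨⟨J, Nat.eq_of_mul_eq_mul_left (pow_pos hp.pos 2) (hI.trans (by ring))⟩, rfl⟩
    rw [Finset.sum_range_succ, Finset.sum_range_succ, pow_succ (-1 : ℤ) (e + 1),
      mul_neg_one, add_neg_cancel_right]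
    exact (Int.ofNat_le.mpr (Nat.card_le_card_of_surjective f hf)).trans ih

theorem absNorm_ne_of_isMaximal_span (hM : (span {(p : R)}).IsMaximal) (P : Ideal R) :
    absNorm P ≠ p := fun hP ↦ by
  have hle := (span_singleton_le_iff_mem _).mpr (natCast_mem_of_absNorm_eq hP)
  have htop : P ≠ ⊤ := fun h ↦ hp.one_lt.ne' (by rw [← hP, h, absNorm_top])
  rw [← hM.eq_of_le htop hle, absNorm_span_natCast, hrank] at hP
  exact hp.one_lt.ne' (by simpa [sq, hp.ne_zero] using hP)

theorem exists_sym_prod_eq {P : Ideal R} (hP : absNorm P = p) (e : ℕ) {I : Ideal R}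
    (hI : absNorm I = p ^ e) :
    ∃ s : Sym {Q : Ideal R // absNorm Q = p} e, (s.toMultiset.map Subtype.val).prod = I := by
  induction e generalizing I with
  | zero =>
    rw [pow_zero, absNorm_eq_one_iff] at hI
    exact ⟨.nil, by simp [hI]⟩
  | succ e ih =>
    obtain ⟨M, J, rfl, hM, hMp⟩ := exists_mul_eq_of_absNorm_eq_pow_succ hrank hp hI
    replace hMp : absNorm M = p := hMp.resolve_right fun h ↦
      absNorm_ne_of_isMaximal_span hrank hp (h ▸ hM) P hP
    rw [map_mul, hMp, pow_succ'] at hI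
    obtain ⟨s, rfl⟩ := ih (Nat.eq_of_mul_eq_mul_left hp.pos hI)
    exact ⟨⟨M, hMp⟩ ::ₛ s, by simp [Sym.coe_cons]⟩

theorem idealCount_prime_pow_le_multichoose [CharZero R] {P : Ideal R} (hP : absNorm P = p)
    (e : ℕ) : idealCount R (p ^ e) ≤ (idealCount R p).multichoose e := by
  classical
  have := Fintype.ofFinite {Q : Ideal R // absNorm Q = p}
  rw [idealCount, idealCount, Nat.card_eq_fintype_card (α := {Q : Ideal R // absNorm Q = p}),
    ← Sym.card_sym_eq_multichoose, ← Nat.card_eq_fintype_card]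
  choose f hf using fun I : {I : Ideal R // absNorm I = p ^ e} ↦
    exists_sym_prod_eq hrank hp hP e I.2
  exact Nat.card_le_card_of_injective f fun I J hIJ ↦
    Subtype.ext (by rw [← hf I, ← hf J, hIJ])

theorem idealCount_prime_pow_le_geom_sum [CharZero R] {x : ℤ} (hx : x = 0 ∨ x = 1 ∨ x = -1)
    (hcard : (idealCount R p : ℤ) ≤ 1 + x) (e : ℕ) :
    (idealCount R (p ^ e) : ℤ) ≤ ∑ j ∈ Finset.range (e + 1), x ^ j := by
  by_cases hex : ∃ P : Ideal R, absNorm P = p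
  · obtain ⟨P, hP⟩ := hex
    have hpos : 0 < idealCount R p := Nat.card_pos_iff.mpr ⟨⟨P, hP⟩, inferInstance⟩
    have hle := idealCount_prime_pow_le_multichoose hrank hp hP e
    rcases hx with rfl | rfl | rfl
    · have : idealCount R p = 1 := by omega
      simpa [this, zero_pow_eq] using hle
    · have hle' : idealCount R (p ^ e) ≤ e + 1 := by
        obtain h | h : idealCount R p = 1 ∨ idealCount R p = 2 := by omega
        · exact hle.trans (by simp [h])
        · exact hle.trans (by simp [h])
      simpa using Int.ofNat_le.mpr hle'
    · omega
  · have hle := idealCount_prime_pow_le_of_inert hrank hp (not_exists.mp hex) e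
    rcases hx with rfl | rfl | rfl
    · refine hle.trans ?_
      rw [neg_one_geom_sum]
      split_ifs <;> simp [zero_pow_eq]
    · exact hle.trans (Finset.sum_le_sum fun j _ ↦ by
        rcases neg_one_pow_eq_or ℤ j with h | h <;> simp [h])
    · exact hle

omit hp

theorem idealCount_le_sum_divisors [CharZero R] (χ : ℕ →*₀ ℤ)
    (hχ : ∀ p : ℕ, p.Prime → χ p = 0 ∨ χ p = 1 ∨ χ p = -1)
    (hcard : ∀ p : ℕ, p.Prime → (idealCount R p : ℤ) ≤ 1 + χ p) {n : ℕ} (hn : n ≠ 0) :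
    (idealCount R n : ℤ) ≤ ∑ d ∈ n.divisors, χ d := by
  induction n using Nat.recOnPosPrimePosCoprime with
  | zero => exact absurd rfl hn
  | one => simp [idealCount_one]
  | prime_pow p e hp _ =>
    simpa [Nat.sum_divisors_prime_pow hp] using
      idealCount_prime_pow_le_geom_sum hrank hp (hχ p hp) (hcard p hp) e
  | coprime a b ha hb hab iha ihb =>
    have ha0 : a ≠ 0 := by omega
    have hb0 : b ≠ 0 := by omega
    calc (idealCount R (a * b) : ℤ) ≤ idealCount R a * idealCount R b :=
          mod_cast idealCount_mul_le hab ha0 hb0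
      _ ≤ (∑ d ∈ a.divisors, χ d) * ∑ d ∈ b.divisors, χ d :=
          mul_le_mul (iha ha0) (ihb hb0) (by positivity)
            ((Int.natCast_nonneg _).trans (iha ha0))
      _ = ∑ d ∈ (a * b).divisors, χ d :=
          (sum_divisors_mul_of_coprime χ hab).symm

end IdealCount

section QuadraticGenerator

/-- A `ℤ`-basis `1, ω` of a quadratic ring. -/
structure QuadraticGenerator (R : Type*) [CommRing R] where
  basis : Module.Basis (Fin 2) ℤ R
  basis_zero : basis 0 = 1

namespace QuadraticGenerator

section

variable {R : Type*} [CommRing R] (g : QuadraticGenerator R)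

/-- The second basis element `ω`, a root of `X² - trace X + norm`. -/
noncomputable def ω : R := g.basis 1

/-- The trace of `ω`, read off from `ω² = trace ω - norm`. -/
noncomputable def trace : ℤ := g.basis.repr (g.ω ^ 2) 1

/-- The norm of `ω`, read off from `ω² = trace ω - norm`. -/
noncomputable def norm : ℤ := -g.basis.repr (g.ω ^ 2) 0

/-- The discriminant of the minimal equation of `ω`. -/
noncomputable def disc : ℤ := g.trace ^ 2 - 4 * g.norm

theorem basis_one : g.basis 1 = g.ω := rfl

theorem eq_add_mul (x : R) : x = g.basis.repr x 0 + g.basis.repr x 1 * g.ω := by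
  conv_lhs => rw [← g.basis.sum_repr x]
  simp [Fin.sum_univ_two, g.basis_zero, ω]

theorem sq_ω : g.ω ^ 2 = g.trace * g.ω - g.norm := by
  conv_lhs => rw [g.eq_add_mul (g.ω ^ 2)]
  simp only [trace, norm, Int.cast_neg]
  ring

theorem sq_two_mul_ω_sub : (2 * g.ω - g.trace) ^ 2 = g.disc := by
  rw [disc]
  push_cast
  linear_combination 4 * g.sq_ω

include g in
theorem algebraTrace_intCast (n : ℤ) : Algebra.trace ℤ R n = 2 * n := by
  simpa using Algebra.trace_algebraMap_of_basis g.basis n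

theorem algebraTrace_ω : Algebra.trace ℤ R g.ω = g.trace := by
  rw [Algebra.trace_eq_matrix_trace g.basis, Matrix.trace_fin_two,
    Algebra.leftMulMatrix_eq_repr_mul, Algebra.leftMulMatrix_eq_repr_mul, g.basis_zero, mul_one,
    ω, g.basis.repr_self, ← sq]
  simp [trace, ω]

theorem algebraTrace_ω_mul_ω :
    Algebra.trace ℤ R (g.ω * g.ω) = g.trace * g.trace - 2 * g.norm := by
  rw [← sq, sq_ω, map_sub, ← zsmul_eq_mul, map_zsmul, algebraTrace_ω, g.algebraTrace_intCast,
    smul_eq_mul]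

theorem algebraDiscr_basis : Algebra.discr ℤ g.basis = g.disc := by
  have hone : Algebra.trace ℤ R 1 = 2 := by simpa using g.algebraTrace_intCast 1
  rw [Algebra.discr_def, Matrix.det_fin_two]
  simp only [Algebra.traceMatrix_apply, Algebra.traceForm_apply, g.basis_zero, one_mul, mul_one,
    basis_one, algebraTrace_ω_mul_ω, algebraTrace_ω, hone, disc]
  ring

theorem ringHom_ext {S : Type*} [Ring S] {f f' : R →+* S} (h : f g.ω = f' g.ω) : f = f' := by
  ext x
  rw [g.eq_add_mul x]
  simp [h]

theorem sq_map_two_mul_ω_sub {S : Type*} [CommRing S] (f : R →+* S) :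
    (2 * f g.ω - g.trace) ^ 2 = g.disc := by
  simpa [map_ofNat f 2] using congrArg f g.sq_two_mul_ω_sub

theorem not_natCast_dvd_two_mul_ω_sub {p : ℕ} (hp : Odd p) (hp1 : p ≠ 1) :
    ¬ (p : R) ∣ 2 * g.ω - g.trace := by
  rintro ⟨x, hx⟩
  have hx' : (2 : ℤ) • g.basis 1 - g.trace • g.basis 0 = (p : ℤ) • x := by
    simpa [g.basis_zero, basis_one] using hx
  have h := congrArg (g.basis.coord 1) hx'
  simp only [map_sub, map_zsmul, Module.Basis.coord_apply, g.basis.repr_self] at h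
  have h2 : p ∣ 2 := Int.natCast_dvd_natCast.mp ⟨g.basis.repr x 1, by simpa using h⟩
  rcases (Nat.dvd_prime Nat.prime_two).mp h2 with h | h
  · exact hp1 h
  · exact absurd hp (h ▸ by decide)

theorem squarefree_disc [IsDomain R] [IsIntegrallyClosed R] {k : ℕ} (hk : g.disc = k)
    (hodd : Odd k) : Squarefree k := by
  rw [Nat.squarefree_iff_prime_squarefree]
  rintro p hp hpk
  have hdvd : (p : R) ^ 2 ∣ (2 * g.ω - g.trace) ^ 2 := by
    obtain ⟨c, rfl⟩ := hpk
    exact ⟨c, by rw [g.sq_two_mul_ω_sub, hk]; push_cast; ring⟩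
  exact g.not_natCast_dvd_two_mul_ω_sub (hodd.of_dvd_nat ((Dvd.intro_left p rfl).trans hpk))
    hp.ne_one ((IsIntegrallyClosed.pow_dvd_pow_iff two_ne_zero).mp hdvd)

theorem odd_trace (hodd : Odd g.disc) : Odd g.trace := by
  rw [disc, Int.odd_sub] at hodd
  exact Int.odd_pow' two_ne_zero |>.mp (hodd.mpr ⟨2 * g.norm, by ring⟩)

theorem disc_emod_eight (hodd : Odd g.disc) :
    g.disc % 8 = if Even g.norm then 1 else 5 := by
  obtain ⟨c, hc⟩ := Int.eight_dvd_sq_sub_one_of_odd (g.odd_trace hodd)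
  rw [disc]
  split_ifs with h
  · obtain ⟨m, hm⟩ := h
    omega
  · obtain ⟨m, hm⟩ := Int.not_even_iff_odd.mp h
    omega

theorem disc_emod_four (hodd : Odd g.disc) : g.disc % 4 = 1 := by
  have h := g.disc_emod_eight hodd
  split_ifs at h <;> omega

end

theorem nonempty_of_finrank_eq_two (R : Type*) [CommRing R] [Module.Free ℤ R] [Module.Finite ℤ R]
    (hrank : Module.finrank ℤ R = 2) : Nonempty (QuadraticGenerator R) := by
  let b : Module.Basis (Fin 2) ℤ R := Module.finBasisOfFinrankEq ℤ R hrank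
  let u := b.repr 1 0
  let v := b.repr 1 1
  have hone : (1 : R) = u • b 0 + v • b 1 := by
    rw [← Fin.sum_univ_two fun i ↦ b.repr 1 i • b i, b.sum_repr]
  have hcop : u * b.repr (b 0 * b 0) 0 + v * b.repr (b 1 * b 0) 0 = 1 := by
    have h := congrArg (b.coord 0) (congrArg (· * b 0) hone)
    simp only [add_mul, one_mul, smul_mul_assoc, map_add, map_zsmul, Module.Basis.coord_apply,
      b.repr_self, Finsupp.single_eq_same, smul_eq_mul] at h
    exact h.symm
  have hdet : b.det ![1, b.repr (b 0 * b 0) 0 • b 1 - b.repr (b 1 * b 0) 0 • b 0] = 1 := by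
    rw [b.det_apply, Matrix.det_fin_two, ← hcop]
    simp only [Module.Basis.toMatrix_apply, Matrix.cons_val_zero, Matrix.cons_val_one, map_sub,
      map_zsmul, b.repr_self, Finsupp.sub_apply, Finsupp.smul_apply, smul_eq_mul]
    simp [u, v, mul_comm]
  obtain ⟨hli, hsp⟩ := b.is_basis_iff_det.mpr (hdet ▸ isUnit_one)
  exact ⟨⟨.mk hli hsp.ge, by simp⟩⟩

section IdealCount

open Ideal

variable {R : Type*} [CommRing R] [IsDedekindDomain R] [Module.Free ℤ R]
  (g : QuadraticGenerator R) {p : ℕ}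

theorem idealCount_prime_le_card_roots (hp : p.Prime) :
    idealCount R p ≤ Nat.card {r : ZMod p // r ^ 2 = g.trace * r - g.norm} := by
  have : Fact p.Prime := ⟨hp⟩
  choose f hf using fun P : {P : Ideal R // absNorm P = p} ↦ exists_ringHom_zmod_ker_eq hp P.2
  have hroot (P) : f P g.ω ^ 2 = g.trace * f P g.ω - g.norm := by
    rw [← map_pow, g.sq_ω]
    simp
  refine Nat.card_le_card_of_injective (fun P ↦ ⟨f P g.ω, hroot P⟩) fun P Q h ↦ ?_
  rw [Subtype.ext_iff, ← hf P, ← hf Q, g.ringHom_ext (Subtype.ext_iff.mp h)]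

theorem idealCount_prime_le_one_add_legendreSym [Fact p.Prime] (hp2 : p ≠ 2) :
    (idealCount R p : ℤ) ≤ 1 + legendreSym p g.disc := by
  have h2 : (2 : ZMod p) ≠ 0 := by
    exact_mod_cast (ZMod.natCast_eq_zero_iff 2 p).not.mpr fun h ↦
      hp2 ((Nat.prime_dvd_prime_iff_eq Fact.out Nat.prime_two).mp h)
  have hsqrt (r : {r : ZMod p // r ^ 2 = g.trace * r - g.norm}) :
      2 * r.1 - g.trace ∈ {x : ZMod p | x ^ 2 = g.disc}.toFinset := by
    rw [Set.mem_toFinset, Set.mem_ofPred_eq, disc]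
    push_cast
    linear_combination 4 * r.2
  have hle : Nat.card {r : ZMod p // r ^ 2 = g.trace * r - g.norm} ≤
      {x : ZMod p | x ^ 2 = g.disc}.toFinset.card := by
    rw [← Nat.card_eq_card_toFinset]
    refine Nat.card_le_card_of_injective
      (fun r ↦ ⟨2 * r.1 - g.trace, Set.mem_toFinset.mp (hsqrt r)⟩) fun r s h ↦ Subtype.ext ?_
    exact mul_left_cancel₀ h2 (sub_left_injective (Subtype.ext_iff.mp h))
  rw [add_comm, ← legendreSym.card_sqrts p hp2]
  exact_mod_cast (g.idealCount_prime_le_card_roots Fact.out).trans hle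

theorem idealCount_two_le (hodd : Odd g.disc) :
    idealCount R 2 ≤ if Even g.norm then 2 else 0 := by
  refine (g.idealCount_prime_le_card_roots Nat.prime_two).trans ?_
  rw [ZMod.intCast_eq_one_iff_odd.mpr (g.odd_trace hodd), Nat.card_eq_fintype_card]
  split_ifs with h
  · rw [ZMod.intCast_eq_zero_iff_even.mpr h]
    decide
  · rw [ZMod.intCast_eq_one_iff_odd.mpr (Int.not_even_iff_odd.mp h)]
    decide

theorem idealCount_prime_le_one_add_jacobiSym {k : ℕ} (hk : g.disc = k) (hodd : Odd k)
    (hp : p.Prime) : (idealCount R p : ℤ) ≤ 1 + jacobiSym p k := by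
  have hodd' : Odd g.disc := hk ▸ (Int.odd_coe_nat k).mpr hodd
  rcases hp.eq_two_or_odd' with rfl | hp2
  · have h8 := g.disc_emod_eight hodd'
    have hcount := g.idealCount_two_le hodd'
    rw [Nat.cast_ofNat, jacobiSym.at_two hodd, ZMod.χ₈_nat_eq_if_mod_eight]
    split_ifs at h8 hcount ⊢ <;> omega
  · have : Fact p.Prime := ⟨hp⟩
    have hk4 : k % 4 = 1 := by have := g.disc_emod_four hodd'; omega
    rw [jacobiSym.quadratic_reciprocity_one_mod_four' hp2 hk4, ← hk,
      ← jacobiSym.legendreSym.to_jacobiSym]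
    exact g.idealCount_prime_le_one_add_legendreSym (by rintro rfl; exact absurd hp2 (by decide))

theorem idealCount_le_sum_jacobiSym [CharZero R] [Module.Finite ℤ R] {k : ℕ} (hk : g.disc = k)
    (hodd : Odd k) (hk1 : 1 < k) {n : ℕ} (hn : n ≠ 0) :
    (idealCount R n : ℤ) ≤ ∑ d ∈ n.divisors, jacobiSym d k := by
  let χ : ℕ →*₀ ℤ :=
    { toFun n := jacobiSym n k
      map_zero' := jacobiSym.zero_left hk1
      map_one' := jacobiSym.one_left k
      map_mul' m n := by rw [Nat.cast_mul, jacobiSym.mul_left] }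
  exact idealCount_le_sum_divisors (Module.finrank_eq_card_basis g.basis) χ
    (fun p _ ↦ jacobiSym.trichotomy p k)
    (fun p hp ↦ g.idealCount_prime_le_one_add_jacobiSym hk hodd hp) hn

end IdealCount

end QuadraticGenerator

end QuadraticGenerator

section Residue

open Filter Topology NumberField

theorem lseriesTerm_ofReal (f : ℕ → ℝ) {s : ℝ} (hs : s ≠ 0) (n : ℕ) :
    LSeries.term (fun n ↦ (f n : ℂ)) s n = ((f n / (n : ℝ) ^ s : ℝ) : ℂ) := by
  rcases eq_or_ne n 0 with rfl | hn
  · simp [Real.zero_rpow hs]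
  · rw [LSeries.term_of_ne_zero hn, Complex.ofReal_div, Complex.ofReal_cpow n.cast_nonneg,
      Complex.ofReal_natCast]

theorem lseries_ofReal (f : ℕ → ℝ) {s : ℝ} (hs : s ≠ 0) :
    LSeries (fun n ↦ (f n : ℂ)) s = ((∑' n : ℕ, f n / (n : ℝ) ^ s : ℝ) : ℂ) := by
  rw [LSeries, Complex.ofReal_tsum]
  exact tsum_congr (lseriesTerm_ofReal f hs)

theorem lseriesSummable_ofReal_iff (f : ℕ → ℝ) {s : ℝ} (hs : s ≠ 0) :
    LSeriesSummable (fun n ↦ (f n : ℂ)) s ↔ Summable fun n : ℕ ↦ f n / (n : ℝ) ^ s := by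
  rw [LSeriesSummable, ← Complex.summable_ofReal]
  exact summable_congr (lseriesTerm_ofReal f hs)

theorem hasSum_sum_divisors_div_rpow {χ : ℕ → ℝ} (hχ : ∀ n, |χ n| ≤ 1) {s : ℝ} (hs : 1 < s) :
    HasSum (fun n : ℕ ↦ (∑ d ∈ n.divisors, χ d) / (n : ℝ) ^ s)
      ((∑' n : ℕ, 1 / (n : ℝ) ^ s) * ∑' n : ℕ, χ n / (n : ℝ) ^ s) := by
  have hs0 : s ≠ 0 := by linarith
  have hone : LSeriesSummable (fun _ ↦ ((1 : ℝ) : ℂ)) s :=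
    LSeriesSummable_of_bounded_of_one_lt_real (m := 1) (by simp) hs
  have hsum : LSeriesSummable (fun n ↦ (χ n : ℂ)) s :=
    LSeriesSummable_of_bounded_of_one_lt_real (m := 1) (fun n _ ↦ by simpa using hχ n) hs
  have hconv : LSeries.convolution (fun _ ↦ ((1 : ℝ) : ℂ)) (fun n ↦ (χ n : ℂ)) =
      fun n ↦ ((∑ d ∈ n.divisors, χ d : ℝ) : ℂ) := by
    ext n
    simp only [LSeries.convolution_def, Complex.ofReal_one, one_mul, Complex.ofReal_sum]
    exact Nat.sum_divisorsAntidiagonal' fun _ y ↦ (χ y : ℂ)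
  have hprod := LSeries_convolution' hone hsum
  rw [hconv, lseries_ofReal _ hs0, lseries_ofReal _ hs0, lseries_ofReal _ hs0,
    ← Complex.ofReal_mul, Complex.ofReal_inj] at hprod
  exact hprod ▸ ((lseriesSummable_ofReal_iff _ hs0).mp (hconv ▸ hone.convolution hsum)).hasSum

variable {K : Type*} [Field K] [NumberField K]

theorem dedekindZeta_ofReal {s : ℝ} (hs : s ≠ 0) :
    dedekindZeta K s = ((∑' n : ℕ, idealCount (𝓞 K) n / (n : ℝ) ^ s : ℝ) : ℂ) := by
  rw [← lseries_ofReal (fun n ↦ (idealCount (𝓞 K) n : ℝ)) hs]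
  simp only [dedekindZeta, idealCount, Complex.ofReal_natCast]

theorem tendsto_sub_one_mul_tsum_idealCount :
    Tendsto (fun s : ℝ ↦ (s - 1) * ∑' n : ℕ, idealCount (𝓞 K) n / (n : ℝ) ^ s) (𝓝[>] 1)
      (𝓝 (dedekindZeta_residue K)) := by
  refine tendsto_ofReal_iff.mp
    ((tendsto_sub_one_mul_dedekindZeta_nhdsGT K).congr' ?_)
  filter_upwards [self_mem_nhdsWithin] with s hs
  rw [dedekindZeta_ofReal (zero_lt_one.trans hs).ne']
  push_cast
  rfl

theorem dedekindZeta_residue_le_of_idealCount_le {χ : ℕ → ℝ} (hχ : ∀ n, |χ n| ≤ 1)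
    (hcount : ∀ n ≠ 0, (idealCount (𝓞 K) n : ℝ) ≤ ∑ d ∈ n.divisors, χ d)
    {B : ℝ → ℝ} {b : ℝ} (hB : ∀ s > 1, ∑' n : ℕ, χ n / (n : ℝ) ^ s ≤ B s)
    (hlim : Tendsto B (𝓝[>] 1) (𝓝 b)) : dedekindZeta_residue K ≤ b := by
  have hright : Tendsto (fun s : ℝ ↦ ((s - 1) * ∑' n : ℕ, 1 / (n : ℝ) ^ s) * B s) (𝓝[>] 1)
      (𝓝 b) := by simpa using tendsto_sub_mul_tsum_nat_rpow.mul hlim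
  refine le_of_tendsto_of_tendsto tendsto_sub_one_mul_tsum_idealCount hright ?_
  filter_upwards [self_mem_nhdsWithin] with s (hs : 1 < s)
  have hle (n : ℕ) :
      idealCount (𝓞 K) n / (n : ℝ) ^ s ≤ (∑ d ∈ n.divisors, χ d) / (n : ℝ) ^ s := by
    rcases eq_or_ne n 0 with rfl | hn
    · simp [Real.zero_rpow (zero_lt_one.trans hs).ne']
    · gcongr
      exact hcount n hn
  have hsum := hasSum_sum_divisors_div_rpow hχ hs
  rw [mul_assoc]
  refine mul_le_mul_of_nonneg_left ?_ (sub_nonneg.mpr hs.le)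
  calc ∑' n : ℕ, idealCount (𝓞 K) n / (n : ℝ) ^ s
      ≤ ∑' n : ℕ, (∑ d ∈ n.divisors, χ d) / (n : ℝ) ^ s :=
        (Summable.of_nonneg_of_le (fun n ↦ by positivity) hle hsum.summable).tsum_le_tsum hle
          hsum.summable
    _ = (∑' n : ℕ, 1 / (n : ℝ) ^ s) * ∑' n : ℕ, χ n / (n : ℝ) ^ s := hsum.tsum_eq
    _ ≤ (∑' n : ℕ, 1 / (n : ℝ) ^ s) * B s :=
        mul_le_mul_of_nonneg_left (hB s hs) (tsum_nonneg fun n ↦ by positivity)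

end Residue

section ConvolutionBound

open Finset

variable {G H : Type*} [AddCommGroup G] [Fintype G] [AddCommGroup H] [Fintype H]

/-- Convolution by `φ` has operator norm at most `√C` on `ℓ²(G)`. -/
def ConvolutionBound (φ : G → ℝ) (C : ℝ) : Prop :=
  ∀ f : G → ℝ, ∑ x, (∑ y, φ (x - y) * f y) ^ 2 ≤ C * ∑ y, f y ^ 2

namespace ConvolutionBound

variable {φ : G → ℝ} {ψ : H → ℝ} {B C : ℝ}

theorem comp_addEquiv (hψ : ConvolutionBound ψ C) (e : G ≃+ H) :
    ConvolutionBound (fun x ↦ ψ (e x)) C := by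
  intro f
  have h := hψ (fun y ↦ f (e.symm y))
  rw [← e.toEquiv.sum_comp, ← e.toEquiv.sum_comp (fun y ↦ f (e.symm y) ^ 2)] at h
  simpa [← e.toEquiv.sum_comp (fun y ↦ ψ (_ - y) * f (e.symm y))] using h

theorem prod (hφ : ConvolutionBound φ B) (hψ : ConvolutionBound ψ C) (hB : 0 ≤ B) :
    ConvolutionBound (fun x : G × H ↦ φ x.1 * ψ x.2) (B * C) := by
  intro f
  calc ∑ x, (∑ y, φ (x - y).1 * ψ (x - y).2 * f y) ^ 2
      = ∑ x₂, ∑ x₁, (∑ y₁, φ (x₁ - y₁) * ∑ y₂, ψ (x₂ - y₂) * f (y₁, y₂)) ^ 2 := by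
        rw [Fintype.sum_prod_type_right]
        simp only [Prod.fst_sub, Prod.snd_sub, Fintype.sum_prod_type, mul_sum, mul_assoc]
    _ ≤ ∑ x₂, B * ∑ y₁, (∑ y₂, ψ (x₂ - y₂) * f (y₁, y₂)) ^ 2 :=
        sum_le_sum fun x₂ _ ↦ hφ fun y₁ ↦ ∑ y₂, ψ (x₂ - y₂) * f (y₁, y₂)
    _ = B * ∑ y₁, ∑ x₂, (∑ y₂, ψ (x₂ - y₂) * f (y₁, y₂)) ^ 2 := by rw [← mul_sum, sum_comm]
    _ ≤ B * ∑ y₁, C * ∑ y₂, f (y₁, y₂) ^ 2 := by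
        gcongr with y₁
        exact hψ fun y₂ ↦ f (y₁, y₂)
    _ = B * C * ∑ x, f x ^ 2 := by rw [← mul_sum, Fintype.sum_prod_type, mul_assoc]

theorem sum_sum_sub_le (hφ : ConvolutionBound φ C) (s : Finset G) :
    ∑ x ∈ s, ∑ y ∈ s, φ (x - y) ≤ √C * #s := by
  classical
  let f : G → ℝ := fun x ↦ if x ∈ s then 1 else 0
  have hf : ∑ x, f x ^ 2 = #s := by simp [f]
  calc ∑ x ∈ s, ∑ y ∈ s, φ (x - y)
      = ∑ x, f x * ∑ y, φ (x - y) * f y := by simp [f]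
    _ ≤ √(∑ x, f x ^ 2) * √(∑ x, (∑ y, φ (x - y) * f y) ^ 2) :=
        Real.sum_mul_le_sqrt_mul_sqrt univ f _
    _ ≤ √(#s) * √(C * #s) := by
        rw [hf]
        gcongr
        exact hf ▸ hφ f
    _ = √C * #s := by
        rw [Real.sqrt_mul' _ (Nat.cast_nonneg _), mul_left_comm,
          Real.mul_self_sqrt (Nat.cast_nonneg _)]

end ConvolutionBound

variable {F : Type*} [Field F] [Fintype F] [DecidableEq F]

theorem sum_sq_quadraticChar_sub (y : F) :
    ∑ x, quadraticChar F (x - y) ^ 2 = (Fintype.card F : ℤ) - 1 := by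
  have hshift := (Equiv.subRight y).sum_comp fun x ↦ quadraticChar F x ^ 2
  simp only [Equiv.subRight_apply] at hshift
  rw [hshift, ← add_sum_erase univ _ (mem_univ 0),
    sum_congr rfl fun x hx ↦ quadraticChar_sq_one (ne_of_mem_erase hx)]
  simp [card_erase_of_mem, Nat.cast_sub Fintype.card_pos]

theorem sum_quadraticChar_sub_mul_sub (hF : ringChar F ≠ 2) {y z : F} (hyz : y ≠ z) :
    ∑ x, quadraticChar F (x - y) * quadraticChar F (x - z) = -1 := by
  have hc : z - y ≠ 0 := sub_ne_zero.mpr hyz.symm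
  have hJ := jacobiSum_nontrivial_inv (quadraticChar_ne_one hF)
  rw [(quadraticChar_isQuadratic F).inv, jacobiSum] at hJ
  have hneg : quadraticChar F (-1) * quadraticChar F (-1) = 1 := by
    rw [← map_mul, neg_mul_neg, one_mul, map_one]
  calc ∑ x, quadraticChar F (x - y) * quadraticChar F (x - z)
      = ∑ u, quadraticChar F ((z - y) * u) * quadraticChar F ((z - y) * (u - 1)) := by
        rw [← ((Equiv.mulLeft₀ (z - y) hc).trans (Equiv.addRight y)).sum_comp]
        refine sum_congr rfl fun u _ ↦ ?_
        simp only [Equiv.trans_apply, Equiv.mulLeft₀_apply, Equiv.coe_addRight,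
          add_sub_cancel_right]
        congr 2
        ring
    _ = ∑ u, quadraticChar F (z - y) ^ 2 *
          (quadraticChar F (-1) * (quadraticChar F u * quadraticChar F (1 - u))) := by
        refine sum_congr rfl fun u _ ↦ ?_
        rw [← neg_sub 1 u, neg_eq_neg_one_mul (1 - u), map_mul, map_mul, map_mul]
        ring
    _ = -1 := by rw [← mul_sum, ← mul_sum, hJ, quadraticChar_sq_one hc]; linarith

theorem convolutionBound_quadraticChar (hF : ringChar F ≠ 2) :
    ConvolutionBound (fun x : F ↦ (quadraticChar F x : ℝ)) (Fintype.card F) := by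
  intro f
  have hdelta (y z : F) :
      ∑ x, (quadraticChar F (x - y) : ℝ) * quadraticChar F (x - z) =
        (if y = z then (Fintype.card F : ℝ) else 0) - 1 := by
    rcases eq_or_ne y z with rfl | hyz
    · rw [if_pos rfl]
      exact_mod_cast (sum_congr rfl fun x _ ↦ (sq _).symm).trans (sum_sq_quadraticChar_sub y)
    · rw [if_neg hyz, zero_sub]
      exact_mod_cast sum_quadraticChar_sub_mul_sub hF hyz
  calc ∑ x, (∑ y, (quadraticChar F (x - y) : ℝ) * f y) ^ 2
      = ∑ y, ∑ z, f y * f z *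
          ∑ x, (quadraticChar F (x - y) : ℝ) * quadraticChar F (x - z) := by
        simp only [sq, sum_mul_sum]
        rw [sum_comm]
        refine sum_congr rfl fun y _ ↦ ?_
        rw [sum_comm]
        simp only [mul_sum]
        exact sum_congr rfl fun z _ ↦ sum_congr rfl fun x _ ↦ by ring
    _ = Fintype.card F * ∑ y, f y ^ 2 - (∑ y, f y) ^ 2 := by
        simp only [hdelta, mul_sub, mul_ite, mul_zero, mul_one, sum_sub_distrib, sum_ite_eq,
          mem_univ, if_true]
        rw [sq (∑ y, f y), sum_mul_sum, mul_sum]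
        congr 1
        exact sum_congr rfl fun y _ ↦ by ring
    _ ≤ Fintype.card F * ∑ y, f y ^ 2 := sub_le_self _ (sq_nonneg _)

end ConvolutionBound

section JacobiSum

open Finset

theorem jacobiSym_cast_zmod_intCast (k : ℕ) (a : ℤ) :
    jacobiSym ((a : ZMod k).cast : ℤ) k = jacobiSym a k := by
  rw [ZMod.coe_intCast, ← jacobiSym.mod_left]

theorem ringChar_zmod_ne_two {p : ℕ} (hodd : Odd p) : ringChar (ZMod p) ≠ 2 := by
  rw [ZMod.ringChar_zmod_n]
  rintro rfl
  exact absurd hodd (by decide)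

theorem injOn_natCast_zmod {k n : ℕ} (hn : n ≤ k) :
    Set.InjOn (Nat.cast : ℕ → ZMod k) (range n) := by
  intro i hi j hj hij
  exact ((ZMod.natCast_eq_natCast_iff _ _ _).mp hij).eq_of_lt_of_lt
    ((mem_range.mp hi).trans_le hn) ((mem_range.mp hj).trans_le hn)

theorem convolutionBound_jacobiSym {k : ℕ} [hk0 : NeZero k] (hk : Squarefree k) (hodd : Odd k) :
    ConvolutionBound (fun x : ZMod k ↦ (jacobiSym (x.cast : ℤ) k : ℝ)) k := by
  revert hk0 hk hodd
  induction k using induction_on_primes with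
  | zero => exact fun {hk0} ↦ absurd rfl hk0.ne
  | one => intro _ _ _ f; simp
  | prime_mul p m hp ih =>
    intro hk0 hk hodd
    obtain ⟨hcop, -, hm⟩ := Nat.squarefree_mul_iff.mp hk
    have : Fact p.Prime := ⟨hp⟩
    have : NeZero m := ⟨right_ne_zero_of_mul hk0.ne⟩
    have hprod := ((convolutionBound_quadraticChar
      (ringChar_zmod_ne_two (Nat.odd_mul.mp hodd).1)).prod
      (ih hm (Nat.odd_mul.mp hodd).2) (Nat.cast_nonneg _)).comp_addEquiv
      (ZMod.chineseRemainder hcop).toAddEquiv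
    rw [ZMod.card, ← Nat.cast_mul] at hprod
    convert hprod using 2 with x
    obtain ⟨a, rfl⟩ := ZMod.intCast_surjective x
    rw [jacobiSym_cast_zmod_intCast, jacobiSym.mul_right, ← jacobiSym.legendreSym.to_jacobiSym]
    simp [legendreSym, jacobiSym_cast_zmod_intCast]

theorem exists_jacobiSym_eq_neg_one {k : ℕ} (hk : Squarefree k) (hodd : Odd k) (hk1 : k ≠ 1) :
    ∃ a : ℕ, jacobiSym a k = -1 := by
  obtain ⟨p, hp, m, rfl⟩ := Nat.exists_prime_and_dvd hk1
  have : Fact p.Prime := ⟨hp⟩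
  have : NeZero m := ⟨right_ne_zero_of_mul hk.ne_zero⟩
  obtain ⟨hcop, -, -⟩ := Nat.squarefree_mul_iff.mp hk
  obtain ⟨x, hx⟩ :=
    quadraticChar_exists_neg_one (ringChar_zmod_ne_two (Nat.odd_mul.mp hodd).1)
  obtain ⟨a, hap, ham⟩ := Nat.chineseRemainder hcop x.val 1
  refine ⟨a, ?_⟩
  have hap : (a : ZMod p) = x := by
    rw [(ZMod.natCast_eq_natCast_iff _ _ _).mpr hap, ZMod.natCast_zmod_val]
  have ham : ((a : ℤ) : ZMod m) = (1 : ℤ) := by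
    exact_mod_cast (ZMod.natCast_eq_natCast_iff _ _ _).mpr ham
  rw [jacobiSym.mul_right, ← jacobiSym.legendreSym.to_jacobiSym, legendreSym, Int.cast_natCast, hap,
    hx, ← jacobiSym_cast_zmod_intCast, ham, jacobiSym_cast_zmod_intCast,
    jacobiSym.one_left, mul_one]

theorem sum_jacobiSym_cast_eq_zero {k : ℕ} [NeZero k] (hk : Squarefree k) (hodd : Odd k)
    (hk1 : k ≠ 1) : ∑ x : ZMod k, jacobiSym (x.cast : ℤ) k = 0 := by
  obtain ⟨a, ha⟩ := exists_jacobiSym_eq_neg_one hk hodd hk1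
  have hunit : IsUnit (a : ZMod k) := by
    rw [ZMod.isUnit_iff_coprime, Nat.coprime_iff_gcd_eq_one, ← Int.gcd_natCast_natCast]
    by_contra hgcd
    exact absurd ((jacobiSym.eq_zero_iff_not_coprime.mpr hgcd).symm.trans ha) (by decide)
  have hmul (x : ZMod k) : jacobiSym ((a * x).cast : ℤ) k = -jacobiSym (x.cast : ℤ) k := by
    obtain ⟨b, rfl⟩ := ZMod.intCast_surjective x
    rw [← Int.cast_natCast, ← Int.cast_mul, jacobiSym_cast_zmod_intCast,
      jacobiSym_cast_zmod_intCast, jacobiSym.mul_left, ha, neg_one_mul]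
  have hsum := hunit.unit.mulLeft_bijective.sum_comp fun x : ZMod k ↦ jacobiSym (x.cast : ℤ) k
  simp only [IsUnit.unit_spec, hmul, sum_neg_distrib] at hsum
  exact self_eq_neg.mp hsum.symm

theorem sum_range_jacobiSym_sub_eq_zero {k : ℕ} (hk : Squarefree k) (hodd : Odd k) (hk1 : k ≠ 1)
    (a : ℤ) : ∑ j ∈ range k, jacobiSym (a - j) k = 0 := by
  have : NeZero k := ⟨hk.ne_zero⟩
  have himage : (range k).image (Nat.cast : ℕ → ZMod k) = univ :=
    eq_univ_of_card _ (by
      rw [card_image_of_injOn (injOn_natCast_zmod le_rfl), card_range, ZMod.card])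
  rw [← sum_jacobiSym_cast_eq_zero hk hodd hk1, ← (Equiv.subLeft (a : ZMod k)).sum_comp, ← himage,
    sum_image (injOn_natCast_zmod le_rfl)]
  refine sum_congr rfl fun j _ ↦ ?_
  rw [← jacobiSym_cast_zmod_intCast]
  simp

theorem sum_sum_jacobiSym_sub_le {k : ℕ} (hk : Squarefree k) (hodd : Odd k) (hk1 : k ≠ 1) (n : ℕ) :
    ∑ i ∈ range n, ∑ j ∈ range n, (jacobiSym (i - j : ℤ) k : ℝ) ≤ √k * n := by
  have : NeZero k := ⟨hk.ne_zero⟩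
  induction n using Nat.strong_induction_on with
  | _ n ih =>
  rcases le_total n k with hn | hn
  · have h := (convolutionBound_jacobiSym hk hodd).sum_sum_sub_le
      ((range n).image (Nat.cast : ℕ → ZMod k))
    simp only [sum_image (injOn_natCast_zmod hn), card_image_of_injOn (injOn_natCast_zmod hn),
      card_range] at h
    refine le_of_eq_of_le (sum_congr rfl fun i _ ↦ sum_congr rfl fun j _ ↦ ?_) h
    rw [← jacobiSym_cast_zmod_intCast]
    simp
  · obtain ⟨m, rfl⟩ := Nat.exists_eq_add_of_le' hn
    have hdrop (a : ℤ) : ∑ j ∈ range (m + k), (jacobiSym (a - j) k : ℝ) =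
        ∑ j ∈ range m, (jacobiSym (a - j) k : ℝ) := by
      have hperiod := sum_range_jacobiSym_sub_eq_zero hk hodd hk1 (a - m)
      rw [sum_range_add, add_eq_left]
      simp only [Nat.cast_add, ← sub_sub]
      exact_mod_cast hperiod
    have hdrop' (a : ℤ) : ∑ i ∈ range (m + k), (jacobiSym (i - a) k : ℝ) =
        ∑ i ∈ range m, (jacobiSym (i - a) k : ℝ) := by
      have hneg (i : ℕ) : (jacobiSym (i - a) k : ℝ) = jacobiSym (-1) k * jacobiSym (a - i) k := by
        rw [← Int.cast_mul, ← jacobiSym.mul_left, neg_one_mul, neg_sub]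
      simp only [hneg, ← mul_sum, hdrop]
    rw [sum_congr rfl fun (i : ℕ) _ ↦ hdrop i, sum_comm,
      sum_congr rfl fun (i : ℕ) _ ↦ hdrop' i, sum_comm]
    refine (ih m (by have := hk.ne_zero; omega)).trans ?_
    gcongr
    omega

theorem sum_sum_sub_eq_two_mul (φ : ℤ → ℝ) (h0 : φ 0 = 0) (heven : ∀ a, φ (-a) = φ a) (n : ℕ) :
    ∑ i ∈ range n, ∑ j ∈ range n, φ (i - j) =
      2 * ∑ m ∈ range n, ∑ i ∈ range (m + 1), φ i := by
  induction n with
  | zero => simp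
  | succ n ih =>
    have hrow : ∑ j ∈ range n, φ ((n : ℤ) - j) = ∑ i ∈ range (n + 1), φ i := by
      rw [sum_range_succ', ← sum_range_reflect]
      simp only [Nat.cast_zero, h0, add_zero]
      refine sum_congr rfl fun j hj ↦ ?_
      have := mem_range.mp hj
      congr 1
      omega
    have hcol : ∑ i ∈ range n, φ ((i : ℤ) - n) = ∑ i ∈ range (n + 1), φ i := by
      rw [← hrow]
      exact sum_congr rfl fun j _ ↦ by rw [← heven, neg_sub]
    rw [sum_range_succ, sum_congr rfl fun (i : ℕ) _ ↦ sum_range_succ (fun j : ℕ ↦ φ (i - j)) n,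
      sum_add_distrib, ih, sum_range_succ (fun j : ℕ ↦ φ ((n : ℤ) - j)), hrow, hcol, sub_self, h0,
      sum_range_succ (fun m ↦ ∑ i ∈ range (m + 1), φ i) n]
    ring

theorem sum_range_sum_jacobiSym_le {k : ℕ} (hk : Squarefree k) (hk4 : k % 4 = 1) (hk1 : k ≠ 1)
    (n : ℕ) : ∑ m ∈ range n, ∑ i ∈ range (m + 1), (jacobiSym i k : ℝ) ≤ √k / 2 * n := by
  have hodd : Odd k := Nat.odd_iff.mpr (by omega)
  have h := sum_sum_sub_eq_two_mul (fun a ↦ (jacobiSym a k : ℝ))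
    (by simp [jacobiSym.zero_left (b := k) (by omega)])
    (fun a ↦ by simp only [jacobiSym.neg a hodd, ZMod.χ₄_nat_one_mod_four hk4, one_mul]) n
  have hle := sum_sum_jacobiSym_sub_le hk hodd hk1 n
  linarith

end JacobiSum

section AbelSummation

open Finset Filter Topology NumberField

theorem sum_range_mul_eq_sum_sum_mul (g f : ℕ → ℝ) (n : ℕ) :
    ∑ i ∈ range n, g i * f i =
      (∑ i ∈ range n, g i) * f n +
        (∑ m ∈ range n, ∑ i ∈ range (m + 1), g i) * (f n - f (n + 1)) +
        ∑ l ∈ range n, (∑ m ∈ range (l + 1), ∑ i ∈ range (m + 1), g i) *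
          (f l - 2 * f (l + 1) + f (l + 2)) := by
  induction n with
  | zero => simp
  | succ n ih =>
    rw [sum_range_succ, ih,
      sum_range_succ (fun l ↦ (∑ m ∈ range (l + 1), ∑ i ∈ range (m + 1), g i) * _) n,
      sum_range_succ (fun m ↦ ∑ i ∈ range (m + 1), g i) n, sum_range_succ g n]
    ring

theorem sum_range_mul_le_of_sum_sum_nonpos {g f : ℕ → ℝ} (h0 : g 0 = 0)
    (hanti : ∀ n ≠ 0, f (n + 1) ≤ f n) (hconv : ∀ n ≠ 0, 2 * f (n + 1) ≤ f n + f (n + 2))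
    (hg : ∀ n, ∑ m ∈ range n, ∑ i ∈ range (m + 1), g i ≤ 0) {n : ℕ} (hn : n ≠ 0) :
    ∑ i ∈ range n, g i * f i ≤ (∑ i ∈ range n, g i) * f n := by
  have hboundary : (∑ m ∈ range n, ∑ i ∈ range (m + 1), g i) * (f n - f (n + 1)) ≤ 0 :=
    mul_nonpos_of_nonpos_of_nonneg (hg n) (sub_nonneg.mpr (hanti n hn))
  have hsum : ∑ l ∈ range n, (∑ m ∈ range (l + 1), ∑ i ∈ range (m + 1), g i) *
      (f l - 2 * f (l + 1) + f (l + 2)) ≤ 0 := by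
    refine sum_nonpos fun l _ ↦ ?_
    rcases eq_or_ne l 0 with rfl | hl
    · simp [h0]
    · exact mul_nonpos_of_nonpos_of_nonneg (hg _) (by linarith [hconv l hl])
  rw [sum_range_mul_eq_sum_sum_mul]
  linarith

theorem two_mul_inv_rpow_le {x s : ℝ} (hx : 0 < x) (hs : 0 ≤ s) :
    2 * ((x + 1) ^ s)⁻¹ ≤ (x ^ s)⁻¹ + ((x + 2) ^ s)⁻¹ := by
  have hmul : x ^ s * (x + 2) ^ s ≤ ((x + 1) ^ s) ^ 2 := by
    rw [← Real.mul_rpow hx.le (by positivity), sq, ← Real.mul_rpow (by positivity) (by positivity)]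
    exact Real.rpow_le_rpow (by positivity) (by nlinarith) hs
  have hinv := inv_anti₀ (by positivity) hmul
  rw [mul_inv, ← inv_pow] at hinv
  refine le_of_sq_le_sq ?_ (by positivity)
  linarith [sq_nonneg ((x ^ s)⁻¹ - ((x + 2) ^ s)⁻¹)]

variable {χ ψ : ℕ → ℝ} {A C : ℝ} {M : ℕ}

theorem summable_div_rpow_of_abs_le (hχ : ∀ n, |χ n| ≤ C) {s : ℝ} (hs : 1 < s) :
    Summable fun n : ℕ ↦ χ n / (n : ℝ) ^ s := by
  refine Summable.of_norm_bounded ((Real.summable_one_div_nat_rpow.mpr hs).mul_left C) fun n ↦ ?_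
  rw [norm_div, Real.norm_eq_abs, Real.norm_of_nonneg (by positivity : 0 ≤ (n : ℝ) ^ s),
    mul_one_div]
  exact div_le_div_of_nonneg_right (hχ n) (by positivity)

theorem tsum_div_rpow_nonpos (hχ : ∀ n, |χ n| ≤ C) (h0 : χ 0 = 0)
    (hsum : ∀ n, ∑ m ∈ range n, ∑ i ∈ range (m + 1), χ i ≤ 0) {s : ℝ} (hs : 1 < s) :
    ∑' n : ℕ, χ n / (n : ℝ) ^ s ≤ 0 := by
  have hlim : Tendsto (fun n : ℕ ↦ C * (n : ℝ) ^ (-(s - 1))) atTop (𝓝 0) := by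
    simpa using ((tendsto_rpow_neg_atTop (sub_pos.mpr hs)).comp
      tendsto_natCast_atTop_atTop).const_mul C
  refine le_of_tendsto_of_tendsto (summable_div_rpow_of_abs_le hχ hs).hasSum.tendsto_sum_nat hlim ?_
  filter_upwards [eventually_ne_atTop 0] with n hn
  have hs0 : 0 ≤ s := by linarith
  have hn0 : (0 : ℝ) < n := by positivity
  calc ∑ i ∈ range n, χ i / (i : ℝ) ^ s
      ≤ (∑ i ∈ range n, χ i) * ((n : ℝ) ^ s)⁻¹ := by
        simp only [div_eq_mul_inv]
        refine sum_range_mul_le_of_sum_sum_nonpos h0 (fun m hm ↦ ?_) (fun m hm ↦ ?_) hsum hn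
        · gcongr
          simp
        · simpa using two_mul_inv_rpow_le (x := m) (by positivity) hs0
    _ ≤ (n * C) * ((n : ℝ) ^ s)⁻¹ := by
        gcongr
        simpa using sum_le_card_nsmul (range n) χ C fun i _ ↦ le_of_abs_le (hχ i)
    _ = C * (n : ℝ) ^ (-(s - 1)) := by
        rw [neg_sub, Real.rpow_sub hn0, Real.rpow_one]
        ring

/-- The continuation of `ψ` beyond `M` all of whose later partial sums are equal to `A`. Being
finitely supported, it is used as a majorant whose Dirichlet series is a finite sum. -/
def flattenAfter (M : ℕ) (A : ℝ) (ψ : ℕ → ℝ) (n : ℕ) : ℝ :=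
  if n ≤ M then ψ n else if n = M + 1 then A - ∑ i ∈ range (M + 1), ψ i else 0

theorem flattenAfter_of_lt {n : ℕ} (hn : M + 1 < n) : flattenAfter M A ψ n = 0 := by
  rw [flattenAfter, if_neg (by omega), if_neg (by omega)]

theorem sum_range_flattenAfter_mul (f : ℕ → ℝ) {n : ℕ} (hn : n ≤ M + 1) :
    ∑ i ∈ range n, flattenAfter M A ψ i * f i = ∑ i ∈ range n, ψ i * f i :=
  sum_congr rfl fun i hi ↦ by
    rw [flattenAfter, if_pos (by have := mem_range.mp hi; omega)]

theorem sum_range_flattenAfter_of_le {n : ℕ} (hn : n ≤ M + 1) :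
    ∑ i ∈ range n, flattenAfter M A ψ i = ∑ i ∈ range n, ψ i := by
  simpa using sum_range_flattenAfter_mul (A := A) (ψ := ψ) (fun _ ↦ 1) hn

theorem sum_range_flattenAfter_of_lt {n : ℕ} (hn : M + 1 < n) :
    ∑ i ∈ range n, flattenAfter M A ψ i = A := by
  induction n, hn using Nat.le_induction with
  | base => rw [sum_range_succ, sum_range_flattenAfter_of_le le_rfl]; simp [flattenAfter]
  | succ n hn ih => rw [sum_range_succ, ih, flattenAfter_of_lt hn, add_zero]

theorem abs_flattenAfter_le (n : ℕ) :
    |flattenAfter M A ψ n| ≤ ∑ i ∈ range (M + 2), |flattenAfter M A ψ i| := by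
  rcases lt_or_ge (M + 1) n with hn | hn
  · rw [flattenAfter_of_lt hn, abs_zero]
    positivity
  · exact single_le_sum (f := fun i ↦ |flattenAfter M A ψ i|) (fun i _ ↦ abs_nonneg _)
      (mem_range.mpr (by omega))

theorem sum_sum_le_sum_sum_flattenAfter
    (hle : ∀ n ≤ M + 1, ∑ i ∈ range n, χ i ≤ ∑ i ∈ range n, ψ i)
    (hA : ∀ n : ℕ, ∑ m ∈ range n, ∑ i ∈ range (m + 1), χ i ≤ A * n)
    (hM : A * (M + 1) ≤ ∑ m ∈ range (M + 1), ∑ i ∈ range (m + 1), ψ i) (n : ℕ) :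
    ∑ m ∈ range n, ∑ i ∈ range (m + 1), χ i ≤
      ∑ m ∈ range n, ∑ i ∈ range (m + 1), flattenAfter M A ψ i := by
  rcases le_total n (M + 1) with hn | hn
  · refine sum_le_sum fun m hm ↦ ?_
    have hm : m + 1 ≤ M + 1 := by have := mem_range.mp hm; omega
    exact (hle _ hm).trans_eq (sum_range_flattenAfter_of_le hm).symm
  · refine (hA n).trans ?_
    induction n, hn using Nat.le_induction with
    | base =>
      push_cast
      refine hM.trans_eq (sum_congr rfl fun m hm ↦ ?_)
      rw [sum_range_flattenAfter_of_le (by have := mem_range.mp hm; omega)]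
    | succ n hn ih =>
      rw [sum_range_succ, sum_range_flattenAfter_of_lt (by omega)]
      push_cast
      linarith

theorem tsum_div_rpow_le (hχ : ∀ n, |χ n| ≤ C) (h0 : χ 0 = ψ 0)
    (hle : ∀ n ≤ M + 1, ∑ i ∈ range n, χ i ≤ ∑ i ∈ range n, ψ i)
    (hA : ∀ n : ℕ, ∑ m ∈ range n, ∑ i ∈ range (m + 1), χ i ≤ A * n)
    (hM : A * (M + 1) ≤ ∑ m ∈ range (M + 1), ∑ i ∈ range (m + 1), ψ i) {s : ℝ} (hs : 1 < s) :
    ∑' n : ℕ, χ n / (n : ℝ) ^ s ≤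
      ∑ i ∈ range (M + 1), ψ i / (i : ℝ) ^ s +
        (A - ∑ i ∈ range (M + 1), ψ i) / ((M + 1 : ℕ) : ℝ) ^ s := by
  let φ := flattenAfter M A ψ
  let D := ∑ i ∈ range (M + 2), |φ i|
  have hφ (n : ℕ) : |φ n| ≤ D := abs_flattenAfter_le n
  have hdiff : ∑' n : ℕ, (χ n - φ n) / (n : ℝ) ^ s ≤ 0 := by
    refine tsum_div_rpow_nonpos (C := C + D) (fun n ↦ ?_) ?_ (fun n ↦ ?_) hs
    · exact (abs_sub _ _).trans (add_le_add (hχ n) (hφ n))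
    · simp [φ, flattenAfter, h0]
    · simp only [sum_sub_distrib]
      exact sub_nonpos.mpr (sum_sum_le_sum_sum_flattenAfter hle hA hM n)
  simp only [sub_div] at hdiff
  rw [(summable_div_rpow_of_abs_le hχ hs).tsum_sub (summable_div_rpow_of_abs_le hφ hs),
    sub_nonpos] at hdiff
  refine hdiff.trans_eq ?_
  rw [tsum_eq_sum (s := range (M + 1 + 1)) fun n hn ↦ by
      rw [show φ n = 0 from flattenAfter_of_lt (by simpa using hn), zero_div], sum_range_succ]
  simp only [div_eq_mul_inv]
  rw [sum_range_flattenAfter_mul _ le_rfl]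
  simp [φ, flattenAfter]

theorem dedekindZeta_residue_le_of_sum_le {K : Type*} [Field K] [NumberField K]
    (hχ : ∀ n, |χ n| ≤ 1)
    (hcount : ∀ n ≠ 0, (idealCount (𝓞 K) n : ℝ) ≤ ∑ d ∈ n.divisors, χ d) (h0 : χ 0 = ψ 0)
    (hle : ∀ n ≤ M + 1, ∑ i ∈ range n, χ i ≤ ∑ i ∈ range n, ψ i)
    (hA : ∀ n : ℕ, ∑ m ∈ range n, ∑ i ∈ range (m + 1), χ i ≤ A * n)
    (hM : A * (M + 1) ≤ ∑ m ∈ range (M + 1), ∑ i ∈ range (m + 1), ψ i) :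
    dedekindZeta_residue K ≤
      ∑ i ∈ range (M + 1), ψ i / i + (A - ∑ i ∈ range (M + 1), ψ i) / (M + 1) := by
  have hterm (a : ℝ) (n : ℕ) : Tendsto (fun s : ℝ ↦ a / (n : ℝ) ^ s) (𝓝[>] 1) (𝓝 (a / n)) := by
    rcases eq_or_ne n 0 with rfl | hn
    · refine tendsto_const_nhds.congr' ?_
      filter_upwards [self_mem_nhdsWithin] with s (hs : 1 < s)
      simp [Real.zero_rpow (zero_lt_one.trans hs).ne']
    · have h : ContinuousAt (fun s : ℝ ↦ a / (n : ℝ) ^ s) 1 :=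
        continuousAt_const.div (Real.continuousAt_const_rpow' one_ne_zero) (by positivity)
      simpa using h.tendsto.mono_left nhdsWithin_le_nhds
  refine dedekindZeta_residue_le_of_idealCount_le hχ hcount
    (fun s hs ↦ tsum_div_rpow_le hχ h0 hle hA hM hs) ?_
  exact_mod_cast (tendsto_finsetSum (range (M + 1)) fun i _ ↦ hterm (ψ i) i).add
    (hterm _ (M + 1))

end AbelSummation

section ResidueBounds

open Finset NumberField

theorem sum_range_add_sum_range_half {χ : ℕ → ℝ} (h2 : ∀ n, χ (2 * n) = -χ n) (n : ℕ) :
    ∑ i ∈ range n, χ i + ∑ i ∈ range ((n + 1) / 2), χ i =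
      ∑ j ∈ range (n / 2), χ (2 * j + 1) := by
  induction n using Nat.twoStepInduction with
  | zero => simp
  | one => simpa [eq_neg_iff_add_eq_zero] using h2 0
  | more n ih _ =>
    rw [show (n + 2 + 1) / 2 = (n + 1) / 2 + 1 by omega, show (n + 2) / 2 = n / 2 + 1 by omega,
      sum_range_succ _ (n + 1), sum_range_succ _ n, sum_range_succ _ ((n + 1) / 2),
      sum_range_succ _ (n / 2), ← ih]
    obtain ⟨a, rfl | rfl⟩ := n.even_or_odd'
    · rw [show (2 * a + 1) / 2 = a by omega, show 2 * a / 2 = a by omega, h2]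
      ring
    · rw [show (2 * a + 1 + 1) / 2 = a + 1 by omega, show (2 * a + 1) / 2 = a by omega,
        show 2 * a + 1 + 1 = 2 * (a + 1) by ring, h2]
      ring

theorem sum_range_le_half {χ : ℕ → ℝ} (hχ : ∀ n, χ n ≤ 1) (h0 : χ 0 = 0)
    (h2 : ∀ n, χ (2 * n) = -χ n) (n : ℕ) : ∑ i ∈ range n, χ i ≤ n / 2 := by
  induction n using Nat.strong_induction_on with
  | _ n ih =>
  rcases lt_or_ge n 3 with hn | hn
  · interval_cases n
    · simp
    · simp [h0]
    · simpa [sum_range_succ, h0] using hχ 1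
  · set b := (n + 1) / 2
    have hodd : ∑ j ∈ range (n / 2), χ (2 * j + 1) - ∑ j ∈ range (b / 2), χ (2 * j + 1) ≤
        (n / 2 - b / 2 : ℕ) := by
      rw [← sum_Ico_eq_sub _ (by omega)]
      simpa using sum_le_card_nsmul (Ico (b / 2) (n / 2)) _ 1 fun j _ ↦ hχ (2 * j + 1)
    have hn' := sum_range_add_sum_range_half h2 n
    have hb' := sum_range_add_sum_range_half h2 b
    have hc := ih ((b + 1) / 2) (by omega)
    have hcount : (2 * (n / 2 - b / 2 : ℕ) + ((b + 1) / 2 : ℕ) : ℝ) ≤ n := by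
      exact_mod_cast (by omega : 2 * (n / 2 - b / 2) + (b + 1) / 2 ≤ n)
    linarith

theorem harmonic_le_log_add {n : ℕ} (hn : 6 ≤ n) : (harmonic n : ℝ) ≤ log n + 2 / 3 := by
  have h := (strictAnti_eulerMascheroniSeq'.antitone hn).trans
    eulerMascheroniSeq'_six_lt_two_thirds.le
  rw [eulerMascheroniSeq', if_neg (by omega)] at h
  linarith

variable {K : Type*} [Field K] [NumberField K] {χ : ℕ → ℝ} {x : ℝ}

theorem dedekindZeta_residue_le_harmonic {A δ : ℝ} {N : ℕ} (hχ : ∀ n, |χ n| ≤ 1) (h0 : χ 0 = 0)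
    (hcount : ∀ n ≠ 0, (idealCount (𝓞 K) n : ℝ) ≤ ∑ d ∈ n.divisors, χ d)
    (hle : ∀ n : ℕ, ∑ i ∈ range (n + 2), χ i ≤ 1 + δ * n)
    (hA : ∀ n : ℕ, ∑ m ∈ range n, ∑ i ∈ range (m + 1), χ i ≤ A * n)
    (hN : A * (N + 2) ≤ (N + 1) * (1 + δ * N / 2)) :
    dedekindZeta_residue K ≤ 1 + δ * (harmonic (N + 1) - 1) + (A - (1 + δ * N)) / (N + 2) := by
  let ψ : ℕ → ℝ := fun n ↦ if n = 0 then 0 else if n = 1 then 1 else δ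
  have hψ (n : ℕ) : ∑ i ∈ range (n + 2), ψ i = 1 + δ * n := by
    simp [ψ, sum_range_succ', mul_comm, add_comm]
  have hψψ (n : ℕ) :
      ∑ m ∈ range (n + 2), ∑ i ∈ range (m + 1), ψ i = (n + 1) * (1 + δ * n / 2) := by
    induction n with
    | zero => simp [ψ, sum_range_succ]
    | succ n ih =>
      rw [sum_range_succ, ih, hψ (n + 1)]
      push_cast
      ring
  have hψdiv : ∑ i ∈ range (N + 2), ψ i / i = 1 + δ * (harmonic (N + 1) - 1) := by
    simp [ψ, sum_range_succ', harmonic, div_eq_mul_inv, mul_sum, add_comm]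
  have h := dedekindZeta_residue_le_of_sum_le (ψ := ψ) (M := N + 1) hχ hcount (by simp [ψ, h0])
    (fun n _ ↦ ?_) hA (by rw [hψψ]; push_cast; linarith)
  · rw [hψ, hψdiv] at h
    push_cast [add_assoc, one_add_one_eq_two] at h
    linarith
  · rcases n with _ | _ | n
    · simp
    · simp [ψ, h0]
    · exact (hle n).trans_eq (hψ n).symm

theorem dedekindZeta_residue_le_harmonic_floor (hχ : ∀ n, |χ n| ≤ 1) (h0 : χ 0 = 0)
    (hcount : ∀ n ≠ 0, (idealCount (𝓞 K) n : ℝ) ≤ ∑ d ∈ n.divisors, χ d)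
    (hA : ∀ n : ℕ, ∑ m ∈ range n, ∑ i ∈ range (m + 1), χ i ≤ x / 2 * n) :
    dedekindZeta_residue K ≤ harmonic (⌊x⌋₊ + 1) - (1 / 2 - 1 / (2 * (⌊x⌋₊ + 2))) := by
  have hfloor := Nat.lt_floor_add_one x
  have h := dedekindZeta_residue_le_harmonic (δ := 1) (N := ⌊x⌋₊) hχ h0 hcount (fun n ↦ ?_) hA
    (by nlinarith)
  · have hlast : (x / 2 - (1 + 1 * ⌊x⌋₊)) / (⌊x⌋₊ + 2 : ℝ) ≤ -(1 / 2 - 1 / (2 * (⌊x⌋₊ + 2))) := by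
      rw [div_le_iff₀ (by positivity)]
      field_simp
      linarith
    linarith
  · rw [sum_range_succ', h0, add_zero, one_mul]
    simpa [add_comm] using sum_le_card_nsmul (range (n + 1)) _ 1 fun i _ ↦ le_of_abs_le (hχ (i + 1))

theorem dedekindZeta_residue_le_one_add_log (hx : 0 ≤ x) (hχ : ∀ n, |χ n| ≤ 1) (h0 : χ 0 = 0)
    (hcount : ∀ n ≠ 0, (idealCount (𝓞 K) n : ℝ) ≤ ∑ d ∈ n.divisors, χ d)
    (hA : ∀ n : ℕ, ∑ m ∈ range n, ∑ i ∈ range (m + 1), χ i ≤ x / 2 * n) :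
    dedekindZeta_residue K ≤ 1 + log (x + 1) := by
  have hlog : log (⌊x⌋₊ + 1 : ℕ) ≤ log (x + 1) := by
    push_cast
    gcongr
    exact Nat.floor_le hx
  have hfrac : 1 / (2 * (⌊x⌋₊ + 2 : ℝ)) ≤ 1 / 2 := by gcongr; linarith [(⌊x⌋₊).cast_nonneg (α := ℝ)]
  linarith [dedekindZeta_residue_le_harmonic_floor hχ h0 hcount hA,
    harmonic_le_one_add_log (⌊x⌋₊ + 1)]

theorem dedekindZeta_residue_le_log_add (hx : 5 ≤ x) (hχ : ∀ n, |χ n| ≤ 1) (h0 : χ 0 = 0)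
    (hcount : ∀ n ≠ 0, (idealCount (𝓞 K) n : ℝ) ≤ ∑ d ∈ n.divisors, χ d)
    (hA : ∀ n : ℕ, ∑ m ∈ range n, ∑ i ∈ range (m + 1), χ i ≤ x / 2 * n) :
    dedekindZeta_residue K ≤ log (x + 1) + 1 / 4 := by
  have hfloor : 5 ≤ ⌊x⌋₊ := Nat.le_floor (by exact_mod_cast hx)
  have hlog : log (⌊x⌋₊ + 1 : ℕ) ≤ log (x + 1) := by
    push_cast
    gcongr
    exact Nat.floor_le (by linarith)
  have hfrac : 1 / (2 * (⌊x⌋₊ + 2 : ℝ)) ≤ 1 / 14 := by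
    have : (5 : ℝ) ≤ ⌊x⌋₊ := by exact_mod_cast hfloor
    gcongr
    linarith
  linarith [dedekindZeta_residue_le_harmonic_floor hχ h0 hcount hA,
    harmonic_le_log_add (n := ⌊x⌋₊ + 1) (by omega)]

theorem dedekindZeta_residue_le_half_log_add (hx : 5 / 2 ≤ x) (hχ : ∀ n, |χ n| ≤ 1) (h0 : χ 0 = 0)
    (h2 : ∀ n, χ (2 * n) = -χ n)
    (hcount : ∀ n ≠ 0, (idealCount (𝓞 K) n : ℝ) ≤ ∑ d ∈ n.divisors, χ d)
    (hA : ∀ n : ℕ, ∑ m ∈ range n, ∑ i ∈ range (m + 1), χ i ≤ x / 2 * n) :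
    dedekindZeta_residue K ≤ log (2 * x + 1) / 2 + 7 / 12 := by
  have hfloor : 5 ≤ ⌊2 * x⌋₊ := Nat.le_floor (by push_cast; linarith)
  have hlt := Nat.lt_floor_add_one (2 * x)
  have hlog : log (⌊2 * x⌋₊ + 1 : ℕ) ≤ log (2 * x + 1) := by
    push_cast
    gcongr
    exact Nat.floor_le (by linarith)
  have h := dedekindZeta_residue_le_harmonic (δ := 1 / 2) (N := ⌊2 * x⌋₊) hχ h0 hcount
    (fun n ↦ ?_) hA (by nlinarith)
  · have hlast : (x / 2 - (1 + 1 / 2 * ⌊2 * x⌋₊)) / (⌊2 * x⌋₊ + 2 : ℝ) ≤ -(1 / 4) := by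
      rw [div_le_iff₀ (by positivity)]
      linarith
    linarith [harmonic_le_log_add (n := ⌊2 * x⌋₊ + 1) (by omega)]
  · have := sum_range_le_half (fun n ↦ le_of_abs_le (hχ n)) h0 h2 (n + 2)
    push_cast at this
    linarith

end ResidueBounds

section Regulator

theorem one_lt_sqrt_intCast {n : ℤ} (hn : 1 < n) : 1 < √(n : ℝ) := by
  rw [lt_sqrt zero_le_one, one_pow]
  exact_mod_cast hn

theorem log_sub_one_le_abs_log {x c : ℝ} (hx : 0 < x) (hc : 1 < c) (h : c ≤ x + x⁻¹) :
    log (c - 1) ≤ |log x| := by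
  wlog hx1 : 1 ≤ x generalizing x
  · have := this (inv_pos.mpr hx) (by rwa [inv_inv, add_comm])
      ((one_le_inv₀ hx).mpr (not_le.mp hx1).le)
    rwa [log_inv, abs_neg] at this
  · refine (log_le_log (by linarith) ?_).trans (le_abs_self _)
    linarith [inv_le_one_of_one_le₀ hx1]

namespace QuadraticGenerator

variable {R : Type*} [CommRing R] (g : QuadraticGenerator R)

theorem algebraNorm_eq (x : R) :
    Algebra.norm ℤ x = g.basis.repr x 0 ^ 2 + g.trace * g.basis.repr x 0 * g.basis.repr x 1
      + g.norm * g.basis.repr x 1 ^ 2 := by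
  have hmul : x * g.ω = (-g.norm * g.basis.repr x 1) • g.basis 0
      + (g.basis.repr x 0 + g.trace * g.basis.repr x 1) • g.basis 1 := by
    conv_lhs => rw [g.eq_add_mul x]
    rw [g.basis_zero, basis_one, zsmul_eq_mul, zsmul_eq_mul]
    push_cast
    linear_combination (g.basis.repr x 1 : R) * g.sq_ω
  have hrepr := congrArg g.basis.repr hmul
  rw [map_add, map_zsmul, map_zsmul, g.basis.repr_self, g.basis.repr_self] at hrepr
  have hrepr₀ : g.basis.repr (x * g.ω) 0 = -g.norm * g.basis.repr x 1 := by simp [hrepr]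
  have hrepr₁ : g.basis.repr (x * g.ω) 1 = g.basis.repr x 0 + g.trace * g.basis.repr x 1 := by
    simp [hrepr]
  rw [Algebra.norm_eq_matrix_det g.basis, Matrix.det_fin_two]
  simp only [Algebra.leftMulMatrix_eq_repr_mul, g.basis_zero, mul_one, basis_one, hrepr₀, hrepr₁]
  ring

theorem even_repr_one_of_isUnit (hD : g.disc % 8 = 1) {x : R} (hx : IsUnit x) :
    Even (g.basis.repr x 1) := by
  have hodd : Odd g.disc := Int.odd_iff.mpr (by omega)
  have hnorm : Even g.norm := by
    have := g.disc_emod_eight hodd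
    split_ifs at this with h
    · exact h
    · omega
  have hunit : Odd (Algebra.norm ℤ x) := by
    rcases Int.isUnit_iff.mp (hx.map (Algebra.norm ℤ)) with h | h <;> simp [h]
  rw [g.algebraNorm_eq] at hunit
  by_contra hb
  have htrace := Int.not_even_iff_odd.mpr (g.odd_trace hodd)
  simp [hnorm, htrace, hb, parity_simps, ← Int.not_even_iff_odd] at hunit

section

variable {S : Type*} [CommRing S] [IsDomain S] {f f' : R →+* S}

theorem map_ω_add_map_ω (hne : f ≠ f') : f g.ω + f' g.ω = g.trace := by
  have hroot (e : R →+* S) : e g.ω ^ 2 = g.trace * e g.ω - g.norm := by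
    simpa using congrArg e g.sq_ω
  refine mul_left_cancel₀ (sub_ne_zero.mpr fun h ↦ hne (g.ringHom_ext h)) ?_
  linear_combination hroot f - hroot f'

theorem sq_map_sub_map (hne : f ≠ f') (x : R) :
    (f x - f' x) ^ 2 = (g.basis.repr x 1 : S) ^ 2 * g.disc := by
  have hω : (f g.ω - f' g.ω) ^ 2 = g.disc := by
    rw [← g.sq_map_two_mul_ω_sub f, ← g.map_ω_add_map_ω hne]
    ring
  conv_lhs => rw [g.eq_add_mul x]
  simp only [map_add, map_mul, map_intCast]
  linear_combination (g.basis.repr x 1 : S) ^ 2 * hω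

include g in
theorem map_mul_map (hne : f ≠ f') (x : R) : f x * f' x = Algebra.norm ℤ x := by
  have hω : f g.ω * f' g.ω = g.norm := by
    have hroot := congrArg f g.sq_ω
    simp only [map_pow, map_sub, map_mul, map_intCast] at hroot
    linear_combination f g.ω * g.map_ω_add_map_ω hne - hroot
  rw [g.algebraNorm_eq x]
  conv_lhs => rw [g.eq_add_mul x]
  simp only [map_add, map_mul, map_intCast]
  push_cast
  linear_combination (g.basis.repr x 1 : S) ^ 2 * hω
    + (g.basis.repr x 0 : S) * g.basis.repr x 1 * g.map_ω_add_map_ω hne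

end

variable {f f' : R →+* ℝ}

include g in
theorem abs_map_mul_abs_map (hne : f ≠ f') {x : R} (hx : IsUnit x) : |f x| * |f' x| = 1 := by
  rw [← abs_mul, g.map_mul_map hne]
  rcases Int.isUnit_iff.mp (hx.map (Algebra.norm ℤ)) with h | h <;> simp [h]

theorem abs_map_sub_map (hne : f ≠ f') (x : R) :
    |f x - f' x| = |(g.basis.repr x 1 : ℝ)| * √g.disc := by
  rw [← sqrt_sq_eq_abs, g.sq_map_sub_map hne, sqrt_mul (sq_nonneg _), sqrt_sq_eq_abs]

theorem repr_one_ne_zero_of_isUnit (hne : f ≠ f') {x : R} (hx : IsUnit x)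
    (hlog : log (f x) ≠ 0) : g.basis.repr x 1 ≠ 0 := by
  intro h0
  have hmul := g.abs_map_mul_abs_map hne hx
  have heq : |f x - f' x| = 0 := by simp [g.abs_map_sub_map hne, h0]
  rw [← sub_eq_zero.mp (abs_eq_zero.mp heq), ← sq,
    pow_eq_one_iff_of_nonneg (abs_nonneg _) two_ne_zero] at hmul
  exact hlog (by rw [← log_abs, hmul, log_one])

theorem log_abs_repr_one_mul_sqrt_disc_sub_one_le (hne : f ≠ f') (hD : 1 < g.disc) {x : R}
    (hx : IsUnit x) (hx0 : g.basis.repr x 1 ≠ 0) :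
    log (|(g.basis.repr x 1 : ℝ)| * √g.disc - 1) ≤ |log (f x)| := by
  have hmul := g.abs_map_mul_abs_map hne hx
  have hpos : 0 < |f x| := (abs_nonneg _).lt_of_ne fun h ↦ by simp [← h] at hmul
  have hsqrt : 1 < √(g.disc : ℝ) := one_lt_sqrt_intCast hD
  have hone : (1 : ℝ) ≤ |(g.basis.repr x 1 : ℝ)| := by exact_mod_cast Int.one_le_abs hx0
  rw [← log_abs (f x)]
  refine log_sub_one_le_abs_log hpos (by nlinarith) ?_
  calc |(g.basis.repr x 1 : ℝ)| * √g.disc = |f x - f' x| := (g.abs_map_sub_map hne x).symm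
    _ ≤ |f x| + |f' x| := abs_sub _ _
    _ = |f x| + |f x|⁻¹ := by rw [eq_inv_of_mul_eq_one_right hmul]

end QuadraticGenerator

open NumberField InfinitePlace Units

variable {K : Type*} [Field K] [NumberField K]

theorem nrRealPlaces_eq_two_and_nrComplexPlaces_eq_zero (hdeg : Module.finrank ℚ K = 2)
    (hpos : 0 < discr K) : nrRealPlaces K = 2 ∧ nrComplexPlaces K = 0 := by
  have hrank := card_add_two_mul_card_eq_rank K
  have hsign := sign_discr K
  rw [Int.sign_eq_one_of_pos hpos, eq_comm, neg_one_pow_eq_one_iff_even (by norm_num)] at hsign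
  obtain ⟨c, hc⟩ := hsign
  omega

theorem QuadraticGenerator.disc_eq_discr (g : QuadraticGenerator (𝓞 K)) : g.disc = discr K := by
  rw [← g.algebraDiscr_basis, discr_eq_discr]

theorem embedding_comp_algebraMap_injective {w w' : InfinitePlace K} (hw : w.IsReal)
    (hw' : w'.IsReal) (h : (embedding_of_isReal hw).comp (algebraMap (𝓞 K) K) =
      (embedding_of_isReal hw').comp (algebraMap (𝓞 K) K)) : w = w' := by
  have hemb := IsLocalization.ringHom_ext (nonZeroDivisors (𝓞 K)) h
  ext x
  rw [← norm_embedding_of_isReal hw, ← norm_embedding_of_isReal hw', hemb]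

theorem exists_regulator_eq_abs_log (hdeg : Module.finrank ℚ K = 2) (hpos : 0 < discr K) :
    ∃ f f' : 𝓞 K →+* ℝ, f ≠ f' ∧ ∃ u : (𝓞 K)ˣ, regulator K = |log (f u)| := by
  classical
  obtain ⟨hr, hc⟩ := nrRealPlaces_eq_two_and_nrComplexPlaces_eq_zero hdeg hpos
  have hreal : IsTotallyReal K := nrComplexPlaces_eq_zero_iff.mp hc
  have hcard : Fintype.card (InfinitePlace K) = 2 := by
    rw [card_eq_nrRealPlaces_add_nrComplexPlaces, hr, hc]
  have hrank : rank K = 1 := by rw [rank, hcard]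
  obtain ⟨w'⟩ : Nonempty (InfinitePlace K) := inferInstance
  obtain ⟨w, hw, huniv⟩ := (Nat.card_eq_two_iff' w').mp (Nat.card_eq_fintype_card.trans hcard)
  let : Unique {w // w ≠ w'} := ⟨⟨⟨w, hw⟩⟩, fun v ↦ Subtype.ext (huniv v v.2)⟩
  let e : {w // w ≠ w'} ≃ Fin (rank K) := (Equiv.ofUnique _ (Fin 1)).trans (finCongr hrank.symm)
  refine ⟨_, _, mt (embedding_comp_algebraMap_injective (hreal.isReal w) (hreal.isReal w')) hw,
    fundSystem K (e ⟨w, hw⟩), ?_⟩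
  rw [← log_abs, RingHom.comp_apply, ← norm_eq_abs (embedding_of_isReal _ _),
    norm_embedding_of_isReal, regulator_eq_det K w' e, Matrix.det_unique]
  simp only [Matrix.of_apply, IsTotallyReal.mult_eq, Nat.cast_one, one_mul]
  rfl

theorem exists_log_le_regulator (hdeg : Module.finrank ℚ K = 2) (hD : 1 < discr K) :
    ∃ b : ℤ, b ≠ 0 ∧ (discr K % 8 = 1 → Even b) ∧
      log (|(b : ℝ)| * √(discr K) - 1) ≤ regulator K := by
  obtain ⟨f, f', hne, u, hreg⟩ := exists_regulator_eq_abs_log hdeg (by linarith)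
  obtain ⟨g⟩ := QuadraticGenerator.nonempty_of_finrank_eq_two (𝓞 K)
    ((RingOfIntegers.rank K).trans hdeg)
  have hb := g.repr_one_ne_zero_of_isUnit hne u.isUnit fun h ↦
    regulator_ne_zero K (by rw [hreg, h, abs_zero])
  rw [← g.disc_eq_discr] at hD ⊢
  refine ⟨_, hb, fun hD8 ↦ g.even_repr_one_of_isUnit hD8 u.isUnit, ?_⟩
  exact hreg ▸ g.log_abs_repr_one_mul_sqrt_disc_sub_one_le hne hD u.isUnit hb

theorem log_sqrt_discr_sub_one_le_regulator (hdeg : Module.finrank ℚ K = 2) (hD : 1 < discr K) :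
    log (√(discr K) - 1) ≤ regulator K := by
  obtain ⟨b, hb, -, hle⟩ := exists_log_le_regulator hdeg hD
  have hsqrt : 1 < √(discr K : ℝ) := one_lt_sqrt_intCast hD
  have hone : (1 : ℝ) ≤ |(b : ℝ)| := by exact_mod_cast Int.one_le_abs hb
  exact (log_le_log (by linarith) (by nlinarith)).trans hle

theorem log_two_mul_sqrt_discr_sub_one_le_regulator (hdeg : Module.finrank ℚ K = 2)
    (hD : 1 < discr K) (hD8 : discr K % 8 = 1) :
    log (2 * √(discr K) - 1) ≤ regulator K := by
  obtain ⟨b, hb, heven, hle⟩ := exists_log_le_regulator hdeg hD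
  have hsqrt : 1 < √(discr K : ℝ) := one_lt_sqrt_intCast hD
  have htwo : (2 : ℝ) ≤ |(b : ℝ)| := by
    exact_mod_cast Int.le_of_dvd (abs_pos.mpr hb) ((dvd_abs _ _).mpr (heven hD8).two_dvd)
  exact (log_le_log (by linarith) (by gcongr)).trans hle

end Regulator

section ClassNumber

open NumberField InfinitePlace Units Finset

theorem torsionOrder_le_two_of_nrRealPlaces_ne_zero (K : Type*) [Field K] [NumberField K]
    (h : nrRealPlaces K ≠ 0) : torsionOrder K ≤ 2 := by
  by_contra! hlt
  obtain ⟨ζ, hζ⟩ : ∃ ζ : torsion K, orderOf ζ = torsionOrder K := by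
    rw [torsionOrder]
    exact IsCyclic.exists_ofOrder_eq_natCard
  rw [← IsPrimitiveRoot.iff_orderOf, ← IsPrimitiveRoot.coe_submonoidClass_iff,
    ← IsPrimitiveRoot.coe_units_iff] at hζ
  exact h (IsPrimitiveRoot.nrRealPlaces_eq_zero_of_two_lt hlt
    (hζ.map_of_injective (FaithfulSMul.algebraMap_injective (𝓞 K) K)))

theorem abs_jacobiSym_le_one (a : ℤ) (b : ℕ) : |(jacobiSym a b : ℝ)| ≤ 1 := by
  rcases jacobiSym.trichotomy a b with h | h | h <;> simp [h]

theorem jacobiSym_two_mul_of_mod_eight_eq_five {k : ℕ} (hk : k % 8 = 5) (a : ℤ) :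
    jacobiSym (2 * a) k = -jacobiSym a k := by
  have htwo : jacobiSym 2 k = -1 := by
    rw [jacobiSym.at_two (Nat.odd_iff.mpr (by omega)), ZMod.χ₈_nat_eq_if_mod_eight]
    split_ifs <;> omega
  rw [jacobiSym.mul_left, htwo, neg_one_mul]

variable {K : Type*} [Field K] [NumberField K] {k : ℕ}

theorem squarefree_of_discr_eq (hdeg : Module.finrank ℚ K = 2) (hdisc : discr K = k)
    (hodd : Odd k) : Squarefree k := by
  obtain ⟨g⟩ := QuadraticGenerator.nonempty_of_finrank_eq_two (𝓞 K)
    ((RingOfIntegers.rank K).trans hdeg)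
  exact g.squarefree_disc (g.disc_eq_discr.trans hdisc) hodd

theorem mod_four_of_discr_eq (hdeg : Module.finrank ℚ K = 2) (hdisc : discr K = k)
    (hodd : Odd k) : k % 4 = 1 := by
  obtain ⟨g⟩ := QuadraticGenerator.nonempty_of_finrank_eq_two (𝓞 K)
    ((RingOfIntegers.rank K).trans hdeg)
  have hg : g.disc = k := g.disc_eq_discr.trans hdisc
  have := g.disc_emod_four (hg ▸ (Int.odd_coe_nat k).mpr hodd)
  omega

theorem idealCount_ringOfIntegers_le_sum_jacobiSym (hdeg : Module.finrank ℚ K = 2)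
    (hdisc : discr K = k) (hodd : Odd k) (hk1 : 1 < k) {n : ℕ} (hn : n ≠ 0) :
    (idealCount (𝓞 K) n : ℝ) ≤ ∑ d ∈ n.divisors, (jacobiSym d k : ℝ) := by
  obtain ⟨g⟩ := QuadraticGenerator.nonempty_of_finrank_eq_two (𝓞 K)
    ((RingOfIntegers.rank K).trans hdeg)
  exact_mod_cast g.idealCount_le_sum_jacobiSym (g.disc_eq_discr.trans hdisc) hodd hk1 hn

theorem sum_range_sum_jacobiSym_discr_le (hdeg : Module.finrank ℚ K = 2) (hdisc : discr K = k)
    (hodd : Odd k) (hk1 : 1 < k) (n : ℕ) :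
    ∑ m ∈ range n, ∑ i ∈ range (m + 1), (jacobiSym i k : ℝ) ≤ √k / 2 * n :=
  sum_range_sum_jacobiSym_le (squarefree_of_discr_eq hdeg hdisc hodd)
    (mod_four_of_discr_eq hdeg hdisc hodd) hk1.ne' n

theorem two_mul_regulator_mul_classNumber_le (hdeg : Module.finrank ℚ K = 2)
    (hpos : 0 < discr K) :
    2 * (regulator K * classNumber K) ≤ √(discr K) * dedekindZeta_residue K := by
  obtain ⟨hr, hc⟩ := nrRealPlaces_eq_two_and_nrComplexPlaces_eq_zero hdeg hpos
  have hw : (torsionOrder K : ℝ) ≤ 2 := by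
    exact_mod_cast torsionOrder_le_two_of_nrRealPlaces_ne_zero K (by omega)
  have hw0 : (0 : ℝ) < torsionOrder K := by exact_mod_cast torsionOrder_pos K
  have hs : 0 < √(discr K : ℝ) := sqrt_pos.mpr (by exact_mod_cast hpos)
  have hR := regulator_pos K
  rw [dedekindZeta_residue_def, hr, hc, abs_of_pos (Int.cast_pos.mpr hpos), pow_zero, mul_one,
    mul_comm (torsionOrder K : ℝ), ← mul_div_assoc, mul_div_mul_left _ _ hs.ne', le_div_iff₀ hw0]
  have : 0 ≤ regulator K * classNumber K := by positivity
  nlinarith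

theorem log_add_one_add_quarter_le {x : ℝ} (hx : 4 ≤ x) :
    log (x + 1) + 1 / 4 ≤ log (2 * x - 1) := by
  have h := one_sub_inv_le_log_of_pos (x := (2 * x - 1) / (x + 1))
    (div_pos (by linarith) (by linarith))
  rw [log_div (by linarith) (by linarith), inv_div] at h
  have : (x + 1) / (2 * x - 1) ≤ 3 / 4 := by
    rw [div_le_iff₀ (by linarith)]
    linarith
  linarith

theorem half_log_add_le_log_sub_one {x : ℝ} (hx : 11 ≤ x) :
    log (2 * x + 1) / 2 + 7 / 12 ≤ log (x - 1) := by
  have h : log (2 ^ 2 * (2 * x + 1)) ≤ log ((x - 1) ^ 2) :=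
    log_le_log (by linarith) (by nlinarith)
  rw [log_mul (by norm_num) (by linarith), log_pow, log_pow] at h
  push_cast at h
  linarith [log_two_gt_d9]

theorem dedekindZeta_residue_le_regulator (hdeg : Module.finrank ℚ K = 2) (hdisc : discr K = k)
    (hodd : Odd k) (hk : 11 ≤ √(k : ℝ)) : dedekindZeta_residue K ≤ regulator K := by
  have hk1 : 1 < k := by
    have : (11 : ℝ) ^ 2 ≤ k := (le_sqrt' (by norm_num)).mp hk
    exact_mod_cast (by linarith : (1 : ℝ) < k)
  have hD1 : 1 < discr K := by rw [hdisc]; exact_mod_cast hk1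
  have hχ (n : ℕ) := abs_jacobiSym_le_one n k
  have h0 : (jacobiSym (0 : ℕ) k : ℝ) = 0 := by simp [jacobiSym.zero_left hk1]
  have hcount (n : ℕ) (hn : n ≠ 0) :=
    idealCount_ringOfIntegers_le_sum_jacobiSym hdeg hdisc hodd hk1 hn
  have hA := sum_range_sum_jacobiSym_discr_le hdeg hdisc hodd hk1
  have hmod : k % 8 = 1 ∨ k % 8 = 5 := by
    have := mod_four_of_discr_eq hdeg hdisc hodd
    omega
  rcases hmod with hmod | hmod
  · have hR := log_two_mul_sqrt_discr_sub_one_le_regulator hdeg hD1 (by omega)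
    rw [hdisc, Int.cast_natCast] at hR
    exact (dedekindZeta_residue_le_log_add (by linarith) hχ h0 hcount hA).trans
      ((log_add_one_add_quarter_le (by linarith)).trans hR)
  · have hR := log_sqrt_discr_sub_one_le_regulator hdeg hD1
    rw [hdisc, Int.cast_natCast] at hR
    refine (dedekindZeta_residue_le_half_log_add (by linarith) hχ h0 (fun n ↦ ?_) hcount hA).trans
      ((half_log_add_le_log_sub_one hk).trans hR)
    exact_mod_cast jacobiSym_two_mul_of_mod_eight_eq_five hmod n

theorem classNumber_le_half_sqrt (hdeg : Module.finrank ℚ K = 2) (hdisc : discr K = k)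
    (hodd : Odd k) (hk : 11 ≤ √(k : ℝ)) : (classNumber K : ℝ) ≤ √k / 2 := by
  have hclass := two_mul_regulator_mul_classNumber_le hdeg (by rw [hdisc]; exact_mod_cast hodd.pos)
  have hres := dedekindZeta_residue_le_regulator hdeg hdisc hodd hk
  have hR := regulator_pos K
  rw [hdisc, Int.cast_natCast] at hclass
  refine le_of_mul_le_mul_left ?_ (by positivity : 0 < 2 * regulator K)
  nlinarith

theorem classNumber_eq_one_of_discr_lt_sixteen (hdeg : Module.finrank ℚ K = 2)
    (hpos : 0 < discr K) (hlt : discr K < 16) : classNumber K = 1 := by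
  rw [classNumber_eq_one_iff]
  apply RingOfIntegers.isPrincipalIdealRing_of_abs_discr_lt
  have hlt' : (discr K : ℝ) < 16 := by exact_mod_cast hlt
  rw [abs_of_pos hpos, (nrRealPlaces_eq_two_and_nrComplexPlaces_eq_zero hdeg hpos).2, hdeg]
  norm_num [Nat.factorial]
  linarith

theorem classNumber_le_of_sqrt_lt_eleven (hdeg : Module.finrank ℚ K = 2) (hdisc : discr K = k)
    (hodd : Odd k) (hk : √(k : ℝ) < 11) : (classNumber K : ℝ) ≤ 21 := by
  have hpos : 0 < discr K := by rw [hdisc]; exact_mod_cast hodd.pos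
  rcases lt_or_ge k 16 with hk16 | hk16
  · rw [classNumber_eq_one_of_discr_lt_sixteen hdeg hpos (by omega)]
    norm_num
  have hk1 : 1 < k := by omega
  have hsqrt : 4 ≤ √(k : ℝ) := le_sqrt_of_sq_le (by norm_num; exact_mod_cast hk16)
  have hres : dedekindZeta_residue K ≤ 1 + 4 * log 2 := by
    refine (dedekindZeta_residue_le_one_add_log (sqrt_nonneg k)
      (fun n ↦ abs_jacobiSym_le_one n k) (by simp [jacobiSym.zero_left hk1])
      (fun _ ↦ idealCount_ringOfIntegers_le_sum_jacobiSym hdeg hdisc hodd hk1)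
      (sum_range_sum_jacobiSym_discr_le hdeg hdisc hodd hk1)).trans ?_
    have h16 : log (√k + 1) ≤ log (2 ^ 4) := log_le_log (by positivity) (by linarith)
    rw [log_pow] at h16
    push_cast at h16
    linarith
  have hR : 1 ≤ regulator K := by
    have h := log_sqrt_discr_sub_one_le_regulator hdeg (by rw [hdisc]; exact_mod_cast hk1)
    rw [hdisc, Int.cast_natCast] at h
    refine ((le_log_iff_exp_le (by linarith)).mpr ?_).trans h
    linarith [exp_one_lt_three]
  have hclass := two_mul_regulator_mul_classNumber_le hdeg hpos
  rw [hdisc, Int.cast_natCast] at hclass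
  have hle : (classNumber K : ℝ) ≤ regulator K * classNumber K :=
    le_mul_of_one_le_left (Nat.cast_nonneg _) hR
  have hprod : √k * dedekindZeta_residue K ≤ 11 * (1 + 4 * log 2) :=
    mul_le_mul hk.le hres (dedekindZeta_residue_pos K).le (by norm_num)
  linarith [log_two_lt_d9]

theorem forty_three_le_log {x : ℝ} (hx : 9.8e18 ≤ x) : 43 ≤ log x := by
  have h : log (2 ^ 63) ≤ log x := log_le_log (by positivity) (le_trans (by norm_num) hx)
  rw [log_pow] at h
  push_cast at h
  linarith [log_two_gt_d9]

end ClassNumber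

theorem auxiliary_class_number_bound_general {x : ℝ} (hx : 9.8e18 ≤ x) {k : ℕ} (hodd : Odd k)
    (hksize : (k : ℝ) ≤ 1.62 * log x ^ 2) {K : Type*} [Field K] [NumberField K]
    (hdeg : Module.finrank ℚ K = 2) (hdisc : NumberField.discr K = k) :
    (NumberField.classNumber K : ℝ) ≤ 0.64 * log x := by
  have hlog := forty_three_le_log hx
  rcases lt_or_ge √(k : ℝ) 11 with hk | hk
  · linarith [classNumber_le_of_sqrt_lt_eleven hdeg hdisc hodd hk]
  · have hsqrt : √(k : ℝ) ≤ 1.28 * log x := by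
      refine sqrt_le_iff.mpr ⟨by positivity, hksize.trans ?_⟩
      nlinarith
    linarith [classNumber_le_half_sqrt hdeg hdisc hodd hk]

/-- **Lemma (class number of the auxiliary real quadratic field).** Let `d < 0` be an
integer with `|d| ≥ 9.8·10^18`, and let `q₁, q₂` be distinct odd primes with
`k = q₁·q₂ ≡ 1 (mod 4)` and `k ≤ 1.62·(log |d|)²`. Then the class number of the real
quadratic field `ℚ(√k)` (of discriminant `k`) is at most `0.64·log |d|`. -/
theorem auxiliary_class_number_bound
    (d : ℤ) (hd : d < 0) (hsize : (|d| : ℝ) ≥ 9.8e18)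
    (q₁ q₂ : ℕ) (hq₁ : q₁.Prime) (hq₂ : q₂.Prime)
    (hodd₁ : Odd q₁) (hodd₂ : Odd q₂) (hne : q₁ ≠ q₂)
    (k : ℕ) (hk : k = q₁ * q₂) (hk4 : k % 4 = 1)
    (hksize : (k : ℝ) ≤ 1.62 * (Real.log |(d : ℝ)|) ^ 2)
    (K : Type*) [Field K] [NumberField K]
    (hdeg : Module.finrank ℚ K = 2)
    (hdisc : NumberField.discr K = (k : ℤ)) :
    (NumberField.classNumber K : ℝ) ≤ 0.64 * Real.log |(d : ℝ)| :=
  auxiliary_class_number_bound_general (by exact_mod_cast hsize) (hk ▸ hodd₁.mul hodd₂) hksize hdeg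
    hdisc
end

section
/- Let d < 0 be an integer with |d| ≥ 9.8·10^18, and let q₁, q₂ be distinct odd primes with k = q₁·q₂ ≡ 1 (mod 4) and k ≤ 1.62·(log|d|)². Then the regulator log ε of the real quadratic field ℚ(√k), where ε is its fundamental unit, satisfies log ε ≤ 1.69·log|d|·log log|d|. -/
open Real

/-!
The pairs `(a, b)` for which `(b + √D) / (2a)` is a reduced quadratic irrational of discriminant `D`
are permuted by the continued fraction algorithm, and the product of these irrationals over a cycle
is a unit greater than `1`, so the sum of their logarithms bounds the regulator. Each of them is at
most `√D / a`. Since `D` is fundamental, at most `τ(a)` of the pairs have first coordinate `a`: the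
congruence `b² ≡ D (mod 4a)` behaves as for squarefree `a`. Finally
`∑ τ(a) log (√D / a) ≤ √D log √D + 1` over `a ≤ √D`, by exchanging the order of summation.
-/

/-! ### Divisor sums of logarithms -/

theorem mul_log_sub_add_one_le_log_factorial {N : ℕ} (hN : 1 ≤ N) :
    N * log N - N + 1 ≤ log N.factorial := by
  induction N, hN using Nat.le_induction with
  | base => simp
  | succ N hN ih =>
    have hN0 : (0 : ℝ) < N := by exact_mod_cast hN
    have hstep : N * (log (N + 1) - log N) ≤ 1 := by
      calc N * (log (N + 1) - log N) = N * log ((N + 1) / N) := by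
            rw [log_div (by positivity) hN0.ne']
        _ ≤ N * ((N + 1) / N - 1) := by
            gcongr
            exact log_le_sub_one_of_pos (by positivity)
        _ = 1 := by field_simp; ring
    rw [Nat.factorial_succ]
    push_cast
    rw [log_mul (by positivity) (by positivity)]
    linarith

theorem sum_log_div_le {z : ℝ} (hz : 1 ≤ z) :
    ∑ n ∈ Finset.Ioc 0 ⌊z⌋₊, log (z / n) ≤ z - 1 := by
  set N := ⌊z⌋₊
  have hz0 : 0 < z := by linarith
  have hN : 1 ≤ N := Nat.le_floor (by exact_mod_cast hz)
  have hN0 : (0 : ℝ) < N := by exact_mod_cast hN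
  have hsum : ∑ n ∈ Finset.Ioc 0 N, log (z / n) = N * log z - log N.factorial := by
    have hterm : ∀ n ∈ Finset.Ioc 0 N, log (z / n) = log z - log n := fun n hn ↦
      log_div hz0.ne' (by exact_mod_cast (Finset.mem_Ioc.mp hn).1.ne')
    have hfactorial : log N.factorial = ∑ n ∈ Finset.Ioc 0 N, log n := by
      rw [← Finset.prod_Ico_id_eq_factorial, Nat.cast_prod, log_prod fun n hn ↦ ?_]
      · rfl
      · exact_mod_cast (Nat.one_le_iff_ne_zero.mp (Finset.mem_Ico.mp hn).1)
    rw [Finset.sum_congr rfl hterm, Finset.sum_sub_distrib, hfactorial]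
    simp
  have hratio : N * log (z / N) ≤ z - N := by
    calc N * log (z / N) ≤ N * (z / N - 1) := by
          gcongr
          exact log_le_sub_one_of_pos (by positivity)
      _ = z - N := by field_simp
  rw [log_div hz0.ne' hN0.ne'] at hratio
  linarith [mul_log_sub_add_one_le_log_factorial hN]

theorem sum_Ioc_card_divisors_nsmul {M : Type*} [AddCommMonoid M] (f : ℕ → M) (N : ℕ) :
    ∑ a ∈ Finset.Ioc 0 N, a.divisors.card • f a =
      ∑ m ∈ Finset.Ioc 0 N, ∑ n ∈ Finset.Ioc 0 (N / m), f (m * n) := by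
  simp_rw [← Finset.sum_const]
  rw [Finset.sum_comm' (t' := Finset.Ioc 0 N) (s' := fun m ↦ {a ∈ Finset.Ioc 0 N | m ∣ a})]
  · refine Finset.sum_congr rfl fun m hm ↦ ?_
    have hm0 : 0 < m := (Finset.mem_Ioc.mp hm).1
    refine Finset.sum_nbij' (· / m) (m * ·) ?_ ?_ ?_ ?_ ?_ <;>
      simp only [Finset.mem_filter, Finset.mem_Ioc]
    · rintro _ ⟨⟨hpos, hle⟩, n, rfl⟩
      exact ⟨Nat.div_pos (Nat.le_of_dvd hpos ⟨n, rfl⟩) hm0, Nat.div_le_div_right hle⟩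
    · rintro n ⟨hpos, hle⟩
      exact ⟨⟨Nat.mul_pos hm0 hpos, (Nat.mul_comm m n).trans_le
        ((Nat.le_div_iff_mul_le hm0).mp hle)⟩, m.dvd_mul_right n⟩
    · rintro _ ⟨-, hdvd⟩
      exact Nat.mul_div_cancel' hdvd
    · exact fun n _ ↦ Nat.mul_div_cancel_left n hm0
    · rintro _ ⟨-, hdvd⟩
      rw [Nat.mul_div_cancel' hdvd]
  · intro a m
    simp only [Nat.mem_divisors, Finset.mem_filter, Finset.mem_Ioc]
    constructor
    · rintro ⟨⟨hpos, hle⟩, hdvd, -⟩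
      exact ⟨⟨⟨hpos, hle⟩, hdvd⟩, Nat.pos_of_dvd_of_pos hdvd hpos,
        (Nat.le_of_dvd hpos hdvd).trans hle⟩
    · rintro ⟨⟨ha, hdvd⟩, -⟩
      exact ⟨ha, hdvd, ha.1.ne'⟩

theorem sum_inv_floor_le_one_add_log {y : ℝ} (hy : 1 ≤ y) :
    ∑ m ∈ Finset.Ioc 0 ⌊y⌋₊, (m : ℝ)⁻¹ ≤ 1 + log y := by
  have h := harmonic_floor_le_one_add_log y hy
  rw [harmonic_eq_sum_Icc] at h
  push_cast at h
  exact h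

theorem sum_card_divisors_mul_log_div_le {y : ℝ} (hy : 1 ≤ y) :
    ∑ a ∈ Finset.Ioc 0 ⌊y⌋₊, a.divisors.card * log (y / a) ≤ y * log y + 1 := by
  have hy0 : 0 < y := by linarith
  have hinner : ∀ m ∈ Finset.Ioc 0 ⌊y⌋₊,
      ∑ n ∈ Finset.Ioc 0 (⌊y⌋₊ / m), log (y / (m * n : ℕ)) ≤ y * (m : ℝ)⁻¹ - 1 := by
    intro m hm
    obtain ⟨hm0, hmy⟩ := Finset.mem_Ioc.mp hm
    have hm1 : 1 ≤ y / m :=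
      (one_le_div (by exact_mod_cast hm0)).mpr ((Nat.le_floor_iff hy0.le).mp hmy)
    simp_rw [Nat.cast_mul, ← div_div, ← Nat.floor_div_natCast, ← div_eq_mul_inv]
    exact sum_log_div_le hm1
  calc ∑ a ∈ Finset.Ioc 0 ⌊y⌋₊, a.divisors.card * log (y / a)
      = ∑ m ∈ Finset.Ioc 0 ⌊y⌋₊, ∑ n ∈ Finset.Ioc 0 (⌊y⌋₊ / m), log (y / (m * n : ℕ)) := by
        simp_rw [← nsmul_eq_mul]
        exact sum_Ioc_card_divisors_nsmul (fun a ↦ log (y / a)) _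
    _ ≤ ∑ m ∈ Finset.Ioc 0 ⌊y⌋₊, (y * (m : ℝ)⁻¹ - 1) := Finset.sum_le_sum hinner
    _ = y * ∑ m ∈ Finset.Ioc 0 ⌊y⌋₊, (m : ℝ)⁻¹ - ⌊y⌋₊ := by
        simp [Finset.sum_sub_distrib, Finset.mul_sum]
    _ ≤ y * (1 + log y) - (y - 1) := by
        gcongr
        · exact sum_inv_floor_le_one_add_log hy
        · linarith [Nat.lt_floor_add_one y]
    _ = y * log y + 1 := by ring

/-! ### Fundamental discriminants -/

/-- `D` is a fundamental discriminant: it is congruent to `0` or `1` modulo `4`, and no other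
such integer is a quotient of `D` by a square. The discriminant `1` of `ℚ × ℚ` is included. -/
structure IsFundamentalDiscr (D : ℤ) : Prop where
  mod_four : D % 4 = 0 ∨ D % 4 = 1
  isUnit_of_eq_sq_mul : ∀ n E : ℤ, D = n ^ 2 * E → E % 4 = 0 ∨ E % 4 = 1 → IsUnit n

theorem sq_add_four_mul_mod_four (b c : ℤ) :
    (b ^ 2 + 4 * c) % 4 = 0 ∨ (b ^ 2 + 4 * c) % 4 = 1 := by
  obtain ⟨t, rfl | rfl⟩ := Int.even_or_odd' b
  · left
    ring_nf
    omega
  · right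
    ring_nf
    omega

theorem exists_eq_add_two_mul_of_dvd_sub_sq {D a b c : ℤ} (hb : 4 * a ∣ D - b ^ 2)
    (hc : 4 * a ∣ D - c ^ 2) : ∃ u, c = b + 2 * u ∧ a ∣ u * (u + b) := by
  have hdvd : 4 * a ∣ c ^ 2 - b ^ 2 := by simpa using dvd_sub hb hc
  have heven : Even (c - b) := by
    have h : Even (c ^ 2 - b ^ 2) := even_iff_two_dvd.mpr (dvd_trans ⟨2 * a, by ring⟩ hdvd)
    simpa [Int.even_sub, Int.even_pow] using h
  obtain ⟨u, hu⟩ := heven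
  obtain rfl : c = b + 2 * u := by linear_combination hu
  refine ⟨u, rfl, Int.dvd_of_mul_dvd_mul_left (a := 4) (by norm_num) ?_⟩
  rwa [show 4 * (u * (u + b)) = (b + 2 * u) ^ 2 - b ^ 2 by ring]

namespace IsFundamentalDiscr

variable {D : ℤ}

theorem not_isSquare (hD : IsFundamentalDiscr D) (h1 : D ≠ 1) : ¬ IsSquare D := by
  rintro ⟨m, hm⟩
  have hunit : IsUnit m :=
    hD.isUnit_of_eq_sq_mul m 1 (by rw [hm]; ring) (.inr rfl)
  exact h1 (hm.trans (Int.isUnit_mul_self hunit))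

theorem irrational_sqrt (hD : IsFundamentalDiscr D) (h1 : 1 < D) : Irrational √(D : ℝ) := by
  rw [irrational_sqrt_intCast_iff_of_nonneg (by omega)]
  exact hD.not_isSquare h1.ne'

theorem four_lt (hD : IsFundamentalDiscr D) (h1 : 1 < D) : 4 < D := by
  have hne : D ≠ 4 := fun h ↦ hD.not_isSquare h1.ne' ⟨2, h⟩
  have hmod := hD.mod_four
  omega

theorem isUnit_of_dvd (hD : IsFundamentalDiscr D) {n b : ℤ} (hb : n ∣ b)
    (hn : 4 * n ^ 2 ∣ D - b ^ 2) : IsUnit n := by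
  obtain ⟨b, rfl⟩ := hb
  obtain ⟨m, hm⟩ := hn
  exact hD.isUnit_of_eq_sq_mul n (b ^ 2 + 4 * m) (by linear_combination hm)
    (sq_add_four_mul_mod_four b m)

theorem dvd_sub_of_gcd_eq (hD : IsFundamentalDiscr D) {a b u v : ℤ} (ha : a ≠ 0)
    (hb : 4 * a ∣ D - b ^ 2) (hu : a ∣ u * (u + b)) (hv : a ∣ v * (v + b))
    (h : gcd a u = gcd a v) : a ∣ u - v := by
  obtain ⟨c, hc⟩ := gcd_dvd_left a u
  have hg : gcd a u ≠ 0 := fun h0 ↦ ha (by rw [hc, h0, zero_mul])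
  have hcofactor {w : ℤ} (hw : a ∣ w * (w + b)) (hgw : gcd a u = gcd a w) : c ∣ w + b := by
    have hmul := dvd_gcd_mul_of_dvd_mul hw
    rw [← hgw] at hmul
    nth_rewrite 1 [hc] at hmul
    exact (mul_dvd_mul_iff_left hg).mp hmul
  have hcu := hcofactor hu rfl
  have hcv := hcofactor hv h
  have hgu := gcd_dvd_right a u
  have hcoprime : IsCoprime (gcd a u) c := by
    refine IsRelPrime.isCoprime fun n hng hnc ↦ hD.isUnit_of_dvd (b := b) ?_ (dvd_trans ?_ hb)
    · simpa using dvd_sub (hnc.trans hcu) (hng.trans hgu)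
    · rw [sq, hc]
      exact mul_dvd_mul_left 4 (mul_dvd_mul hng hnc)
  rw [hc]
  refine hcoprime.mul_dvd (dvd_sub hgu (h ▸ gcd_dvd_right a v)) ?_
  simpa using dvd_sub hcu hcv

/-- The roots `b` are told apart by `gcd (a, (b - b₀) / 2)`, for a fixed root `b₀`. -/
theorem card_le_card_divisors (hD : IsFundamentalDiscr D) {a : ℤ} (ha : a ≠ 0) {S : Finset ℤ}
    (hroot : ∀ b ∈ S, 4 * a ∣ D - b ^ 2) (hinj : ∀ b ∈ S, ∀ c ∈ S, 2 * a ∣ b - c → b = c) :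
    S.card ≤ a.natAbs.divisors.card := by
  obtain rfl | ⟨b₀, hb₀⟩ := S.eq_empty_or_nonempty
  · simp
  have hexists : ∀ b ∈ S, ∃ u, b = b₀ + 2 * u ∧ a ∣ u * (u + b₀) := fun b hb ↦
    exists_eq_add_two_mul_of_dvd_sub_sq (hroot b₀ hb₀) (hroot b hb)
  choose! u hu hdvd using hexists
  refine Finset.card_le_card_of_injOn (fun b ↦ Int.gcd a (u b)) (fun b _ ↦ ?_)
    fun b hb c hc hbc ↦ hinj b hb c hc ?_
  · have hgcd : Int.gcd a (u b) ∣ a.natAbs := Nat.gcd_dvd_left _ _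
    simpa [ha] using hgcd
  · have hgcd : gcd a (u b) = gcd a (u c) := by
      simpa only [Int.coe_gcd] using congrArg (Nat.cast : ℕ → ℤ) hbc
    obtain ⟨t, ht⟩ := hD.dvd_sub_of_gcd_eq ha (hroot b₀ hb₀) (hdvd b hb) (hdvd c hc) hgcd
    exact ⟨t, by linear_combination hu b hb - hu c hc + 2 * ht⟩

end IsFundamentalDiscr

/-! ### Reduced pairs and their cycles -/

/-- The pair `(a, b)` stands for the quadratic irrational `(b + √D) / (2a)` of discriminant `D`,
and being reduced means that this number exceeds `1` while its conjugate lies in `(-1, 0)`. -/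
structure IsReducedPair (D : ℤ) (x : ℤ × ℤ) : Prop where
  fst_pos : 0 < x.1
  snd_lt : x.2 < √(D : ℝ)
  sub_lt : √(D : ℝ) - x.2 < 2 * x.1
  lt_add : 2 * x.1 < √(D : ℝ) + x.2
  dvd : 4 * x.1 ∣ D - x.2 ^ 2

/-- The quadratic irrational `(b + s) / (2a)` attached to the pair `(a, b)`, in any field
containing a square root `s` of the discriminant. -/
def pairQuotient {F : Type*} [Field F] (s : F) (x : ℤ × ℤ) : F := (x.2 + s) / (2 * x.1)

/-- The pair of the complete quotient following that of `(a, b)` in its continued fraction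
expansion: if `n` is the integral part of `ξ = (b + √D) / (2a)`, it represents `1 / (ξ - n)`.
The division defining the first component is exact on reduced pairs. -/
noncomputable def nextPair (D : ℤ) (x : ℤ × ℤ) : ℤ × ℤ :=
  let b := 2 * x.1 * ⌊pairQuotient √(D : ℝ) x⌋ - x.2
  ((D - b ^ 2) / (4 * x.1), b)

theorem map_pairQuotient {F G : Type*} [Field F] [Field G] (φ : F →+* G) (s : F) (x : ℤ × ℤ) :
    φ (pairQuotient s x) = pairQuotient (φ s) x := by
  simp only [pairQuotient, map_div₀, map_add, map_mul, map_intCast, map_ofNat]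

namespace IsReducedPair

variable {D : ℤ} {x : ℤ × ℤ}

theorem fst_lt (hx : IsReducedPair D x) : x.1 < √(D : ℝ) := by
  linarith [hx.snd_lt, hx.lt_add]

theorem one_lt_pairQuotient (hx : IsReducedPair D x) : 1 < pairQuotient √(D : ℝ) x := by
  have ha : (0 : ℝ) < x.1 := by exact_mod_cast hx.fst_pos
  rw [pairQuotient, one_lt_div (by positivity)]
  linarith [hx.lt_add]

theorem pairQuotient_le (hx : IsReducedPair D x) : pairQuotient √(D : ℝ) x ≤ √(D : ℝ) / x.1 := by
  have ha : (0 : ℝ) < x.1 := by exact_mod_cast hx.fst_pos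
  calc pairQuotient √(D : ℝ) x ≤ (√(D : ℝ) + √(D : ℝ)) / (2 * x.1) := by
        unfold pairQuotient
        gcongr
        exact hx.snd_lt.le
    _ = √(D : ℝ) / x.1 := by field_simp; ring

theorem snd_nextPair_bounds (hx : IsReducedPair D x) :
    ((nextPair D x).2 : ℝ) ≤ √(D : ℝ) ∧ √(D : ℝ) - (nextPair D x).2 < 2 * x.1 ∧
      2 * x.1 < √(D : ℝ) + (nextPair D x).2 := by
  have ha : (0 : ℝ) < 2 * x.1 := by exact_mod_cast mul_pos two_pos hx.fst_pos
  set n := ⌊pairQuotient √(D : ℝ) x⌋ with hn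
  have hn1 : (1 : ℝ) ≤ n := by
    exact_mod_cast Int.le_floor.mpr (by exact_mod_cast hx.one_lt_pairQuotient.le)
  have hb : ((nextPair D x).2 : ℝ) = 2 * x.1 * n - x.2 := by simp [nextPair, hn]
  have hfloor : n ≤ pairQuotient √(D : ℝ) x := Int.floor_le _
  have hlt : pairQuotient √(D : ℝ) x < n + 1 := Int.lt_floor_add_one _
  rw [pairQuotient, le_div_iff₀ ha] at hfloor
  rw [pairQuotient, div_lt_iff₀ ha] at hlt
  have hmul := mul_le_mul_of_nonneg_left hn1 ha.le
  rw [hb]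
  refine ⟨?_, ?_, ?_⟩ <;> linarith [hx.snd_lt]

theorem four_mul_mul_fst_nextPair (hx : IsReducedPair D x) :
    4 * x.1 * (nextPair D x).1 = D - (nextPair D x).2 ^ 2 := by
  refine Int.mul_ediv_cancel' ?_
  obtain ⟨m, hm⟩ := hx.dvd
  set n := ⌊pairQuotient √(D : ℝ) x⌋
  exact ⟨m + x.2 * n - x.1 * n ^ 2, by linear_combination hm⟩

theorem next (hx : IsReducedPair D x) (hirr : Irrational √(D : ℝ)) :
    IsReducedPair D (nextPair D x) := by
  obtain ⟨hle, hsub, hadd⟩ := hx.snd_nextPair_bounds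
  have hprod := hx.four_mul_mul_fst_nextPair
  have ha : (0 : ℝ) < x.1 := by exact_mod_cast hx.fst_pos
  generalize nextPair D x = y at *
  have hlt : (y.2 : ℝ) < √(D : ℝ) := lt_of_le_of_ne hle fun h ↦ hirr ⟨y.2, by exact_mod_cast h⟩
  have hD : (0 : ℝ) ≤ D := (Real.sqrt_pos.mp (ha.trans hx.fst_lt)).le
  have hprod' : (√(D : ℝ) - y.2) * (√(D : ℝ) + y.2) = 2 * x.1 * (2 * y.1) := by
    have : (4 * x.1 * y.1 : ℝ) = D - y.2 ^ 2 := by exact_mod_cast hprod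
    linear_combination Real.sq_sqrt hD - this
  have hminus : 0 < √(D : ℝ) - y.2 := by linarith
  have hplus : 0 < √(D : ℝ) + y.2 := by linarith
  refine ⟨?_, hlt, ?_, ?_, ⟨x.1, by linear_combination -hprod⟩⟩
  · have : 0 < 2 * (x.1 : ℝ) * (2 * y.1) := hprod' ▸ mul_pos hminus hplus
    have := pos_of_mul_pos_right this (by positivity)
    exact_mod_cast (by linarith : (0 : ℝ) < y.1)
  · refine lt_of_mul_lt_mul_left (a := 2 * (x.1 : ℝ)) ?_ (by positivity)
    rw [← hprod', mul_comm]
    exact mul_lt_mul_of_pos_left hadd hminus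
  · refine lt_of_mul_lt_mul_left (a := 2 * (x.1 : ℝ)) ?_ (by positivity)
    rw [← hprod']
    exact mul_lt_mul_of_pos_right hsub hplus

theorem pairQuotient_mul_nextPair {F : Type*} [Field F] [CharZero F] {s : F} (hs : s ^ 2 = D)
    (hx : IsReducedPair D x) (hirr : Irrational √(D : ℝ)) :
    pairQuotient s x * pairQuotient s (nextPair D x) =
      ⌊pairQuotient √(D : ℝ) x⌋ * pairQuotient s (nextPair D x) + 1 := by
  have ha : (x.1 : F) ≠ 0 := by exact_mod_cast hx.fst_pos.ne'
  have ha' : ((nextPair D x).1 : F) ≠ 0 := by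
    exact_mod_cast (hx.next hirr).fst_pos.ne'
  have hprod : 4 * (x.1 : F) * (nextPair D x).1 = D - (nextPair D x).2 ^ 2 := by
    exact_mod_cast hx.four_mul_mul_fst_nextPair
  have hb : ((nextPair D x).2 : F) = 2 * x.1 * ⌊pairQuotient √(D : ℝ) x⌋ - x.2 := by
    simp [nextPair]
  generalize nextPair D x = y at *
  generalize ⌊pairQuotient √(D : ℝ) x⌋ = n at *
  unfold pairQuotient
  field_simp
  linear_combination hs - hprod + (s + y.2) * hb

theorem finite_setOf (D : ℤ) : {x | IsReducedPair D x}.Finite := by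
  refine ((Set.finite_Icc 0 ⌈√(D : ℝ)⌉).prod
    (Set.finite_Icc (-⌈√(D : ℝ)⌉) ⌈√(D : ℝ)⌉)).subset fun x hx ↦ ?_
  have hceil := Int.le_ceil √(D : ℝ)
  have ha : (0 : ℝ) < x.1 := by exact_mod_cast hx.fst_pos
  refine ⟨⟨hx.fst_pos.le, ?_⟩, ?_, ?_⟩
  · exact_mod_cast hx.fst_lt.le.trans hceil
  · exact_mod_cast (by linarith [hx.lt_add] : -(⌈√(D : ℝ)⌉ : ℝ) ≤ x.2)
  · exact_mod_cast hx.snd_lt.le.trans hceil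

theorem exists_of_mod_four (hmod : D % 4 = 0 ∨ D % 4 = 1) (hD : 4 < D)
    (hirr : Irrational √(D : ℝ)) : ∃ x, IsReducedPair D x := by
  have hs : 2 < √(D : ℝ) := by
    rw [Real.lt_sqrt (by norm_num)]
    exact_mod_cast hD
  set n := ⌊(√(D : ℝ) - (D % 4 : ℤ)) / 2⌋
  have hle : n ≤ (√(D : ℝ) - (D % 4 : ℤ)) / 2 := Int.floor_le _
  have hlt : (√(D : ℝ) - (D % 4 : ℤ)) / 2 < n + 1 := Int.lt_floor_add_one _
  obtain ⟨b, hb⟩ : ∃ b : ℤ, b = 2 * n + D % 4 := ⟨_, rfl⟩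
  have hb' : (b : ℝ) = 2 * n + (D % 4 : ℤ) := by exact_mod_cast hb
  refine ⟨(1, b), one_pos, ?_, ?_, ?_, ?_⟩
  · exact lt_of_le_of_ne (by linarith) fun h ↦ hirr ⟨b, by exact_mod_cast h⟩
  · push_cast
    linarith
  · push_cast
    linarith
  · have hD4 := Int.mul_ediv_add_emod D 4
    have hsq : (D % 4) ^ 2 = D % 4 := by rcases hmod with h | h <;> rw [h] <;> norm_num
    exact ⟨D / 4 - n ^ 2 - n * (D % 4), by subst hb; linear_combination -hD4 - hsq⟩

theorem card_filter_fst_eq_le (hD : IsFundamentalDiscr D) {S : Finset (ℤ × ℤ)}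
    (hS : ∀ x ∈ S, IsReducedPair D x) {a : ℕ} (ha : a ≠ 0) :
    {x ∈ S | x.1.natAbs = a}.card ≤ a.divisors.card := by
  have hmem : ∀ b ∈ {x ∈ S | x.1.natAbs = a}.image Prod.snd, IsReducedPair D (a, b) := by
    intro b hb
    obtain ⟨x, hx, rfl⟩ := Finset.mem_image.mp hb
    obtain ⟨hxS, rfl⟩ := Finset.mem_filter.mp hx
    rw [Int.natAbs_of_nonneg (hS x hxS).fst_pos.le]
    exact hS x hxS
  have hcard := hD.card_le_card_divisors (a := a) (by exact_mod_cast ha)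
    (fun b hb ↦ (hmem b hb).dvd) fun b hb c hc hbc ↦ ?_
  · rwa [Finset.card_image_of_injOn, Int.natAbs_natCast] at hcard
    intro x hx y hy hxy
    have hxa := Finset.mem_filter.mp hx
    have hya := Finset.mem_filter.mp hy
    have hx0 := (hS x hxa.1).fst_pos
    have hy0 := (hS y hya.1).fst_pos
    exact Prod.ext (by omega) hxy
  · have habs : |b - c| < 2 * a := by
      have hb' := hmem b hb
      have hc' := hmem c hc
      rify
      rw [abs_lt]
      have := hb'.sub_lt; have := hb'.snd_lt; have := hc'.sub_lt; have := hc'.snd_lt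
      push_cast at *
      constructor <;> linarith
    exact sub_eq_zero.mp (Int.eq_zero_of_abs_lt_dvd hbc habs)

theorem sum_log_pairQuotient_le (hD : IsFundamentalDiscr D) (hD1 : 1 ≤ D) {S : Finset (ℤ × ℤ)}
    (hS : ∀ x ∈ S, IsReducedPair D x) :
    ∑ x ∈ S, log (pairQuotient √(D : ℝ) x) ≤ √(D : ℝ) * log √(D : ℝ) + 1 := by
  have hmaps : ∀ x ∈ S, x.1.natAbs ∈ Finset.Ioc 0 ⌊√(D : ℝ)⌋₊ := by
    intro x hx
    have hpos := (hS x hx).fst_pos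
    refine Finset.mem_Ioc.mpr ⟨by omega, Nat.le_floor ?_⟩
    rw [Nat.cast_natAbs, abs_of_pos hpos]
    exact (hS x hx).fst_lt.le
  have hterm : ∀ x ∈ S, log (pairQuotient √(D : ℝ) x) ≤ log (√(D : ℝ) / x.1.natAbs) := by
    intro x hx
    rw [Nat.cast_natAbs, abs_of_pos (hS x hx).fst_pos]
    exact log_le_log (one_pos.trans (hS x hx).one_lt_pairQuotient) (hS x hx).pairQuotient_le
  calc ∑ x ∈ S, log (pairQuotient √(D : ℝ) x)
      ≤ ∑ x ∈ S, log (√(D : ℝ) / x.1.natAbs) := Finset.sum_le_sum hterm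
    _ = ∑ a ∈ Finset.Ioc 0 ⌊√(D : ℝ)⌋₊,
          {x ∈ S | x.1.natAbs = a}.card * log (√(D : ℝ) / a) := by
        rw [← Finset.sum_fiberwise_of_maps_to hmaps]
        refine Finset.sum_congr rfl fun a _ ↦ ?_
        rw [← nsmul_eq_mul, ← Finset.sum_const]
        exact Finset.sum_congr rfl fun x hx ↦ by rw [(Finset.mem_filter.mp hx).2]
    _ ≤ ∑ a ∈ Finset.Ioc 0 ⌊√(D : ℝ)⌋₊, a.divisors.card * log (√(D : ℝ) / a) := by
        refine Finset.sum_le_sum fun a ha ↦ ?_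
        obtain ⟨ha0, hale⟩ := Finset.mem_Ioc.mp ha
        gcongr
        · refine log_nonneg ((one_le_div (by exact_mod_cast ha0)).mpr ?_)
          exact (Nat.le_floor_iff (Real.sqrt_nonneg _)).mp hale
        · exact card_filter_fst_eq_le hD hS ha0.ne'
    _ ≤ √(D : ℝ) * log √(D : ℝ) + 1 :=
        sum_card_divisors_mul_log_div_le (Real.one_le_sqrt.mpr (by exact_mod_cast hD1))

end IsReducedPair

open NumberField

theorem exists_mem_periodicPts_of_mapsTo {α : Type*} {f : α → α} {s : Set α} (hs : s.Finite)
    (hne : s.Nonempty) (hf : Set.MapsTo f s s) : ∃ x ∈ s, x ∈ Function.periodicPts f := by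
  obtain ⟨x, hx⟩ := hne
  obtain ⟨i, j, hij, h⟩ := hs.exists_lt_map_eq_of_forall_mem (f := fun i ↦ f^[i] x)
    fun i ↦ hf.iterate i hx
  refine ⟨f^[i] x, hf.iterate i hx, Function.mk_mem_periodicPts (Nat.sub_pos_of_lt hij) ?_⟩
  rw [Function.IsPeriodicPt, Function.IsFixedPt, ← Function.iterate_add_apply,
    Nat.sub_add_cancel hij.le]
  exact h.symm

theorem exists_convergent_matrix {R : Type*} [CommRing R] (ξ : ℕ → R)
    (hξ : ∀ i, ∃ n : ℤ, ξ i * ξ (i + 1) = n * ξ (i + 1) + 1) (j : ℕ) :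
    ∃ p q r t : ℤ, (p * t - q * r) ^ 2 = 1 ∧
      p * ξ j + q = (∏ i ∈ Finset.range j, ξ (i + 1)) * ξ 0 ∧
      r * ξ j + t = ∏ i ∈ Finset.range j, ξ (i + 1) := by
  induction j with
  | zero => exact ⟨1, 0, 0, 1, by norm_num, by simp, by simp⟩
  | succ j ih =>
    obtain ⟨p, q, r, t, hdet, hnum, hden⟩ := ih
    obtain ⟨n, hn⟩ := hξ j
    refine ⟨p * n + q, p, r * n + t, r, by linear_combination hdet, ?_, ?_⟩
    · rw [Finset.prod_range_succ]
      push_cast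
      linear_combination ξ (j + 1) * hnum - p * hn
    · rw [Finset.prod_range_succ, ← hden]
      push_cast
      linear_combination -r * hn

/-- `1` and `ξ 0` span a lattice that the product maps onto itself. -/
theorem exists_quadratic_eq_of_periodic {R : Type*} [CommRing R] {ξ : ℕ → R} {p : ℕ}
    (hξ : ∀ i, ∃ n : ℤ, ξ i * ξ (i + 1) = n * ξ (i + 1) + 1) (hp : ξ p = ξ 0) :
    ∃ c e : ℤ, e ^ 2 = 1 ∧ (∏ i ∈ Finset.range p, ξ (i + 1)) ^ 2 -
      c * ∏ i ∈ Finset.range p, ξ (i + 1) + e = 0 := by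
  obtain ⟨a, b, c, d, hdet, hnum, hden⟩ := exists_convergent_matrix ξ hξ p
  rw [hp] at hnum hden
  refine ⟨a + d, a * d - b * c, hdet, ?_⟩
  push_cast
  linear_combination -((∏ i ∈ Finset.range p, ξ (i + 1)) - a) * hden - c * hnum

theorem isIntegral_of_quadratic_eq {R : Type*} [CommRing R] {x : R} {c e : ℤ}
    (hx : x ^ 2 - c * x + e = 0) : IsIntegral ℤ x := by
  refine ⟨Polynomial.X ^ 2 - Polynomial.C c * Polynomial.X + Polynomial.C e, by monicity!, ?_⟩
  simpa only [Polynomial.eval₂_add, Polynomial.eval₂_sub, Polynomial.eval₂_mul,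
    Polynomial.eval₂_pow, Polynomial.eval₂_X, Polynomial.eval₂_C, algebraMap_int_eq,
    Int.coe_castRingHom] using hx

theorem exists_units_eq_of_quadratic_eq {K : Type*} [Field K] {η : K} {c e : ℤ} (he : e ^ 2 = 1)
    (hη : η ^ 2 - c * η + e = 0) : ∃ u : (𝓞 K)ˣ, (u : K) = η := by
  have hinv : η * (e * (c - η)) = 1 := by
    have : (e : K) ^ 2 = 1 := by rw [← Int.cast_pow, he, Int.cast_one]
    linear_combination this - e * hη
  let x : 𝓞 K := ⟨η, isIntegral_of_quadratic_eq hη⟩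
  exact ⟨Units.mkOfMulEqOne x (e * (c - x)) (RingOfIntegers.ext hinv), rfl⟩

theorem IsReducedPair.exists_units_eq_prod_cycle {D : ℤ} {K : Type*} [Field K] [CharZero K]
    {s : K} (hs : s ^ 2 = D) {x : ℤ × ℤ} (hirr : Irrational √(D : ℝ)) (hx : IsReducedPair D x) :
    ∃ u : (𝓞 K)ˣ, (u : K) = ∏ i ∈ Finset.range (Function.minimalPeriod (nextPair D) x),
      pairQuotient s ((nextPair D)^[i + 1] x) := by
  have hred (i : ℕ) : IsReducedPair D ((nextPair D)^[i] x) :=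
    Set.MapsTo.iterate (s := {y | IsReducedPair D y}) (fun _ hy ↦ hy.next hirr) i hx
  obtain ⟨c, e, he, hη⟩ := exists_quadratic_eq_of_periodic
    (ξ := fun i ↦ pairQuotient s ((nextPair D)^[i] x)) (p := Function.minimalPeriod (nextPair D) x)
    (fun i ↦ ⟨_, by
      simpa only [Function.iterate_succ_apply'] using (hred i).pairQuotient_mul_nextPair hs hirr⟩)
    (by simp only [Function.iterate_minimalPeriod, Function.iterate_zero_apply])
  exact exists_units_eq_of_quadratic_eq he hη

theorem exists_units_one_lt_log_le {D : ℤ} (hD : IsFundamentalDiscr D) (hD1 : 1 < D) {K : Type*}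
    [Field K] (φ : K →+* ℝ) {s : K} (hs : s ^ 2 = D) (hφ : φ s = √(D : ℝ)) :
    ∃ u : (𝓞 K)ˣ, 1 < φ u ∧ log (φ u) ≤ √(D : ℝ) * log √(D : ℝ) + 1 := by
  have : CharZero K := φ.charZero
  have hirr := hD.irrational_sqrt hD1
  have hmaps : Set.MapsTo (nextPair D) {y | IsReducedPair D y} {y | IsReducedPair D y} :=
    fun _ hy ↦ hy.next hirr
  obtain ⟨x, hx, hper⟩ := exists_mem_periodicPts_of_mapsTo (IsReducedPair.finite_setOf D)
    (IsReducedPair.exists_of_mod_four hD.mod_four (hD.four_lt hD1) hirr) hmaps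
  set p := Function.minimalPeriod (nextPair D) x
  have hred (i : ℕ) : IsReducedPair D ((nextPair D)^[i] x) := hmaps.iterate i hx
  obtain ⟨u, hu⟩ := IsReducedPair.exists_units_eq_prod_cycle hs hirr hx
  have hφu : φ u = ∏ i ∈ Finset.range p, pairQuotient √(D : ℝ) ((nextPair D)^[i + 1] x) := by
    simp_rw [hu, map_prod, map_pairQuotient, hφ, p]
  have hlt (i : ℕ) : 1 < pairQuotient √(D : ℝ) ((nextPair D)^[i] x) :=
    (hred i).one_lt_pairQuotient
  refine ⟨u, ?_, ?_⟩
  · rw [hφu, ← Finset.prod_const_one (s := Finset.range p)]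
    exact Finset.prod_lt_prod_of_nonempty (fun _ _ ↦ one_pos) (fun i _ ↦ hlt (i + 1))
      (Finset.nonempty_range_iff.mpr (Function.minimalPeriod_pos_of_mem_periodicPts hper).ne')
  · have hinj : Set.InjOn (fun i ↦ (nextPair D)^[i + 1] x) (Finset.range p) := by
      simp only [Function.iterate_succ_apply, Finset.coe_range, p]
      rw [← Function.minimalPeriod_apply hper]
      exact Function.iterate_injOn_Iio_minimalPeriod
    rw [hφu, log_prod fun i _ ↦ (one_pos.trans (hlt (i + 1))).ne',
      ← Finset.sum_image (f := fun y ↦ log (pairQuotient √(D : ℝ) y)) hinj]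
    refine IsReducedPair.sum_log_pairQuotient_le hD hD1.le fun y hy ↦ ?_
    obtain ⟨i, -, rfl⟩ := Finset.mem_image.mp hy
    exact hred (i + 1)

/-! ### The discriminant of a quadratic field -/

section QuadraticField

variable {K : Type*} [Field K] [NumberField K]

theorem exists_galois_trace_eq_norm_eq (hdeg : Module.finrank ℚ K = 2) :
    ∃ σ : Gal(K/ℚ), ∀ x : K, algebraMap ℚ K (Algebra.trace ℚ K x) = x + σ x ∧
      algebraMap ℚ K (Algebra.norm ℚ x) = x * σ x := by
  classical
  have : Algebra.IsQuadraticExtension ℚ K := ⟨hdeg⟩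
  have hcard : Nat.card Gal(K/ℚ) = 2 := by rw [IsGalois.card_aut_eq_finrank, hdeg]
  obtain ⟨σ, hσ, hunique⟩ := (Nat.card_eq_two_iff' 1).mp hcard
  have huniv : (Finset.univ : Finset Gal(K/ℚ)) = {1, σ} := by
    ext τ
    simp only [Finset.mem_univ, Finset.mem_insert, Finset.mem_singleton, true_iff]
    exact or_iff_not_imp_left.mpr fun h ↦ hunique τ h
  refine ⟨σ, fun x ↦ ⟨?_, ?_⟩⟩
  · rw [trace_eq_sum_automorphisms, huniv, Finset.sum_pair hσ.symm, AlgEquiv.one_apply]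
  · rw [Algebra.norm_eq_prod_automorphisms, huniv, Finset.prod_pair hσ.symm, AlgEquiv.one_apply]

theorem coe_discr_pair_eq {σ : Gal(K/ℚ)}
    (hσ : ∀ x : K, algebraMap ℚ K (Algebra.trace ℚ K x) = x + σ x) (x y : 𝓞 K) :
    (Algebra.discr ℤ ![x, y] : K) = (x * σ y - σ x * y) ^ 2 := by
  have htrace (z : 𝓞 K) : ((Algebra.trace ℤ (𝓞 K) z : ℤ) : K) = z + σ z := by
    rw [← hσ, ← Algebra.coe_trace_int, map_intCast]
  simp only [Algebra.discr_def, Matrix.det_fin_two, Algebra.traceMatrix_apply,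
    Algebra.traceForm_apply, Matrix.cons_val_zero, Matrix.cons_val_one, Int.cast_sub, Int.cast_mul,
    htrace, map_mul]
  ring

theorem exists_discr_eq_sq_trace_sub_norm (hdeg : Module.finrank ℚ K = 2) :
    ∃ θ : 𝓞 K, discr K = Algebra.trace ℤ (𝓞 K) θ ^ 2 - 4 * Algebra.norm ℤ θ := by
  obtain ⟨σ, hσ⟩ := exists_galois_trace_eq_norm_eq hdeg
  let b := (RingOfIntegers.basis K).reindex (Fintype.equivFinOfCardEq
    ((Module.finrank_eq_card_basis (integralBasis K)).symm.trans hdeg))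
  let θ : 𝓞 K := b 0 * RingOfIntegers.mapAlgEquiv σ (b 1)
  have hθ : (θ : K) = b 0 * σ (b 1) := rfl
  have hσθ : σ θ = σ (b 0) * b 1 := by
    have hinvol : σ (σ (b 1)) = b 1 := by
      have h := congrArg σ (hσ (b 1)).1
      rw [AlgEquiv.commutes, map_add, (hσ _).1] at h
      linear_combination -h
    rw [hθ, map_mul, hinvol]
  have hdiscr : (discr K : K) = (b 0 * σ (b 1) - σ (b 0) * b 1) ^ 2 := by
    have hb : ![b 0, b 1] = b := FinVec.etaExpand_eq b
    have h := coe_discr_pair_eq (fun x ↦ (hσ x).1) (b 0) (b 1)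
    rwa [hb, discr_eq_discr] at h
  obtain ⟨htrace, hnorm⟩ := hσ θ
  rw [← Algebra.coe_trace_int, map_intCast] at htrace
  rw [← Algebra.coe_norm_int, map_intCast] at hnorm
  refine ⟨θ, Int.cast_injective (α := K) ?_⟩
  push_cast
  rw [hdiscr, htrace, hnorm, hσθ, hθ]
  ring

theorem exists_sq_eq_discr_trace_eq_zero (hdeg : Module.finrank ℚ K = 2) :
    ∃ α : K, α ^ 2 = discr K ∧ Algebra.trace ℚ K α = 0 := by
  obtain ⟨θ, hθ⟩ := exists_discr_eq_sq_trace_sub_norm hdeg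
  obtain ⟨σ, hσ⟩ := exists_galois_trace_eq_norm_eq hdeg
  obtain ⟨htrace, hnorm⟩ := hσ θ
  rw [← Algebra.coe_trace_int, map_intCast] at htrace
  rw [← Algebra.coe_norm_int, map_intCast] at hnorm
  refine ⟨θ - σ θ, ?_, ?_⟩
  · rw [hθ]
    push_cast
    rw [htrace, hnorm]
    ring
  · rw [map_sub, Algebra.trace_eq_of_algEquiv, sub_self]

theorem exists_discr_eq_sq_mul_discr {ι : Type*} [Fintype ι] [DecidableEq ι]
    (hcard : Fintype.card ι = Module.finrank ℚ K) (v : ι → 𝓞 K) :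
    ∃ m : ℤ, Algebra.discr ℤ v = m ^ 2 * discr K := by
  let b := (RingOfIntegers.basis K).reindex (Fintype.equivOfCardEq
    ((Module.finrank_eq_card_basis (integralBasis K)).symm.trans hcard.symm))
  refine ⟨(b.toMatrix v).det, ?_⟩
  rw [← discr_eq_discr K b, ← Algebra.discr_of_matrix_vecMul, b.toMatrix_map_vecMul]

theorem exists_discr_one_eq_of_sq_eq (hdeg : Module.finrank ℚ K = 2) {E : ℤ}
    (hmod : E % 4 = 0 ∨ E % 4 = 1) {β : K} (hβ : β ^ 2 = E) (htrace : Algebra.trace ℚ K β = 0) :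
    ∃ ω : 𝓞 K, Algebra.discr ℤ ![1, ω] = E := by
  obtain ⟨c, hc⟩ : 4 ∣ E * (E - 1) := by
    rcases hmod with h | h
    · exact dvd_mul_of_dvd_left (Int.dvd_of_emod_eq_zero h) _
    · exact dvd_mul_of_dvd_right (Int.dvd_self_sub_of_emod_eq h) _
  have hquad : ((E + β) / 2) ^ 2 - E * ((E + β) / 2) + c = 0 := by
    have hc' : (E : K) * (E - 1) = 4 * c := by exact_mod_cast hc
    linear_combination hβ / 4 - hc' / 4
  obtain ⟨ω, hω⟩ : ∃ ω : 𝓞 K, (ω : K) = (E + β) / 2 :=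
    ⟨⟨_, isIntegral_of_quadratic_eq hquad⟩, rfl⟩
  obtain ⟨σ, hσ⟩ := exists_galois_trace_eq_norm_eq hdeg
  have hσβ : σ β = -β := by
    have h := (hσ β).1
    rw [htrace, map_zero] at h
    linear_combination -h
  refine ⟨ω, Int.cast_injective (α := K) ?_⟩
  rw [coe_discr_pair_eq fun x ↦ (hσ x).1, hω]
  simp only [map_one, map_div₀, map_add, map_intCast, map_ofNat, hσβ]
  linear_combination hβ

theorem isFundamentalDiscr_discr (hdeg : Module.finrank ℚ K = 2) :
    IsFundamentalDiscr (discr K) := by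
  refine ⟨?_, fun n E hn hmod ↦ ?_⟩
  · obtain ⟨θ, hθ⟩ := exists_discr_eq_sq_trace_sub_norm hdeg
    rw [hθ, sub_eq_add_neg, ← mul_neg]
    exact sq_add_four_mul_mod_four _ _
  · obtain ⟨hn0, hE0⟩ := mul_ne_zero_iff.mp (hn ▸ discr_ne_zero K)
    have hn0' : (n : K) ^ 2 ≠ 0 := by exact_mod_cast hn0
    obtain ⟨α, hα, htrace⟩ := exists_sq_eq_discr_trace_eq_zero hdeg
    have hβ : ((n : ℚ)⁻¹ • α) ^ 2 = E := by
      rw [smul_pow, hα, hn, Algebra.smul_def]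
      push_cast
      simp [hn0']
    obtain ⟨ω, hω⟩ := exists_discr_one_eq_of_sq_eq hdeg hmod hβ
      (by rw [map_smul, htrace, smul_zero])
    obtain ⟨m, hm⟩ := exists_discr_eq_sq_mul_discr
      ((Fintype.card_fin 2).trans hdeg.symm) ![1, ω]
    rw [hω, hn] at hm
    have hmn : m * n * (m * n) = 1 := mul_right_cancel₀ hE0 (by linear_combination -hm)
    exact IsUnit.of_mul_eq_one (m * (m * n)) (by linear_combination hmn)

/-! ### The regulator -/

open InfinitePlace

theorem regulator_le_mult_mul_log_of_rank_eq_one (hrank : Units.rank K = 1) (w : InfinitePlace K)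
    {u : (𝓞 K)ˣ} (hu : 1 < w u) : Units.regulator K ≤ w.mult * log (w u) := by
  classical
  have hcard : Fintype.card (InfinitePlace K) = 2 := by
    rw [Units.rank] at hrank
    omega
  obtain ⟨w', hw'⟩ := Fintype.exists_ne_of_one_lt_card (by omega) w
  have hsub : Fintype.card {v : InfinitePlace K // v ≠ w'} = 1 := by
    simp [Fintype.card_subtype_compl, hcard]
  have hreg : Units.regOfFamily (fun _ : Fin (Units.rank K) ↦ u) = w.mult * log (w u) := by
    let _ : Unique {v : InfinitePlace K // v ≠ w'} :=
      { default := ⟨w, hw'.symm⟩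
        uniq := fun _ ↦ Fintype.card_le_one_iff.mp hsub.le _ _ }
    rw [Units.regOfFamily_eq_det _ w' (Fintype.equivFinOfCardEq (hsub.trans hrank.symm)),
      Matrix.det_unique]
    exact abs_of_nonneg (mul_nonneg (Nat.cast_nonneg _) (log_nonneg hu.le))
  have hpos : 0 < w.mult * log (w u) := mul_pos (by exact_mod_cast w.mult_pos) (log_pos hu)
  have hR := Units.regulator_pos K
  have hindex := Units.regOfFamily_div_regulator (fun _ : Fin (Units.rank K) ↦ u)
  rw [hreg] at hindex
  have hone : 1 ≤ w.mult * log (w u) / Units.regulator K := by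
    have hindex0 := hindex ▸ div_pos hpos hR
    rw [hindex]
    exact_mod_cast hindex0
  exact (one_le_div hR).mp hone

theorem nrComplexPlaces_eq_zero_and_rank_eq_one (hdeg : Module.finrank ℚ K = 2)
    (hpos : 0 < discr K) : nrComplexPlaces K = 0 ∧ Units.rank K = 1 := by
  have hsign := sign_discr K
  have hdim := card_add_two_mul_card_eq_rank K
  have hsum := card_eq_nrRealPlaces_add_nrComplexPlaces K
  rw [Int.sign_eq_one_of_pos hpos] at hsign
  rw [hdeg] at hdim
  have hne : nrComplexPlaces K ≠ 1 := fun h ↦ by simp [h] at hsign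
  rw [Units.rank]
  omega

theorem exists_sq_eq_discr_map_eq_sqrt (hdeg : Module.finrank ℚ K = 2) (hpos : 0 < discr K)
    (φ : K →+* ℝ) : ∃ α : K, α ^ 2 = discr K ∧ φ α = √(discr K : ℝ) := by
  obtain ⟨α, hα, -⟩ := exists_sq_eq_discr_trace_eq_zero hdeg
  have hsq : φ α ^ 2 = √(discr K : ℝ) ^ 2 := by
    rw [Real.sq_sqrt (by exact_mod_cast hpos.le), ← map_pow, hα, map_intCast]
  rcases sq_eq_sq_iff_eq_or_eq_neg.mp hsq with h | h
  · exact ⟨α, hα, h⟩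
  · exact ⟨-α, by rw [neg_sq, hα], by rw [map_neg, h, neg_neg]⟩

theorem regulator_le_sqrt_discr_mul_log (hdeg : Module.finrank ℚ K = 2) (hpos : 0 < discr K) :
    Units.regulator K ≤ √(discr K : ℝ) * log √(discr K : ℝ) + 1 := by
  obtain ⟨hreal, hrank⟩ := nrComplexPlaces_eq_zero_and_rank_eq_one hdeg hpos
  have : IsTotallyReal K := nrComplexPlaces_eq_zero_iff.mp hreal
  obtain ⟨w⟩ : Nonempty (InfinitePlace K) := inferInstance
  have hw : w.IsReal := IsTotallyReal.isReal w
  obtain ⟨α, hα, hφα⟩ := exists_sq_eq_discr_map_eq_sqrt hdeg hpos (embedding_of_isReal hw)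
  have hone : 1 < discr K := by
    have hgt := abs_discr_gt_two (K := K) (by omega)
    rw [abs_of_pos hpos] at hgt
    omega
  obtain ⟨u, hu, hlog⟩ := exists_units_one_lt_log_le (isFundamentalDiscr_discr hdeg) hone
    (embedding_of_isReal hw) hα hφα
  have hwu : w u = embedding_of_isReal hw u := by
    rw [← norm_embedding_of_isReal hw, Real.norm_of_nonneg (by linarith)]
  have hreg := regulator_le_mult_mul_log_of_rank_eq_one hrank w (hwu ▸ hu)
  rw [mult_isReal ⟨w, hw⟩, Nat.cast_one, one_mul, hwu] at hreg
  exact hreg.trans hlog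

end QuadraticField

theorem sqrt_mul_log_sqrt_add_one_le {k L : ℝ} (hL : 10 ≤ L) (hk : 1 ≤ k)
    (hkL : k ≤ 1.62 * L ^ 2) : √k * log √k + 1 ≤ 1.69 * L * log L := by
  have hs : √k ≤ 1.28 * L := by
    rw [Real.sqrt_le_left (by linarith)]
    nlinarith
  have hlog : log √k ≤ log L + 0.28 := by
    calc log √k ≤ log (1.28 * L) := log_le_log (Real.sqrt_pos.mpr (by linarith)) hs
      _ = log 1.28 + log L := log_mul (by norm_num) (by linarith)
      _ ≤ log L + 0.28 := by linarith [log_le_sub_one_of_pos (x := 1.28) (by norm_num)]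
  have hlogL : 2 ≤ log L := by
    rw [le_log_iff_exp_le (by linarith)]
    calc exp 2 = exp 1 ^ 2 := by rw [← exp_nat_mul]; norm_num
      _ ≤ 3 ^ 2 := by gcongr; exact exp_one_lt_three.le
      _ ≤ L := by linarith
  calc √k * log √k + 1 ≤ 1.28 * L * (log L + 0.28) + 1 := by
        gcongr
        exact log_nonneg (Real.one_le_sqrt.mpr hk)
    _ ≤ 1.69 * L * log L := by nlinarith

theorem ten_le_log_of_le {x : ℝ} (hx : 3 ^ 10 ≤ x) : 10 ≤ log x := by
  rw [le_log_iff_exp_le (by linarith)]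
  calc exp 10 = exp 1 ^ 10 := by rw [← exp_nat_mul]; norm_num
    _ ≤ 3 ^ 10 := by gcongr; exact exp_one_lt_three.le
    _ ≤ x := hx

theorem auxiliary_regulator_bound_general {L : ℝ} (hL : 10 ≤ L)
    (K : Type*) [Field K] [NumberField K] (hdeg : Module.finrank ℚ K = 2) (hpos : 0 < discr K)
    (hsize : (discr K : ℝ) ≤ 1.62 * L ^ 2) : Units.regulator K ≤ 1.69 * L * log L :=
  (regulator_le_sqrt_discr_mul_log hdeg hpos).trans
    (sqrt_mul_log_sqrt_add_one_le hL (by exact_mod_cast hpos) hsize)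

/-- **Lemma (regulator of the auxiliary real quadratic field).** Let `d < 0` be an
integer with `|d| ≥ 9.8·10^18`, and let `q₁, q₂` be distinct odd primes with
`k = q₁·q₂ ≡ 1 (mod 4)` and `k ≤ 1.62·(log |d|)²`. Then the regulator `log ε` of the
real quadratic field `ℚ(√k)` (of discriminant `k`) is at most
`1.69·log |d|·log log |d|`. -/
theorem auxiliary_regulator_bound
    (d : ℤ) (hd : d < 0) (hsize : (|d| : ℝ) ≥ 9.8e18)
    (q₁ q₂ : ℕ) (hq₁ : q₁.Prime) (hq₂ : q₂.Prime)
    (hodd₁ : Odd q₁) (hodd₂ : Odd q₂) (hne : q₁ ≠ q₂)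
    (k : ℕ) (hk : k = q₁ * q₂) (hk4 : k % 4 = 1)
    (hksize : (k : ℝ) ≤ 1.62 * (Real.log |(d : ℝ)|) ^ 2)
    (K : Type*) [Field K] [NumberField K]
    (hdeg : Module.finrank ℚ K = 2)
    (hdisc : NumberField.discr K = (k : ℤ)) :
    NumberField.Units.regulator K ≤
      1.69 * Real.log |(d : ℝ)| * Real.log (Real.log |(d : ℝ)|) := by
  have hL : 10 ≤ log |(d : ℝ)| := ten_le_log_of_le (by norm_num at hsize ⊢; linarith)
  exact auxiliary_regulator_bound_general hL K hdeg (by omega) (by rwa [hdisc, Int.cast_natCast])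
end

section
/- Let d < 0 be a fundamental discriminant with |d| ≥ 9.8·10^18, and let q₁, q₂ be distinct odd primes not dividing d with k = q₁·q₂ ≡ 1 (mod 4) and k ≤ 1.62·(log|d|)². Then the class number of the imaginary quadratic field ℚ(√(kd)) is at most 1.01·√|d|·(log|d|)². -/
open Real

/-!
Every ideal class of a number field `K` of degree `m` contains an ideal whose norm is at most the
Minkowski constant `M`, so the class number is at most the number of nonzero ideals of norm at most
`M`. At most `m` primes of `K` lie above each rational prime; color them injectively with `m`
colors, and split a nonzero ideal `I` into the `m` factors `Iᵢ` composed of the primes of color `i`.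
Since each `Iᵢ` has at most one prime above each rational prime, `N(Iᵢ)` determines `Iᵢ`, and hence
`I` is determined by the factorization `N(I) = ∏ N(Iᵢ)`. The coefficients of the Dedekind zeta
function of `K` are thus dominated by those of `ζ ^ m`, whose sum up to `M` is at most
`M (1 + log M) ^ (m - 1)`. For a quadratic field, `M ≤ (2 / π) √|Δ|`.
-/

section DirichletCoefficients

open Finset
open scoped ArithmeticFunction.zeta

theorem zeta_pow_apply_eq_card_finMulAntidiag (m n : ℕ) :
    (ζ ^ m) n = #(m.finMulAntidiag n) := by
  induction m generalizing n with
  | zero =>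
    rcases eq_or_ne n 1 with rfl | hn
    · simp [Nat.finMulAntidiag_one]
    · simp [Nat.finMulAntidiag_zero_left hn, hn]
  | succ m ih =>
    calc (ζ ^ (m + 1)) n = ∑ x ∈ n.divisorsAntidiagonal, #(m.finMulAntidiag x.2) := by
          rw [pow_succ', ArithmeticFunction.mul_apply]
          refine sum_congr rfl fun x hx => ?_
          rw [ArithmeticFunction.zeta_apply_ne (Nat.left_ne_zero_of_mem_divisorsAntidiagonal hx),
            one_mul, ih]
      _ = #(n.divisorsAntidiagonal.sigma fun x => m.finMulAntidiag x.2) := (card_sigma _ _).symm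
      _ = #((m + 1).finMulAntidiag n) := by
          refine card_nbij' (fun x => Fin.cons x.1.1 x.2)
            (fun f => ⟨(f 0, ∏ i, Fin.tail f i), Fin.tail f⟩) ?_ ?_ ?_ ?_
          · rintro ⟨⟨a, b⟩, f⟩
            simp +contextual [Fin.prod_univ_succ]
          · intro f
            simp only [mem_coe, Nat.mem_finMulAntidiag, Fin.prod_univ_succ, mem_sigma,
              Nat.mem_divisorsAntidiagonal, Fin.tail]
            exact fun ⟨hf, hn⟩ => ⟨⟨hf, hn⟩, trivial, right_ne_zero_of_mul (hf.trans_ne hn)⟩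
          · rintro ⟨⟨a, b⟩, f⟩
            simp +contextual
          · exact fun f _ => Fin.cons_self_tail f

theorem sum_Ioc_zeta_pow_succ_le (m N : ℕ) :
    ((∑ n ∈ Ioc 0 N, (ζ ^ (m + 1)) n : ℕ) : ℝ) ≤ N * (1 + log N) ^ m := by
  induction m generalizing N with
  | zero => simp [-ArithmeticFunction.zeta_apply, ArithmeticFunction.sum_Ioc_zeta]
  | succ m ih =>
    have hterm : ∀ n ∈ Ioc 0 N,
        ((ζ n * ∑ k ∈ Ioc 0 (N / n), (ζ ^ (m + 1)) k : ℕ) : ℝ) ≤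
          N * (1 + log N) ^ m * (n : ℝ)⁻¹ := by
      intro n hn
      obtain ⟨hn0, hnN⟩ := mem_Ioc.1 hn
      have hquot : 0 < N / n := Nat.div_pos hnN hn0
      calc ((ζ n * ∑ k ∈ Ioc 0 (N / n), (ζ ^ (m + 1)) k : ℕ) : ℝ)
          = ((∑ k ∈ Ioc 0 (N / n), (ζ ^ (m + 1)) k : ℕ) : ℝ) := by
            rw [ArithmeticFunction.zeta_apply_ne hn0.ne', one_mul]
        _ ≤ (N / n : ℕ) * (1 + log (N / n : ℕ)) ^ m := ih _
        _ ≤ N / n * (1 + log N) ^ m := by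
            gcongr
            · exact Nat.cast_div_le
            · exact Nat.div_le_self N n
        _ = N * (1 + log N) ^ m * (n : ℝ)⁻¹ := by ring
    have hharmonic : ∑ n ∈ Ioc 0 N, (n : ℝ)⁻¹ ≤ 1 + log N := by
      simpa [harmonic_eq_sum_Icc, ← Icc_add_one_left_eq_Ioc] using harmonic_le_one_add_log N
    calc ((∑ n ∈ Ioc 0 N, (ζ ^ (m + 2)) n : ℕ) : ℝ)
        = ∑ n ∈ Ioc 0 N, ((ζ n * ∑ k ∈ Ioc 0 (N / n), (ζ ^ (m + 1)) k : ℕ) : ℝ) := by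
          rw [pow_succ', ArithmeticFunction.sum_Ioc_mul_eq_sum_sum, Nat.cast_sum]
      _ ≤ ∑ n ∈ Ioc 0 N, N * (1 + log N) ^ m * (n : ℝ)⁻¹ := sum_le_sum hterm
      _ = N * (1 + log N) ^ m * ∑ n ∈ Ioc 0 N, (n : ℝ)⁻¹ := (mul_sum _ _ _).symm
      _ ≤ N * (1 + log N) ^ m * (1 + log N) := by gcongr
      _ = N * (1 + log N) ^ (m + 1) := by ring

end DirichletCoefficients

section PrimesOver

open Ideal

variable {R S : Type*} [CommRing R] [CommRing S] [Algebra R S]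

theorem finite_primesOver [Algebra.QuasiFinite R S] (p : Ideal R) [p.IsPrime] :
    (p.primesOver S).Finite :=
  Finite.of_equiv _ (PrimeSpectrum.primesOverOrderIsoFiber R S p).symm.toEquiv

variable [IsDomain R] [Module.Finite R S] [Module.Flat R S]

theorem ncard_primesOver_le_finrank (p : Ideal R) [p.IsPrime] :
    (p.primesOver S).ncard ≤ Module.finrank R S := by
  have := (finite_primesOver (S := S) p).fintype
  calc (p.primesOver S).ncard = ∑ _q : p.primesOver S, 1 := by
        rw [Finset.sum_const, smul_eq_mul, mul_one, Finset.card_univ, ← Nat.card_eq_fintype_card,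
          Nat.card_coe_set_eq]
    _ ≤ ∑ q : p.primesOver S, q.1.ramificationIdx R * q.1.inertiaDeg R :=
        Finset.sum_le_sum fun q _ => Nat.mul_pos (q.1.ramificationIdx_pos R) (q.1.inertiaDeg_pos R)
    _ = Module.finrank R S := sum_ramification_inertia_eq_finrank p S

variable (R S) in
theorem exists_forall_injOn_primesOver [Nontrivial S] :
    ∃ c : Ideal S → Fin (Module.finrank R S), ∀ p : Ideal R, Set.InjOn c (p.primesOver S) := by
  have : NeZero (Module.finrank R S) := ⟨Module.finrank_pos.ne'⟩
  have hinj (p : Ideal R) :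
      ∃ e : Ideal S → Fin (Module.finrank R S), Set.InjOn e (p.primesOver S) := by
    by_cases hp : p.IsPrime
    · have hcard :
          (p.primesOver S).encard ≤ (Set.univ : Set (Fin (Module.finrank R S))).encard := by
        rw [← (finite_primesOver p).cast_ncard_eq, Set.encard_univ, ENat.card_eq_coe_fintype_card,
          Fintype.card_fin]
        exact_mod_cast ncard_primesOver_le_finrank p
      obtain ⟨e, -, he⟩ := (finite_primesOver p).exists_injOn_of_encard_le hcard
      exact ⟨e, he⟩
    · exact ⟨fun _ => 0, fun P ⟨_, _⟩ => (hp (isPrime_of_liesOver P p)).elim⟩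
  choose e he using hinj
  refine ⟨fun P => e (P.under R) P, fun p P hP Q hQ h => he p hP hQ ?_⟩
  dsimp only at h
  rwa [← hP.2.over, ← hQ.2.over] at h

end PrimesOver

section IdealCount

open Ideal UniqueFactorizationMonoid
open scoped ArithmeticFunction.zeta

variable {S : Type*} [CommRing S] [IsDedekindDomain S]

/-- For a coloring `c` of the ideals of `S`, the largest divisor of `I` all of whose prime factors
have color `i`; by convention it is `1` for `I = ⊥`. -/
noncomputable def colorPart {ι : Type*} [DecidableEq ι] (c : Ideal S → ι) (I : Ideal S) (i : ι) :
    Ideal S :=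
  ((normalizedFactors I).filter (c · = i)).prod

theorem prod_colorPart {ι : Type*} [Fintype ι] [DecidableEq ι] (c : Ideal S → ι) {I : Ideal S}
    (hI : I ≠ ⊥) : ∏ i, colorPart c I i = I := by
  calc ∏ i, colorPart c I i = (∑ i, (normalizedFactors I).filter (c · = i)).prod :=
        (Multiset.prod_sum _ _).symm
    _ = (normalizedFactors I).prod := by
        congr 1
        classical
        ext P
        simp [Multiset.count_sum', Multiset.count_filter]
    _ = I := Ideal.prod_normalizedFactors_eq_self hI

variable [Module.Finite ℤ S]

theorem prime_absNorm_under {P : Ideal S} (hP : Prime P) : (absNorm (P.under ℤ)).Prime := by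
  have := isPrime_of_prime hP
  have : NeZero P := ⟨hP.ne_zero⟩
  exact Nat.absNorm_under_prime P

variable [Module.Free ℤ S]

theorem absNorm_under_dvd_absNorm_iff {P Q : Ideal S} (hP : Prime P) (hQ : Prime Q) :
    absNorm (P.under ℤ) ∣ absNorm Q ↔ P.under ℤ = Q.under ℤ := by
  have := isPrime_of_prime hQ
  rw [← absNorm_pow_inertiaDeg (Q.under ℤ) Q,
    (prime_absNorm_under hP).prime.dvd_pow_iff_dvd (Q.inertiaDeg_pos ℤ).ne',
    Nat.prime_dvd_prime_iff_eq (prime_absNorm_under hP) (prime_absNorm_under hQ)]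
  exact ⟨fun h => by rw [← Int.ideal_span_absNorm_eq_self (P.under ℤ), h,
    Int.ideal_span_absNorm_eq_self], fun h => by rw [h]⟩

open scoped Classical in
theorem factorization_absNorm_multiset_prod {P : Ideal S} (hP : Prime P) {s : Multiset (Ideal S)}
    (hs : ∀ Q ∈ s, Prime Q) (huniq : ∀ Q ∈ s, Q.under ℤ = P.under ℤ → Q = P) :
    (absNorm s.prod).factorization (absNorm (P.under ℤ)) =
      s.count P * (absNorm P).factorization (absNorm (P.under ℤ)) := by
  induction s using Multiset.induction with
  | empty => simp
  | cons Q s ih =>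
    simp only [Multiset.forall_mem_cons] at hs huniq
    have hQ0 : absNorm Q ≠ 0 := absNorm_eq_zero_iff.not.2 hs.1.ne_zero
    have hs0 : absNorm s.prod ≠ 0 := by
      rw [Ne, absNorm_eq_zero_iff]
      exact Multiset.prod_ne_zero fun h => (hs.2 _ h).ne_zero rfl
    rw [Multiset.prod_cons, map_mul, Nat.factorization_mul hQ0 hs0, Finsupp.add_apply,
      ih hs.2 huniq.2]
    rcases eq_or_ne Q P with rfl | hQP
    · rw [Multiset.count_cons_self]
      ring
    · have hdvd : ¬ absNorm (P.under ℤ) ∣ absNorm Q := fun h =>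
        hQP (huniq.1 ((absNorm_under_dvd_absNorm_iff hP hs.1).1 h).symm)
      rw [Nat.factorization_eq_zero_of_not_dvd hdvd, Multiset.count_cons_of_ne hQP.symm, zero_add]

section Coloring

variable {ι : Type*} [DecidableEq ι] {c : Ideal S → ι}

open scoped Classical in
theorem factorization_absNorm_colorPart (hc : ∀ p : Ideal ℤ, Set.InjOn c (p.primesOver S))
    {P : Ideal S} (hP : Prime P) (I : Ideal S) :
    (absNorm (colorPart c I (c P))).factorization (absNorm (P.under ℤ)) =
      (normalizedFactors I).count P * (absNorm P).factorization (absNorm (P.under ℤ)) := by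
  have hprime : ∀ Q ∈ (normalizedFactors I).filter (c · = c P), Prime Q := fun Q hQ =>
    prime_of_normalized_factor Q (Multiset.mem_filter.1 hQ).1
  rw [colorPart, factorization_absNorm_multiset_prod hP hprime,
    Multiset.count_filter_of_pos (p := (c · = c P)) rfl]
  intro Q hQ hunder
  exact hc (P.under ℤ) ⟨isPrime_of_prime (hprime Q hQ), ⟨hunder.symm⟩⟩
    ⟨isPrime_of_prime hP, ⟨rfl⟩⟩ (Multiset.mem_filter.1 hQ).2

theorem injOn_absNorm_colorPart (hc : ∀ p : Ideal ℤ, Set.InjOn c (p.primesOver S)) :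
    Set.InjOn (fun I i => absNorm (colorPart c I i)) {I : Ideal S | I ≠ ⊥} := by
  classical
  intro I hI J hJ h
  rw [← Ideal.prod_normalizedFactors_eq_self hI, ← Ideal.prod_normalizedFactors_eq_self hJ]
  congr 1
  ext P
  by_cases hP : Prime P
  · have hpos : 0 < (absNorm P).factorization (absNorm (P.under ℤ)) :=
      (prime_absNorm_under hP).factorization_pos_of_dvd (absNorm_eq_zero_iff.not.2 hP.ne_zero)
        ((absNorm_under_dvd_absNorm_iff hP hP).2 rfl)
    refine Nat.eq_of_mul_eq_mul_right hpos ?_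
    rw [← factorization_absNorm_colorPart hc hP, ← factorization_absNorm_colorPart hc hP]
    exact congrArg (fun n => n.factorization (absNorm (P.under ℤ))) (congrFun h (c P))
  · rw [Multiset.count_eq_zero_of_notMem fun h => hP (prime_of_normalized_factor P h),
      Multiset.count_eq_zero_of_notMem fun h => hP (prime_of_normalized_factor P h)]

end Coloring

variable (S) in
theorem ncard_absNorm_eq_le_zeta_pow {n : ℕ} (hn : n ≠ 0) :
    {I : Ideal S | absNorm I = n}.ncard ≤ (ζ ^ Module.finrank ℤ S) n := by
  obtain ⟨c, hc⟩ := exists_forall_injOn_primesOver ℤ S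
  have hbot {I : Ideal S} (hI : absNorm I = n) : I ≠ ⊥ := by
    rintro rfl
    exact hn (by simpa using hI.symm)
  rw [zeta_pow_apply_eq_card_finMulAntidiag, ← Set.ncard_coe_finset]
  refine Set.ncard_le_ncard_of_injOn (fun I i => absNorm (colorPart c I i)) (fun I hI => ?_)
    ((injOn_absNorm_colorPart hc).mono fun I => hbot) (Finset.finite_toSet _)
  rw [Finset.mem_coe, Nat.mem_finMulAntidiag, ← map_prod, prod_colorPart c (hbot hI)]
  exact ⟨hI, hn⟩

end IdealCount

section ClassNumber

open NumberField Module
open scoped ArithmeticFunction.zeta nonZeroDivisors Nat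

variable (K : Type*) [Field K] [NumberField K]

/-- The Minkowski constant of `K`: every ideal class of `K` contains an integral ideal of at most
this norm. -/
noncomputable def minkowskiConstant : ℝ :=
  (4 / π) ^ InfinitePlace.nrComplexPlaces K *
    ((finrank ℚ K)! / (finrank ℚ K : ℝ) ^ finrank ℚ K * √|(discr K : ℝ)|)

theorem exists_mk0_eq_and_absNorm_mem_Ioc (C : ClassGroup (𝓞 K)) :
    ∃ I : (Ideal (𝓞 K))⁰, ClassGroup.mk0 I = C ∧
      Ideal.absNorm (I : Ideal (𝓞 K)) ∈ Finset.Ioc 0 ⌊minkowskiConstant K⌋₊ := by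
  obtain ⟨I, hIC, hI⟩ := exists_ideal_in_class_of_norm_le C
  exact ⟨I, hIC, Finset.mem_Ioc.2
    ⟨Ideal.absNorm_pos_of_nonZeroDivisors I, Nat.le_floor (by simpa [minkowskiConstant] using hI)⟩⟩

theorem one_le_minkowskiConstant : 1 ≤ minkowskiConstant K := by
  obtain ⟨I, -, hI⟩ := exists_mk0_eq_and_absNorm_mem_Ioc K 1
  obtain ⟨hpos, hle⟩ := Finset.mem_Ioc.1 hI
  exact (Nat.one_le_floor_iff _).1 (hpos.trans_le hle)

theorem classNumber_le_sum_zeta_pow :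
    classNumber K ≤ ∑ n ∈ Finset.Ioc 0 ⌊minkowskiConstant K⌋₊, (ζ ^ finrank ℚ K) n := by
  classical
  choose f hf hfM using exists_mk0_eq_and_absNorm_mem_Ioc K
  let ideals (n : ℕ) : Finset (Ideal (𝓞 K)) := (Ideal.finite_setOfPred_absNorm_eq n).toFinset
  calc classNumber K = (Finset.univ : Finset (ClassGroup (𝓞 K))).card := rfl
    _ ≤ ((Finset.Ioc 0 ⌊minkowskiConstant K⌋₊).biUnion ideals).card := by
        refine Finset.card_le_card_of_injOn (fun C => (f C : Ideal (𝓞 K))) (fun C _ => ?_)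
          fun C _ C' _ h => by rw [← hf C, ← hf C', Subtype.ext h]
        exact Finset.mem_biUnion.2 ⟨_, hfM C, by simp [ideals]⟩
    _ ≤ ∑ n ∈ Finset.Ioc 0 ⌊minkowskiConstant K⌋₊, (ideals n).card := Finset.card_biUnion_le
    _ ≤ ∑ n ∈ Finset.Ioc 0 ⌊minkowskiConstant K⌋₊, (ζ ^ finrank ℚ K) n := by
        refine Finset.sum_le_sum fun n hn => ?_
        rw [← Set.ncard_eq_toFinset_card _ (Ideal.finite_setOfPred_absNorm_eq n),
          ← RingOfIntegers.rank]
        exact ncard_absNorm_eq_le_zeta_pow (𝓞 K) (Finset.mem_Ioc.1 hn).1.ne'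

theorem classNumber_le_minkowskiConstant_mul_pow :
    (classNumber K : ℝ) ≤
      minkowskiConstant K * (1 + log (minkowskiConstant K)) ^ (finrank ℚ K - 1) := by
  obtain ⟨m, hm⟩ := Nat.exists_eq_succ_of_ne_zero (finrank_pos (R := ℚ) (M := K)).ne'
  set N := ⌊minkowskiConstant K⌋₊
  have hM : 0 ≤ minkowskiConstant K := zero_le_one.trans (one_le_minkowskiConstant K)
  have hN : 0 < N := Nat.floor_pos.2 (one_le_minkowskiConstant K)
  have hNM : (N : ℝ) ≤ minkowskiConstant K := Nat.floor_le hM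
  calc (classNumber K : ℝ) ≤ (∑ n ∈ Finset.Ioc 0 N, (ζ ^ (m + 1)) n : ℕ) := by
        exact_mod_cast hm ▸ classNumber_le_sum_zeta_pow K
    _ ≤ N * (1 + log N) ^ m := sum_Ioc_zeta_pow_succ_le m N
    _ ≤ minkowskiConstant K * (1 + log (minkowskiConstant K)) ^ (finrank ℚ K - 1) := by
        rw [hm, Nat.succ_sub_one]
        gcongr

variable {K}

theorem minkowskiConstant_le_of_finrank_eq_two (hK : finrank ℚ K = 2) :
    minkowskiConstant K ≤ 2 / π * √|(discr K : ℝ)| := by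
  have hplaces : InfinitePlace.nrComplexPlaces K ≤ 1 := by
    have := InfinitePlace.card_add_two_mul_card_eq_rank K
    omega
  have hpow : (4 / π) ^ InfinitePlace.nrComplexPlaces K ≤ 4 / π := by
    simpa using pow_le_pow_right₀ ((one_le_div pi_pos).2 pi_le_four) hplaces
  rw [minkowskiConstant, hK]
  calc _ ≤ 4 / π * ((2 ! : ℝ) / (2 : ℕ) ^ 2 * √|(discr K : ℝ)|) := by gcongr
    _ = 2 / π * √|(discr K : ℝ)| := by norm_num; ring

end ClassNumber

section Numerics

theorem exp_three_lt : exp 3 < 27 :=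
  calc exp 3 = exp 1 ^ 3 := by rw [← exp_nat_mul]; norm_num
    _ < 3 ^ 3 := by gcongr; exact exp_one_lt_three
    _ = 27 := by norm_num

theorem two_div_pi_mul_sqrt_le {x : ℝ} (hx : 1 ≤ x) :
    2 / π * √(1.62 * log x ^ 2 * x) ≤ 0.811 * log x * √x := by
  have hlog : 0 ≤ log x := log_nonneg hx
  have hpi : 2 / π ≤ 0.637 := by
    rw [div_le_iff₀ pi_pos]
    linarith [pi_gt_d4]
  -- `√1.62 ≤ 1.273`, and `0.637 * 1.273 ≤ 0.811`
  calc 2 / π * √(1.62 * log x ^ 2 * x) ≤ 0.637 * √((1.273 * log x) ^ 2 * x) := by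
        gcongr
        nlinarith [sq_nonneg (log x)]
    _ = 0.637 * (1.273 * log x * √x) := by
        rw [sqrt_mul (sq_nonneg _), sqrt_sq (by positivity)]
    _ ≤ 0.811 * log x * √x := by nlinarith [mul_nonneg hlog (sqrt_nonneg x)]

theorem mul_one_add_log_le {x : ℝ} (hx : exp 3 ≤ x) :
    0.811 * log x * √x * (1 + log (0.811 * log x * √x)) ≤ 1.01 * √x * log x ^ 2 := by
  have hx0 : 0 < x := (exp_pos 3).trans_le hx
  have hL : 3 ≤ log x := (le_log_iff_exp_le hx0).2 hx
  -- `log t ≤ t - 1` is too weak at `t = 0.811 * log x`, so it is applied to half this value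
  have hlog : log (0.811 * log x) ≤ 0.811 * log x / 2 - 1 + log 2 := by
    have h := log_le_sub_one_of_pos (show 0 < 0.811 * log x / 2 by positivity)
    rw [log_div (by positivity) two_ne_zero] at h
    linarith
  have hlog_mul : 1 + log (0.811 * log x * √x) ≤ 1.01 / 0.811 * log x := by
    rw [log_mul (by positivity) (by positivity), log_sqrt hx0.le]
    linarith [log_two_lt_d9]
  calc 0.811 * log x * √x * (1 + log (0.811 * log x * √x))
      ≤ 0.811 * log x * √x * (1.01 / 0.811 * log x) := by gcongr
    _ = 1.01 * √x * log x ^ 2 := by ring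

end Numerics

open NumberField in
theorem class_number_kd_bound_general {K : Type*} [Field K] [NumberField K]
    (hK : Module.finrank ℚ K = 2) {x : ℝ} (hx : exp 3 ≤ x)
    (hdisc : |(discr K : ℝ)| ≤ 1.62 * log x ^ 2 * x) :
    (classNumber K : ℝ) ≤ 1.01 * √x * log x ^ 2 := by
  have hM : minkowskiConstant K ≤ 0.811 * log x * √x :=
    calc minkowskiConstant K
        ≤ 2 / π * √|(discr K : ℝ)| := minkowskiConstant_le_of_finrank_eq_two hK
      _ ≤ 2 / π * √(1.62 * log x ^ 2 * x) := by gcongr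
      _ ≤ 0.811 * log x * √x := two_div_pi_mul_sqrt_le ((one_le_exp zero_le_three).trans hx)
  have hM1 := one_le_minkowskiConstant K
  have hlog : 0 ≤ log (minkowskiConstant K) := log_nonneg hM1
  calc (classNumber K : ℝ) ≤ minkowskiConstant K * (1 + log (minkowskiConstant K)) := by
        simpa [hK] using classNumber_le_minkowskiConstant_mul_pow K
    _ ≤ 0.811 * log x * √x * (1 + log (0.811 * log x * √x)) := by
        have : 0 ≤ 0.811 * log x * √x := by linarith
        gcongr
    _ ≤ 1.01 * √x * log x ^ 2 := mul_one_add_log_le hx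

/-- **Lemma (class number of `ℚ(√(kd))`).** Let `d < 0` be a fundamental discriminant
with `|d| ≥ 9.8·10^18`, and let `q₁, q₂` be distinct odd primes not dividing `d` with
`k = q₁·q₂ ≡ 1 (mod 4)` and `k ≤ 1.62·(log |d|)²`. Then the class number of the
imaginary quadratic field `ℚ(√(kd))` (of discriminant `k·d`) is at most
`1.01·√|d|·(log |d|)²`. -/
theorem class_number_kd_bound
    (d : ℤ) (hd : d < 0)
    (K : Type*) [Field K] [NumberField K]
    (hdeg : Module.finrank ℚ K = 2)
    (hdisc : NumberField.discr K = d)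
    (hsize : (|d| : ℝ) ≥ 9.8e18)
    (q₁ q₂ : ℕ) (hq₁ : q₁.Prime) (hq₂ : q₂.Prime)
    (hodd₁ : Odd q₁) (hodd₂ : Odd q₂) (hne : q₁ ≠ q₂)
    (hnd₁ : ¬ ((q₁ : ℤ) ∣ d)) (hnd₂ : ¬ ((q₂ : ℤ) ∣ d))
    (k : ℕ) (hk : k = q₁ * q₂) (hk4 : k % 4 = 1)
    (hksize : (k : ℝ) ≤ 1.62 * (Real.log |(d : ℝ)|) ^ 2)
    (K' : Type*) [Field K'] [NumberField K']
    (hdeg' : Module.finrank ℚ K' = 2)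
    (hdisc' : NumberField.discr K' = (k : ℤ) * d) :
    (NumberField.classNumber K' : ℝ) ≤
      1.01 * Real.sqrt |(d : ℝ)| * (Real.log |(d : ℝ)|) ^ 2 := by
  refine class_number_kd_bound_general hdeg' (by linarith [exp_three_lt]) ?_
  rw [hdisc', Int.cast_mul, abs_mul, Int.cast_natCast, Nat.abs_cast]
  gcongr
end
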